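/- arXiv:1205.3878 — 4 statements merged into one kernel-verified Lean document; each statement's English description precedes it below -/
import Mathlib

section
/- Every binary completely regular code of length 15 with minimum distance 5 is completely transitive. -/
open Set

/-- Distance from a vertex to a code in the binary Hamming space. -/
noncomputable def distToCode {m : ℕ} (C : Set (Fin m → ZMod 2)) (x : Fin m → ZMod 2) : ℕ :=
  sInf {d | ∃ c ∈ C, hammingDist x c = d}

/-- `C` has minimum distance `δ`. -/
def IsMinDist {m : ℕ} (C : Set (Fin m → ZMod 2)) (δ : ℕ) : Prop :=
  (∀ x ∈ C, ∀ y ∈ C, x ≠ y → δ ≤ hammingDist x y) ∧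
  ∃ x ∈ C, ∃ y ∈ C, x ≠ y ∧ hammingDist x y = δ

/-- `C` is completely regular: the number of codewords at distance `k` from `γ`
depends only on `distToCode C γ` and `k`. -/
def IsCompletelyRegular {m : ℕ} (C : Set (Fin m → ZMod 2)) : Prop :=
  ∀ γ γ' : Fin m → ZMod 2, distToCode C γ = distToCode C γ' →
    ∀ k : ℕ, {c ∈ C | hammingDist γ c = k}.ncard = {c ∈ C | hammingDist γ' c = k}.ncard

/-- A permutation of `F_2^m` is an automorphism of the Hamming graph iff it has
the form `x ↦ (x ∘ σ⁻¹) + v` for a coordinate permutation `σ` and `v ∈ F_2^m`. -/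
def IsHammingAut {m : ℕ} (f : Equiv.Perm (Fin m → ZMod 2)) : Prop :=
  ∃ (σ : Equiv.Perm (Fin m)) (v : Fin m → ZMod 2),
    ∀ x : Fin m → ZMod 2, f x = (fun i => x (σ.symm i)) + v

/-- `C` is completely transitive: some group `X` of Hamming-graph automorphisms
preserving `C` has each cell of the distance partition as a single orbit. -/
def IsCompletelyTransitive {m : ℕ} (C : Set (Fin m → ZMod 2)) : Prop :=
  ∃ X : Subgroup (Equiv.Perm (Fin m → ZMod 2)),
    (∀ g ∈ X, IsHammingAut g ∧ ⇑g '' C = C) ∧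
    ∀ i : ℕ, ∀ x : Fin m → ZMod 2, distToCode C x = i →
      {y | distToCode C y = i} = {y | ∃ g ∈ X, g x = y}

/-!
Complete regularity and minimum distance `5` determine the intersection numbers of the distance
partition, hence its outer distribution. In particular the codewords of weight `7` form a symmetric
`2-(15, 7, 3)` design, so by Ryser's theorem any two of them are at distance `8`. It follows that
the zeros in the code of the quadratic form `⌈wt / 2⌉ mod 2` are a linear code, which is the
punctured first-order Reed–Muller code after a permutation of coordinates. The cosets of this kernel
are then described by quadratic forms on `F_2^4` whose polar forms constitute a Kerdock set. There
are only two normalized Kerdock sets, exchanged by a permutation of coordinates, so every such code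
is equivalent to the punctured Nordstrom–Robinson code, by an equivalence which can be prescribed on
one codeword and on two coordinates. A word at distance at most `2` from the code can thus be moved
to a fixed representative of its cell, and the same holds at distance `3` because a word at
distance `2` has a single neighbour at distance `3`.
-/

namespace BinaryCode

open scoped Finset

section Words

variable {ι : Type*} [Fintype ι] (x y : ι → ZMod 2)

theorem hammingNorm_eq_sum_val : hammingNorm x = ∑ i, (x i).val := by
  have val_eq : ∀ a : ZMod 2, a.val = if a ≠ 0 then 1 else 0 := by decide
  simp only [hammingNorm, Finset.card_filter, val_eq]

theorem hammingDist_eq_hammingNorm_add : hammingDist x y = hammingNorm (x + y) := by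
  rw [hammingDist_eq_hammingNorm, ZModModule.neg_eq_self]

theorem hammingNorm_add_add_two_mul_inter :
    hammingNorm (x + y) + 2 * ∑ i, (x i).val * (y i).val = hammingNorm x + hammingNorm y := by
  have val_add : ∀ a b : ZMod 2, (a + b).val + 2 * (a.val * b.val) = a.val + b.val := by decide
  simp only [hammingNorm_eq_sum_val, Finset.mul_sum, ← Finset.sum_add_distrib, Pi.add_apply,
    val_add]

theorem exists_apply_eq_one_of_hammingNorm_pos {x : ι → ZMod 2} (hx : 0 < hammingNorm x) :
    ∃ t, x t = 1 := by
  have eq_one : ∀ u : ZMod 2, u ≠ 0 → u = 1 := by decide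
  obtain ⟨t, ht⟩ := Function.ne_iff.mp (hammingNorm_pos_iff.mp hx)
  exact ⟨t, eq_one _ ht⟩

variable [DecidableEq ι]

theorem hammingNorm_single (t : ι) : hammingNorm (Pi.single t 1 : ι → ZMod 2) = 1 := by
  simp [hammingNorm, Pi.single_apply, Finset.filter_eq']

theorem hammingNorm_add_single (t : ι) :
    hammingNorm (x + Pi.single t 1) + 2 * (x t).val = hammingNorm x + 1 := by
  have inter : ∑ i, (x i).val * ((Pi.single t 1 : ι → ZMod 2) i).val = (x t).val := by
    rw [Finset.sum_eq_single t] <;> simp +contextual [ZMod.val_one]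
  rw [← hammingNorm_single t, ← hammingNorm_add_add_two_mul_inter, inter]

theorem hammingNorm_add_single_add_one {x : ι → ZMod 2} {t : ι} (ht : x t = 1) :
    hammingNorm (x + Pi.single t 1) + 1 = hammingNorm x := by
  have step := hammingNorm_add_single x t
  rw [ht, ZMod.val_one] at step
  omega

theorem exists_eq_single_of_hammingNorm_eq_one {x : ι → ZMod 2} (hx : hammingNorm x = 1) :
    ∃ t, x = Pi.single t 1 := by
  obtain ⟨t, ht⟩ := exists_apply_eq_one_of_hammingNorm_pos (hx.symm ▸ one_pos)
  have rest : x + Pi.single t 1 = 0 :=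
    hammingNorm_eq_zero.mp (by have := hammingNorm_add_single_add_one ht; omega)
  exact ⟨t, by rw [eq_neg_of_add_eq_zero_left rest, ZModModule.neg_eq_self]⟩

theorem hammingNorm_add_single_eq_iff (t : ι) (k : ℕ) :
    hammingNorm (x + Pi.single t 1) = k ↔
      hammingNorm x + 1 = k ∧ x t = 0 ∨ hammingNorm x = k + 1 ∧ x t ≠ 0 := by
  have step := hammingNorm_add_single x t
  have bit : x t = 0 ∧ (x t).val = 0 ∨ x t ≠ 0 ∧ (x t).val = 1 := by
    generalize x t = a; revert a; decide
  rcases bit with ⟨h, hv⟩ | ⟨h, hv⟩ <;> simp only [h, ne_eq, not_true_eq_false, not_false_eq_true,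
    and_true, and_false, or_false, false_or] <;> omega

theorem card_hammingNorm_add_single_eq_zero :
    #{t | hammingNorm (x + Pi.single t 1) = 0} = if hammingNorm x = 1 then 1 else 0 := by
  simp only [hammingNorm_add_single_eq_iff, Nat.add_one_ne_zero, false_and, false_or, zero_add]
  split_ifs with h
  · simp only [h, true_and]
    exact h
  · simp [h]

theorem card_hammingNorm_add_single_eq_succ (k : ℕ) :
    #{t | hammingNorm (x + Pi.single t 1) = k + 1} =
      (Fintype.card ι - k) * (if hammingNorm x = k then 1 else 0) +
        (k + 2) * (if hammingNorm x = k + 2 then 1 else 0) := by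
  have card_ne : #{t | x t ≠ 0} = hammingNorm x := rfl
  have card_eq : #{t | x t = 0} = Fintype.card ι - hammingNorm x := by
    rw [← card_ne, ← Finset.card_univ,
      ← Finset.card_filter_add_card_filter_not (s := Finset.univ) (fun t => x t = 0)]
    simp
  simp only [hammingNorm_add_single_eq_iff, Nat.add_right_cancel_iff, add_assoc, Nat.reduceAdd]
  by_cases h : hammingNorm x = k
  · simp [h, card_eq]
  · by_cases h2 : hammingNorm x = k + 2
    · simp [h2, card_ne]
    · simp [h, h2]

end Words
section DistanceDistribution

variable {m : ℕ} {C : Set (Fin m → ZMod 2)} {x y c : Fin m → ZMod 2} {δ k : ℕ}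

theorem distToCode_le (hc : c ∈ C) (x : Fin m → ZMod 2) : distToCode C x ≤ hammingDist x c :=
  Nat.sInf_le ⟨c, hc, rfl⟩

theorem exists_hammingDist_eq_distToCode (hC : C.Nonempty) (x : Fin m → ZMod 2) :
    ∃ c ∈ C, hammingDist x c = distToCode C x :=
  Nat.sInf_mem (s := {d | ∃ c ∈ C, hammingDist x c = d}) (hC.elim fun c hc => ⟨_, c, hc, rfl⟩)

theorem distToCode_eq_zero (hC : C.Nonempty) : distToCode C x = 0 ↔ x ∈ C := by
  refine ⟨fun h => ?_, fun h => Nat.le_zero.mp ((distToCode_le h x).trans_eq (hammingDist_self x))⟩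
  obtain ⟨c, hc, hxc⟩ := exists_hammingDist_eq_distToCode hC x
  rwa [eq_of_hammingDist_eq_zero (hxc.trans h)]

theorem distToCode_le_add (hC : C.Nonempty) (x y : Fin m → ZMod 2) :
    distToCode C x ≤ hammingDist x y + distToCode C y := by
  obtain ⟨c, hc, hyc⟩ := exists_hammingDist_eq_distToCode hC y
  exact (distToCode_le hc x).trans ((hammingDist_triangle x y c).trans_eq (by rw [hyc]))

theorem hammingDist_add_single (x : Fin m → ZMod 2) (t : Fin m) :
    hammingDist (x + Pi.single t 1) x = 1 := by
  rw [hammingDist_eq_hammingNorm_add, add_right_comm, ZModModule.add_self, zero_add,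
    hammingNorm_single]

/-- The number `A_k(x)` of codewords of `C` at distance `k` from `x`, as a sum so that it can be
double counted. -/
noncomputable def codewordCount (C : Set (Fin m → ZMod 2)) (x : Fin m → ZMod 2) (k : ℕ) : ℕ :=
  #{c ∈ C.toFinite.toFinset | hammingDist x c = k}

theorem codewordCount_eq_zero_iff :
    codewordCount C x k = 0 ↔ ∀ c ∈ C, hammingDist x c ≠ k := by
  simp [codewordCount, Finset.filter_eq_empty_iff]

theorem codewordCount_eq_zero_of_lt (h : k < distToCode C x) : codewordCount C x k = 0 :=
  codewordCount_eq_zero_iff.mpr fun _ hc hk => (h.trans_le (distToCode_le hc x)).ne' hk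

theorem _root_.IsMinDist.nonempty (hd : IsMinDist C δ) : C.Nonempty :=
  hd.2.imp fun _ h => h.1

theorem _root_.IsMinDist.eq_of_hammingDist_add_lt (hd : IsMinDist C δ) (hx : x ∈ C) (hy : y ∈ C)
    {z : Fin m → ZMod 2} (h : hammingDist z x + hammingDist z y < δ) : x = y := by
  by_contra hne
  exact (((hd.1 x hx y hy hne).trans (hammingDist_triangle_left x y z)).trans_lt h).false

theorem _root_.IsMinDist.codewordCount_eq_zero (hd : IsMinDist C δ) (hlt : distToCode C x < k)
    (hk : distToCode C x + k < δ) : codewordCount C x k = 0 := by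
  obtain ⟨c, hc, hxc⟩ := exists_hammingDist_eq_distToCode hd.nonempty x
  refine codewordCount_eq_zero_iff.mpr fun c' hc' hxc' => ?_
  have : c = c' := hd.eq_of_hammingDist_add_lt hc hc' (by rwa [hxc, hxc'])
  subst this
  omega

theorem _root_.IsMinDist.codewordCount_eq_ite (hd : IsMinDist C δ) (hk : 2 * k < δ) :
    codewordCount C x k = if distToCode C x = k then 1 else 0 := by
  rcases lt_trichotomy k (distToCode C x) with h | h | h
  · rw [codewordCount_eq_zero_of_lt h, if_neg h.ne']
  · obtain ⟨c, hc, hxc⟩ := exists_hammingDist_eq_distToCode hd.nonempty x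
    rw [if_pos h.symm, codewordCount, Finset.card_eq_one]
    refine ⟨c, Finset.eq_singleton_iff_unique_mem.mpr ⟨by simp [hc, hxc, h], fun c' hc' => ?_⟩⟩
    simp only [Finset.mem_filter, Set.Finite.mem_toFinset] at hc'
    exact hd.eq_of_hammingDist_add_lt (z := x) hc'.1 hc (by omega)
  · rw [hd.codewordCount_eq_zero h (by omega), if_neg h.ne]

theorem sum_codewordCount_add_single_zero (C : Set (Fin m → ZMod 2)) (x : Fin m → ZMod 2) :
    ∑ t, codewordCount C (x + Pi.single t 1) 0 = codewordCount C x 1 := by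
  simp only [codewordCount, Finset.card_filter]
  rw [Finset.sum_comm]
  refine Finset.sum_congr rfl fun c _ => ?_
  simpa only [hammingDist_eq_hammingNorm_add, Finset.card_filter, add_right_comm]
    using card_hammingNorm_add_single_eq_zero (x + c)

theorem sum_codewordCount_add_single_succ (C : Set (Fin m → ZMod 2)) (x : Fin m → ZMod 2) (k : ℕ) :
    ∑ t, codewordCount C (x + Pi.single t 1) (k + 1) =
      (m - k) * codewordCount C x k + (k + 2) * codewordCount C x (k + 2) := by
  simp only [codewordCount, Finset.card_filter]
  rw [Finset.sum_comm, Finset.mul_sum, Finset.mul_sum, ← Finset.sum_add_distrib]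
  refine Finset.sum_congr rfl fun c _ => ?_
  simpa only [hammingDist_eq_hammingNorm_add, Finset.card_filter, add_right_comm,
    Fintype.card_fin] using card_hammingNorm_add_single_eq_succ (x + c) k

/-- The number of neighbours of `x` in the cell `C_j` of the distance partition of `C`. -/
noncomputable def cellDegree (C : Set (Fin m → ZMod 2)) (x : Fin m → ZMod 2) (j : ℕ) : ℕ :=
  #{t | distToCode C (x + Pi.single t 1) = j}

theorem sum_cellDegree_mul (hC : C.Nonempty) (x : Fin m → ZMod 2) (f : ℕ → ℕ) :
    ∑ j ∈ Finset.range (distToCode C x + 2), cellDegree C x j * f j =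
      ∑ t, f (distToCode C (x + Pi.single t 1)) := by
  have maps : ∀ t ∈ Finset.univ,
      distToCode C (x + Pi.single t 1) ∈ Finset.range (distToCode C x + 2) := fun t _ => by
    have := distToCode_le_add hC (x + Pi.single t 1) x
    rw [hammingDist_add_single] at this
    rw [Finset.mem_range]
    omega
  rw [← Finset.sum_fiberwise_of_maps_to maps]
  refine Finset.sum_congr rfl fun j _ => ?_
  rw [Finset.sum_congr rfl fun t ht => congrArg f (Finset.mem_filter.mp ht).2, Finset.sum_const,
    smul_eq_mul, cellDegree]

theorem _root_.IsMinDist.sum_codewordCount_eq_cellDegree (hd : IsMinDist C δ) (hk : 2 * k < δ) :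
    ∑ t, codewordCount C (x + Pi.single t 1) k = cellDegree C x k := by
  simp only [hd.codewordCount_eq_ite hk, cellDegree, Finset.card_filter]

theorem _root_.IsMinDist.cellDegree_zero (hd : IsMinDist C δ) (hδ : 2 < δ) :
    cellDegree C x 0 = if distToCode C x = 1 then 1 else 0 := by
  rw [← hd.sum_codewordCount_eq_cellDegree (by omega), sum_codewordCount_add_single_zero,
    hd.codewordCount_eq_ite (by omega)]

theorem _root_.IsMinDist.cellDegree_succ (hd : IsMinDist C δ) (hk : 2 * (k + 1) < δ) :
    cellDegree C x (k + 1) =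
      (m - k) * (if distToCode C x = k then 1 else 0) + (k + 2) * codewordCount C x (k + 2) := by
  rw [← hd.sum_codewordCount_eq_cellDegree hk, sum_codewordCount_add_single_succ,
    hd.codewordCount_eq_ite (by omega)]

theorem codewordCount_eq_ncard :
    codewordCount C x k = {c ∈ C | hammingDist x c = k}.ncard := by
  rw [codewordCount, ← Set.ncard_coe_finset]
  congr 1
  ext c
  simp

theorem _root_.IsCompletelyRegular.codewordCount_congr (hreg : IsCompletelyRegular C)
    (h : distToCode C x = distToCode C y) (k : ℕ) : codewordCount C x k = codewordCount C y k := by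
  simpa only [codewordCount_eq_ncard] using hreg x y h k

end DistanceDistribution

section OuterDistribution

variable {m : ℕ} {C : Set (Fin m → ZMod 2)} {x : Fin m → ZMod 2} {δ : ℕ}

/-- The outer distribution matrix of a completely regular code `C`: the `(i, k)` entry is the number
of codewords at distance `k` from any word of the cell `C_i`, and `0` if `C_i` is empty. -/
noncomputable def outerDistribution (C : Set (Fin m → ZMod 2)) : ℕ → ℕ → ℕ :=
  Function.extend (distToCode C) (codewordCount C) 0

theorem _root_.IsCompletelyRegular.outerDistribution_distToCode (hreg : IsCompletelyRegular C)
    (x : Fin m → ZMod 2) (k : ℕ) : outerDistribution C (distToCode C x) k = codewordCount C x k :=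
  congrFun (Function.FactorsThrough.extend_apply
    (fun _ _ h => funext fun k => hreg.codewordCount_congr h k) 0 x) k

theorem _root_.IsCompletelyRegular.outerDistribution_eq_zero_of_lt (hreg : IsCompletelyRegular C)
    {i k : ℕ} (h : k < i) : outerDistribution C i k = 0 := by
  by_cases hi : ∃ x, distToCode C x = i
  · obtain ⟨x, rfl⟩ := hi
    rw [hreg.outerDistribution_distToCode, codewordCount_eq_zero_of_lt h]
  · rw [outerDistribution, Function.extend_apply' _ _ _ hi, Pi.zero_apply, Pi.zero_apply]

theorem _root_.IsCompletelyRegular.outerDistribution_eq_zero_of_add_lt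
    (hreg : IsCompletelyRegular C) (hd : IsMinDist C δ) {i k : ℕ} (hik : i < k) (h : i + k < δ) :
    outerDistribution C i k = 0 := by
  by_cases hi : ∃ x, distToCode C x = i
  · obtain ⟨x, rfl⟩ := hi
    rw [hreg.outerDistribution_distToCode, hd.codewordCount_eq_zero hik h]
  · rw [outerDistribution, Function.extend_apply' _ _ _ hi, Pi.zero_apply, Pi.zero_apply]

theorem _root_.IsCompletelyRegular.sum_outerDistribution_succ (hreg : IsCompletelyRegular C)
    (x : Fin m → ZMod 2) (k : ℕ) :
    ∑ t, outerDistribution C (distToCode C (x + Pi.single t 1)) (k + 1) =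
      (m - k) * outerDistribution C (distToCode C x) k +
        (k + 2) * outerDistribution C (distToCode C x) (k + 2) := by
  simp only [hreg.outerDistribution_distToCode, sum_codewordCount_add_single_succ]

end OuterDistribution

section CellDegrees

variable {m : ℕ} {C : Set (Fin m → ZMod 2)} {x : Fin m → ZMod 2} {δ : ℕ}

theorem _root_.IsMinDist.sum_of_distToCode_eq_zero (hd : IsMinDist C δ) (hδ : 4 < δ)
    (hx : distToCode C x = 0) (f : ℕ → ℕ) :
    ∑ t, f (distToCode C (x + Pi.single t 1)) = m * f 1 := by
  rw [← sum_cellDegree_mul hd.nonempty, hx]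
  simp [Finset.sum_range_succ, hd.cellDegree_zero, hd.cellDegree_succ,
    hd.codewordCount_eq_ite, hx, show 2 < δ by omega, hδ]

theorem _root_.IsMinDist.sum_of_distToCode_eq_one (hd : IsMinDist C δ) (hδ : 4 < δ)
    (hx : distToCode C x = 1) (f : ℕ → ℕ) :
    ∑ t, f (distToCode C (x + Pi.single t 1)) = f 0 + (m - 1) * f 2 := by
  have three : codewordCount C x 3 = 0 := hd.codewordCount_eq_zero (by omega) (by omega)
  rw [← sum_cellDegree_mul hd.nonempty, hx]
  simp [Finset.sum_range_succ, hd.cellDegree_zero, hd.cellDegree_succ,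
    hd.codewordCount_eq_ite, hx, three, show 2 < δ by omega, hδ]

theorem _root_.IsMinDist.sum_of_distToCode_eq_two (hd : IsMinDist C δ) (hδ : 4 < δ)
    (hx : distToCode C x = 2) (f : ℕ → ℕ) :
    ∑ t, f (distToCode C (x + Pi.single t 1)) =
      2 * f 1 + 3 * codewordCount C x 3 * f 2 + cellDegree C x 3 * f 3 := by
  rw [← sum_cellDegree_mul hd.nonempty, hx]
  simp [Finset.sum_range_succ, hd.cellDegree_zero, hd.cellDegree_succ,
    hd.codewordCount_eq_ite, hx, show 2 < δ by omega, hδ]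

theorem _root_.IsMinDist.sum_of_distToCode_eq_three (hd : IsMinDist C δ) (hδ : 4 < δ)
    (hx : distToCode C x = 3) (f : ℕ → ℕ) :
    ∑ t, f (distToCode C (x + Pi.single t 1)) =
      3 * codewordCount C x 3 * f 2 + cellDegree C x 3 * f 3 + cellDegree C x 4 * f 4 := by
  rw [← sum_cellDegree_mul hd.nonempty, hx]
  simp [Finset.sum_range_succ, hd.cellDegree_zero, hd.cellDegree_succ,
    hd.codewordCount_eq_ite, hx, show 2 < δ by omega, hδ]

theorem exists_distToCode_add_single_eq (hC : C.Nonempty) {i : ℕ} (hx : distToCode C x = i + 1) :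
    ∃ t, distToCode C (x + Pi.single t 1) = i := by
  obtain ⟨c, hc, hxc⟩ := exists_hammingDist_eq_distToCode hC x
  rw [hx, hammingDist_eq_hammingNorm_add] at hxc
  obtain ⟨t, ht⟩ := exists_apply_eq_one_of_hammingNorm_pos (i.succ_pos.trans_eq hxc.symm)
  have toward := hammingNorm_add_single_add_one ht
  rw [add_right_comm, ← hammingDist_eq_hammingNorm_add] at toward
  have upper := distToCode_le hc (x + Pi.single t 1)
  have lower := distToCode_le_add hC x (x + Pi.single t 1)
  rw [hammingDist_comm, hammingDist_add_single] at lower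
  exact ⟨t, by omega⟩

theorem exists_distToCode_eq_of_cellDegree_ne_zero {j : ℕ} (h : cellDegree C x j ≠ 0) :
    ∃ y, distToCode C y = j :=
  let ⟨t, ht⟩ := Finset.card_ne_zero.mp h
  ⟨x + Pi.single t 1, (Finset.mem_filter.mp ht).2⟩

theorem _root_.IsMinDist.exists_distToCode_eq_one (hd : IsMinDist C δ) (hδ : 2 < δ) (hm : 0 < m) :
    ∃ x, distToCode C x = 1 := by
  obtain ⟨x, hx⟩ := hd.nonempty
  rw [← distToCode_eq_zero hd.nonempty] at hx
  refine exists_distToCode_eq_of_cellDegree_ne_zero (x := x) ?_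
  simp [hd.cellDegree_succ (k := 0) (by omega), hx, hm.ne']

theorem _root_.IsMinDist.exists_distToCode_eq_two (hd : IsMinDist C δ) (hδ : 4 < δ) (hm : 1 < m) :
    ∃ x, distToCode C x = 2 := by
  obtain ⟨x₁, hx₁⟩ := hd.exists_distToCode_eq_one (by omega) (by omega)
  refine exists_distToCode_eq_of_cellDegree_ne_zero (x := x₁) ?_
  simp [hd.cellDegree_succ (k := 1) (by omega), hx₁]
  omega

end CellDegrees

/-- The codes under study: completely regular, of length `15` and minimum distance `5`. -/
structure IsCRCode (C : Set (Fin 15 → ZMod 2)) : Prop where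
  completelyRegular : IsCompletelyRegular C
  minDist : IsMinDist C 5

namespace IsCRCode

variable {C : Set (Fin 15 → ZMod 2)} {x : Fin 15 → ZMod 2}

theorem sum_outerDistribution (hC : IsCRCode C) (x : Fin 15 → ZMod 2) (k : ℕ) :
    ∑ t, outerDistribution C (distToCode C (x + Pi.single t 1)) (k + 1) =
      (15 - k) * outerDistribution C (distToCode C x) k +
        (k + 2) * outerDistribution C (distToCode C x) (k + 2) :=
  hC.completelyRegular.sum_outerDistribution_succ x k

theorem outerDistribution_row_zero (hC : IsCRCode C) (k : ℕ) :
    15 * outerDistribution C 1 (k + 1) =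
      (15 - k) * outerDistribution C 0 k + (k + 2) * outerDistribution C 0 (k + 2) := by
  obtain ⟨x, hx⟩ := hC.minDist.nonempty
  rw [← distToCode_eq_zero hC.minDist.nonempty] at hx
  rw [← hC.minDist.sum_of_distToCode_eq_zero (by norm_num) hx
    fun j => outerDistribution C j (k + 1), hC.sum_outerDistribution, hx]

theorem outerDistribution_row_one (hC : IsCRCode C) (k : ℕ) :
    outerDistribution C 0 (k + 1) + 14 * outerDistribution C 2 (k + 1) =
      (15 - k) * outerDistribution C 1 k + (k + 2) * outerDistribution C 1 (k + 2) := by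
  obtain ⟨x, hx⟩ := hC.minDist.exists_distToCode_eq_one (by norm_num) (by norm_num)
  rw [← hC.minDist.sum_of_distToCode_eq_one (by norm_num) hx
    fun j => outerDistribution C j (k + 1), hC.sum_outerDistribution, hx]

theorem outerDistribution_row_two (hC : IsCRCode C) (hx : distToCode C x = 2) (k : ℕ) :
    2 * outerDistribution C 1 (k + 1) +
        3 * outerDistribution C 2 3 * outerDistribution C 2 (k + 1) +
        cellDegree C x 3 * outerDistribution C 3 (k + 1) =
      (15 - k) * outerDistribution C 2 k + (k + 2) * outerDistribution C 2 (k + 2) := by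
  have count_three := hC.completelyRegular.outerDistribution_distToCode x 3
  rw [hx] at count_three
  rw [count_three, ← hC.minDist.sum_of_distToCode_eq_two (by norm_num) hx
    fun j => outerDistribution C j (k + 1), hC.sum_outerDistribution, hx]

theorem outerDistribution_row_three (hC : IsCRCode C) (hx : distToCode C x = 3) (k : ℕ) :
    3 * outerDistribution C 3 3 * outerDistribution C 2 (k + 1) +
        cellDegree C x 3 * outerDistribution C 3 (k + 1) +
        cellDegree C x 4 * outerDistribution C 4 (k + 1) =
      (15 - k) * outerDistribution C 3 k + (k + 2) * outerDistribution C 3 (k + 2) := by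
  have count_three := hC.completelyRegular.outerDistribution_distToCode x 3
  rw [hx] at count_three
  rw [count_three, ← hC.minDist.sum_of_distToCode_eq_three (by norm_num) hx
    fun j => outerDistribution C j (k + 1), hC.sum_outerDistribution, hx]

theorem cellDegree_three_of_distToCode_eq_two (hC : IsCRCode C) (hx : distToCode C x = 2) :
    2 + 3 * outerDistribution C 2 3 + cellDegree C x 3 = 15 := by
  have count_three := hC.completelyRegular.outerDistribution_distToCode x 3
  have total := hC.minDist.sum_of_distToCode_eq_two (by norm_num) hx fun _ => 1
  rw [hx] at count_three
  simpa [count_three] using total.symm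

theorem cellDegree_three_add_four_of_distToCode_eq_three (hC : IsCRCode C)
    (hx : distToCode C x = 3) :
    3 * outerDistribution C 3 3 + cellDegree C x 3 + cellDegree C x 4 = 15 := by
  have count_three := hC.completelyRegular.outerDistribution_distToCode x 3
  have total := hC.minDist.sum_of_distToCode_eq_three (by norm_num) hx fun _ => 1
  rw [hx] at count_three
  simpa [count_three] using total.symm

theorem outerDistribution_eq_zero (hC : IsCRCode C) {i k : ℕ} (hik : i < k) (h : i + k < 5) :
    outerDistribution C i k = 0 :=
  hC.completelyRegular.outerDistribution_eq_zero_of_add_lt hC.minDist hik h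

theorem outerDistribution_zero_five_pos (hC : IsCRCode C) : 0 < outerDistribution C 0 5 := by
  obtain ⟨x, hx, y, hy, -, hxy⟩ := hC.minDist.2
  have hx0 : distToCode C x = 0 := (distToCode_eq_zero hC.minDist.nonempty).mpr hx
  have count_five := hC.completelyRegular.outerDistribution_distToCode x 5
  rw [hx0] at count_five
  rw [count_five, Nat.pos_iff_ne_zero, Ne, codewordCount_eq_zero_iff]
  exact fun h => h y hy hxy

theorem exists_distToCode_eq_two (hC : IsCRCode C) : ∃ x, distToCode C x = 2 :=
  hC.minDist.exists_distToCode_eq_two (by norm_num) (by norm_num)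

theorem outerDistribution_two_three_eq_or (hC : IsCRCode C) :
    outerDistribution C 2 3 = 2 ∨ outerDistribution C 2 3 = 4 := by
  obtain ⟨x, hx⟩ := hC.exists_distToCode_eq_two
  have degree := hC.cellDegree_three_of_distToCode_eq_two hx
  have pos := hC.outerDistribution_zero_five_pos
  have row_zero := hC.outerDistribution_row_zero 3
  have row_one := hC.outerDistribution_row_one 2
  simp [hC.outerDistribution_eq_zero] at row_zero row_one
  omega

theorem exists_distToCode_eq_three (hC : IsCRCode C) : ∃ x, distToCode C x = 3 := by
  obtain ⟨x, hx⟩ := hC.exists_distToCode_eq_two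
  have degree := hC.cellDegree_three_of_distToCode_eq_two hx
  have := hC.outerDistribution_two_three_eq_or
  exact exists_distToCode_eq_of_cellDegree_ne_zero (x := x) (by omega)

theorem five_dvd_outerDistribution_two_four (hC : IsCRCode C) : 5 ∣ outerDistribution C 2 4 := by
  have row_one := hC.outerDistribution_row_one 3
  simp [hC.outerDistribution_eq_zero] at row_one
  omega

theorem outerDistribution_two_two (hC : IsCRCode C) : outerDistribution C 2 2 = 1 := by
  obtain ⟨x, hx⟩ := hC.exists_distToCode_eq_two
  have count_two := hC.completelyRegular.outerDistribution_distToCode x 2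
  rwa [hx, hC.minDist.codewordCount_eq_ite (by norm_num), if_pos hx] at count_two

theorem outerDistribution_two_three_ne_two (hC : IsCRCode C) : outerDistribution C 2 3 ≠ 2 := by
  intro two
  obtain ⟨x, hx⟩ := hC.exists_distToCode_eq_two
  obtain ⟨y, hy⟩ := hC.exists_distToCode_eq_three
  have degree := hC.cellDegree_three_of_distToCode_eq_two hx
  have degree' := hC.cellDegree_three_add_four_of_distToCode_eq_three hy
  have dvd := hC.five_dvd_outerDistribution_two_four
  have row_one := hC.outerDistribution_row_one 2
  have row_two := hC.outerDistribution_row_two hx 2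
  have row_two' := hC.outerDistribution_row_two hx 3
  have row_three := hC.outerDistribution_row_three hy 2
  have seven : cellDegree C x 3 = 7 := by omega
  have upper : ∀ {i k}, k < i → outerDistribution C i k = 0 :=
    hC.completelyRegular.outerDistribution_eq_zero_of_lt
  have three : outerDistribution C 3 3 = 3 := by
    simp [hC.outerDistribution_eq_zero, hC.outerDistribution_two_two, two, seven] at row_two
    omega
  simp [hC.outerDistribution_eq_zero, upper, two, three, seven] at row_one row_two' row_three
  omega

theorem outerDistribution_two_three (hC : IsCRCode C) : outerDistribution C 2 3 = 4 :=
  hC.outerDistribution_two_three_eq_or.resolve_left hC.outerDistribution_two_three_ne_two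

theorem cellDegree_three_eq_one (hC : IsCRCode C) (hx : distToCode C x = 2) :
    cellDegree C x 3 = 1 := by
  have degree := hC.cellDegree_three_of_distToCode_eq_two hx
  rw [hC.outerDistribution_two_three] at degree
  omega

theorem outerDistribution_three_three (hC : IsCRCode C) : outerDistribution C 3 3 = 5 := by
  obtain ⟨x, hx⟩ := hC.exists_distToCode_eq_two
  obtain ⟨y, hy⟩ := hC.exists_distToCode_eq_three
  have degree := hC.cellDegree_three_add_four_of_distToCode_eq_three hy
  have dvd := hC.five_dvd_outerDistribution_two_four
  have row_two := hC.outerDistribution_row_two hx 2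
  simp [hC.outerDistribution_eq_zero, hC.outerDistribution_two_two, hC.outerDistribution_two_three,
    hC.cellDegree_three_eq_one hx] at row_two
  omega

theorem cellDegree_three_four_eq_zero (hC : IsCRCode C) (hx : distToCode C x = 3) :
    cellDegree C x 3 = 0 ∧ cellDegree C x 4 = 0 := by
  have degree := hC.cellDegree_three_add_four_of_distToCode_eq_three hx
  rw [hC.outerDistribution_three_three] at degree
  omega

theorem distToCode_lt_four (hC : IsCRCode C) (x : Fin 15 → ZMod 2) : distToCode C x < 4 := by
  by_contra! h
  obtain ⟨n, hn⟩ := Nat.exists_eq_add_of_le h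
  clear h
  induction n generalizing x with
  | zero =>
    obtain ⟨t, ht⟩ := exists_distToCode_add_single_eq hC.minDist.nonempty hn
    refine Finset.card_ne_zero.mpr ⟨t, ?_⟩ (hC.cellDegree_three_four_eq_zero ht).2
    rw [Finset.mem_filter_univ, add_assoc, ZModModule.add_self, add_zero, hn]
  | succ n ih =>
    obtain ⟨t, ht⟩ := exists_distToCode_add_single_eq hC.minDist.nonempty hn
    exact ih _ ht

end IsCRCode

/-- The intersection matrix of the distance partition: a word of `C_i` has `intersectionMatrix i j`
neighbours in `C_j`. -/
def intersectionMatrix : Matrix (Fin 4) (Fin 4) ℕ :=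
  !![0, 15, 0, 0; 1, 0, 14, 0; 0, 2, 12, 1; 0, 0, 15, 0]

/-- The outer distribution matrix: a word of `C_i` has `outerMatrix i k` codewords at
distance `k`. -/
def outerMatrix : Matrix (Fin 4) (Fin 16) ℕ :=
  !![1, 0, 0, 0, 0, 42, 70, 15, 15, 70, 42, 0, 0, 0, 0, 1;
    0, 1, 0, 0, 14, 28, 35, 50, 50, 35, 28, 14, 0, 0, 1, 0;
    0, 0, 1, 4, 10, 23, 40, 50, 50, 40, 23, 10, 4, 1, 0, 0;
    0, 0, 0, 5, 15, 18, 30, 60, 60, 30, 18, 15, 5, 0, 0, 0]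

theorem sum_intersectionMatrix_mul_outerMatrix : ∀ (i : Fin 4) (k : Fin 14),
    ∑ j, intersectionMatrix i j * outerMatrix j k.succ.castSucc =
      (15 - k) * outerMatrix i k.castSucc.castSucc + (k + 2) * outerMatrix i k.succ.succ := by
  decide

namespace IsCRCode

variable {C : Set (Fin 15 → ZMod 2)} {x : Fin 15 → ZMod 2} {i : Fin 4}

theorem sum_distToCode_add_single (hC : IsCRCode C) (hx : distToCode C x = i) (f : ℕ → ℕ) :
    ∑ t, f (distToCode C (x + Pi.single t 1)) = ∑ j : Fin 4, intersectionMatrix i j * f j := by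
  have count_three := hC.completelyRegular.outerDistribution_distToCode x 3
  fin_cases i <;> dsimp only at hx
  · simp [hC.minDist.sum_of_distToCode_eq_zero, hx, intersectionMatrix, Fin.sum_univ_succ]
  · simp [hC.minDist.sum_of_distToCode_eq_one, hx, intersectionMatrix, Fin.sum_univ_succ]
  · rw [hx, hC.outerDistribution_two_three] at count_three
    simp [hC.minDist.sum_of_distToCode_eq_two, hx, intersectionMatrix, Fin.sum_univ_succ,
      ← count_three, hC.cellDegree_three_eq_one, add_assoc]
  · rw [hx, hC.outerDistribution_three_three] at count_three
    simp [hC.minDist.sum_of_distToCode_eq_three, hx, intersectionMatrix, Fin.sum_univ_succ,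
      ← count_three, hC.cellDegree_three_four_eq_zero hx]

theorem exists_distToCode_eq (hC : IsCRCode C) (i : Fin 4) : ∃ x, distToCode C x = i := by
  fin_cases i
  · exact hC.minDist.nonempty.imp fun _ hx => (distToCode_eq_zero hC.minDist.nonempty).mpr hx
  · exact hC.minDist.exists_distToCode_eq_one (by norm_num) (by norm_num)
  · exact hC.exists_distToCode_eq_two
  · exact hC.exists_distToCode_eq_three

theorem outerDistribution_eq_outerMatrix_of_le_one (hC : IsCRCode C) (i : Fin 4) {k : ℕ}
    (hk : k < 2) : outerDistribution C i k = outerMatrix i ⟨k, by omega⟩ := by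
  obtain ⟨x, hx⟩ := hC.exists_distToCode_eq i
  rw [← hx, hC.completelyRegular.outerDistribution_distToCode,
    hC.minDist.codewordCount_eq_ite (by omega), hx]
  interval_cases k <;> fin_cases i <;> rfl

theorem outerDistribution_eq_outerMatrix (hC : IsCRCode C) (i : Fin 4) {k : ℕ} (hk : k < 16) :
    outerDistribution C i k = outerMatrix i ⟨k, hk⟩ := by
  induction k using Nat.twoStepInduction generalizing i with
  | zero => exact hC.outerDistribution_eq_outerMatrix_of_le_one i (by norm_num)
  | one => exact hC.outerDistribution_eq_outerMatrix_of_le_one i (by norm_num)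
  | more k ih ih' =>
    obtain ⟨x, hx⟩ := hC.exists_distToCode_eq i
    have count := hC.sum_outerDistribution x k
    rw [hC.sum_distToCode_add_single hx fun j => outerDistribution C j (k + 1), hx,
      Finset.sum_congr rfl fun j _ => by rw [ih' j (by omega)], ih i (by omega)] at count
    have table := sum_intersectionMatrix_mul_outerMatrix i ⟨k, by omega⟩
    exact Nat.eq_of_mul_eq_mul_left (by omega) (Nat.add_left_cancel (count.symm.trans table))

theorem codewordCount_eq (hC : IsCRCode C) (hx : distToCode C x = i) (k : Fin 16) :
    codewordCount C x k = outerMatrix i k := by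
  rw [← hC.outerDistribution_eq_outerMatrix i k.isLt, ← hx,
    hC.completelyRegular.outerDistribution_distToCode]

end IsCRCode

section HammingAut

variable {m : ℕ} {C : Set (Fin m → ZMod 2)} {f g : Equiv.Perm (Fin m → ZMod 2)} {δ : ℕ}

theorem _root_.IsHammingAut.one : IsHammingAut (1 : Equiv.Perm (Fin m → ZMod 2)) :=
  ⟨1, 0, fun x => (add_zero x).symm⟩

theorem _root_.IsHammingAut.mul (hf : IsHammingAut f) (hg : IsHammingAut g) :
    IsHammingAut (f * g) := by
  obtain ⟨σ, v, hf⟩ := hf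
  obtain ⟨τ, w, hg⟩ := hg
  refine ⟨σ * τ, (fun i => w (σ.symm i)) + v, fun x => ?_⟩
  rw [Equiv.Perm.mul_apply, hf, hg, ← add_assoc]
  rfl

theorem _root_.IsHammingAut.inv (hf : IsHammingAut f) : IsHammingAut f⁻¹ := by
  obtain ⟨σ, v, hf⟩ := hf
  refine ⟨σ⁻¹, fun i => v (σ i), fun x => ?_⟩
  rw [Equiv.Perm.inv_eq_iff_eq, hf]
  ext i
  simp [Equiv.Perm.inv_def, add_assoc, ZModModule.add_self]

theorem isHammingAut_addRight (v : Fin m → ZMod 2) : IsHammingAut (Equiv.addRight v) :=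
  ⟨1, v, fun _ => rfl⟩

/-- The Hamming automorphism moving the coordinate `i` of every word to position `σ i`. -/
def permuteCoords (σ : Equiv.Perm (Fin m)) : Equiv.Perm (Fin m → ZMod 2) :=
  σ.arrowCongr (Equiv.refl _)

theorem permuteCoords_apply_apply (σ : Equiv.Perm (Fin m)) (x : Fin m → ZMod 2) (i : Fin m) :
    permuteCoords σ x (σ i) = x i :=
  congrArg x (σ.symm_apply_apply i)

theorem hammingNorm_permuteCoords (σ : Equiv.Perm (Fin m)) (x : Fin m → ZMod 2) :
    hammingNorm (permuteCoords σ x) = hammingNorm x := by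
  rw [hammingNorm_eq_sum_val, hammingNorm_eq_sum_val]
  exact Equiv.sum_comp σ.symm fun i => (x i).val

theorem isHammingAut_permuteCoords (σ : Equiv.Perm (Fin m)) : IsHammingAut (permuteCoords σ) :=
  ⟨σ, 0, fun _ => (add_zero _).symm⟩

theorem _root_.IsHammingAut.hammingDist_map (hf : IsHammingAut f) (x y : Fin m → ZMod 2) :
    hammingDist (f x) (f y) = hammingDist x y := by
  obtain ⟨σ, v, hf⟩ := hf
  rw [hf, hf, hammingDist_eq_hammingNorm_add, hammingDist_eq_hammingNorm_add,
    add_add_add_comm, ZModModule.add_self, add_zero]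
  exact hammingNorm_permuteCoords σ (x + y)

theorem _root_.IsHammingAut.distToCode_image (hf : IsHammingAut f) (C : Set (Fin m → ZMod 2))
    (x : Fin m → ZMod 2) : distToCode (f '' C) (f x) = distToCode C x := by
  simp only [distToCode, Set.exists_mem_image, hf.hammingDist_map]

theorem _root_.IsHammingAut.ncard_image (hf : IsHammingAut f) (C : Set (Fin m → ZMod 2))
    (x : Fin m → ZMod 2) (k : ℕ) :
    {c ∈ f '' C | hammingDist (f x) c = k}.ncard = {c ∈ C | hammingDist x c = k}.ncard := by
  rw [← Set.ncard_image_of_injective {c ∈ C | hammingDist x c = k} f.injective]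
  congr 1
  ext c
  constructor
  · rintro ⟨⟨c, hc, rfl⟩, hk⟩
    exact ⟨c, ⟨hc, by rwa [hf.hammingDist_map] at hk⟩, rfl⟩
  · rintro ⟨c, ⟨hc, hk⟩, rfl⟩
    exact ⟨⟨c, hc, rfl⟩, by rwa [hf.hammingDist_map]⟩

theorem _root_.IsCompletelyRegular.image (hreg : IsCompletelyRegular C) (hf : IsHammingAut f) :
    IsCompletelyRegular (f '' C) := by
  intro x y hxy k
  obtain ⟨x, rfl⟩ := f.surjective x
  obtain ⟨y, rfl⟩ := f.surjective y
  rw [hf.distToCode_image, hf.distToCode_image] at hxy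
  rw [hf.ncard_image, hf.ncard_image, hreg x y hxy k]

theorem _root_.IsMinDist.image (hd : IsMinDist C δ) (hf : IsHammingAut f) :
    IsMinDist (f '' C) δ := by
  simpa only [IsMinDist, Set.forall_mem_image, Set.exists_mem_image, hf.hammingDist_map,
    f.injective.ne_iff] using hd

theorem IsCRCode.image {C : Set (Fin 15 → ZMod 2)} {f : Equiv.Perm (Fin 15 → ZMod 2)}
    (hC : IsCRCode C) (hf : IsHammingAut f) : IsCRCode (f '' C) :=
  ⟨hC.completelyRegular.image hf, hC.minDist.image hf⟩

theorem isCompletelyTransitive_of_forall_exists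
    (h : ∀ x y, distToCode C x = distToCode C y → ∃ g, IsHammingAut g ∧ g '' C = C ∧ g x = y) :
    IsCompletelyTransitive C := by
  let X : Subgroup (Equiv.Perm (Fin m → ZMod 2)) :=
    { carrier := {g | IsHammingAut g ∧ g '' C = C}
      one_mem' := ⟨.one, Set.image_id C⟩
      mul_mem' := fun {f g} hf hg =>
        ⟨hf.1.mul hg.1, by rw [Equiv.Perm.coe_mul, Set.image_comp, hg.2, hf.2]⟩
      inv_mem' := fun {f} hf => ⟨hf.1.inv, by
        conv_lhs => rw [← hf.2, ← Set.image_comp, ← Equiv.Perm.coe_mul, inv_mul_cancel]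
        exact Set.image_id C⟩ }
  refine ⟨X, fun g hg => hg, ?_⟩
  rintro _ x rfl
  ext y
  constructor
  · intro hy
    obtain ⟨g, hg, hgC, rfl⟩ := h x y hy.symm
    exact ⟨g, ⟨hg, hgC⟩, rfl⟩
  · rintro ⟨g, ⟨hg, hgC⟩, rfl⟩
    rw [Set.mem_ofPred_eq, ← hg.distToCode_image C x, hgC]

end HammingAut

section WordsThrough

variable {m : ℕ} {C : Set (Fin m → ZMod 2)} {x : Fin m → ZMod 2} {a : Fin m}

theorem codewordCount_mono {D : Set (Fin m → ZMod 2)} (h : C ⊆ D) (x : Fin m → ZMod 2) (k : ℕ) :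
    codewordCount C x k ≤ codewordCount D x k :=
  Finset.card_le_card (Finset.filter_subset_filter _ (Set.Finite.toFinset_mono h))

theorem codewordCount_sep (C : Set (Fin m → ZMod 2)) (P : (Fin m → ZMod 2) → Prop) [DecidablePred P]
    (x : Fin m → ZMod 2) (k : ℕ) : codewordCount {c ∈ C | P c} x k =
      #{c ∈ C.toFinite.toFinset | hammingDist x c = k ∧ P c} := by
  refine congrArg Finset.card (Finset.ext fun c => ?_)
  simp only [Finset.mem_filter, Set.Finite.mem_toFinset, Set.mem_ofPred_eq]
  tauto

theorem codewordCount_add_single (C : Set (Fin m → ZMod 2)) (hx : x a = 0) (k : ℕ) :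
    codewordCount C (x + Pi.single a 1) (k + 1) + codewordCount {c ∈ C | c a = 1} x k =
      codewordCount C x k + codewordCount {c ∈ C | c a = 1} x (k + 2) := by
  rw [codewordCount_sep, codewordCount_sep]
  simp only [codewordCount, Finset.card_filter, ← Finset.sum_add_distrib]
  refine Finset.sum_congr rfl fun c _ => ?_
  simp only [hammingDist_eq_hammingNorm_add, add_right_comm x, hammingNorm_add_single_eq_iff,
    Pi.add_apply, hx, zero_add]
  have bit : c a = 0 ∨ c a = 1 := by generalize c a = b; revert b; decide
  rcases bit with h | h
  · simp [h]
  · rw [add_comm]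
    simp [h, add_assoc]

end WordsThrough

namespace IsCRCode

variable {C : Set (Fin 15 → ZMod 2)} {x y c : Fin 15 → ZMod 2} {i : Fin 4}

theorem card_hammingDist (hC : IsCRCode C) (hx : distToCode C x = i) (P : ℕ → Prop)
    [DecidablePred P] :
    #{c ∈ C.toFinite.toFinset | P (hammingDist x c)} =
      ∑ k : Fin 16, if P k then outerMatrix i k else 0 := by
  have dist_lt (c : Fin 15 → ZMod 2) : hammingDist x c < 16 :=
    Nat.lt_succ_of_le hammingDist_le_card_fintype
  rw [Finset.card_eq_sum_card_fiberwise (f := fun c => (⟨_, dist_lt c⟩ : Fin 16))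
    (t := Finset.univ) fun _ _ => Finset.mem_coe.mpr (Finset.mem_univ _)]
  refine Finset.sum_congr rfl fun k _ => ?_
  rw [Finset.filter_filter, ← hC.codewordCount_eq hx, codewordCount]
  split_ifs with hk
  · refine congrArg Finset.card (Finset.filter_congr fun c _ => ?_)
    rw [Fin.ext_iff, and_iff_right_of_imp]
    exact fun h => (congrArg P h).mpr hk
  · refine Finset.card_eq_zero.mpr (Finset.filter_eq_empty_iff.mpr fun c _ h => hk ?_)
    exact h.2 ▸ h.1

theorem card_eq (hC : IsCRCode C) : #C.toFinite.toFinset = 256 := by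
  obtain ⟨x, hx⟩ := hC.exists_distToCode_eq 0
  simpa using (hC.card_hammingDist hx fun _ => True).trans (by decide)

theorem exists_hammingDist_eq (hC : IsCRCode C) (hx : distToCode C x = i) {k : Fin 16}
    (hk : outerMatrix i k ≠ 0) : ∃ c ∈ C, hammingDist x c = k := by
  simpa [← hC.codewordCount_eq hx, codewordCount_eq_zero_iff] using hk

theorem hammingDist_mem (hC : IsCRCode C) (hx : x ∈ C) (hy : y ∈ C) :
    hammingDist x y ∈ ({0, 5, 6, 7, 8, 9, 10, 15} : Finset ℕ) := by
  have dist_lt : hammingDist x y < 16 := Nat.lt_succ_of_le hammingDist_le_card_fintype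
  have count := hC.codewordCount_eq (i := 0) ((distToCode_eq_zero ⟨x, hx⟩).mpr hx) ⟨_, dist_lt⟩
  have count_ne : codewordCount C x (hammingDist x y) ≠ 0 := fun h =>
    codewordCount_eq_zero_iff.mp h y hy rfl
  have table : ∀ k : Fin 16, outerMatrix 0 k ≠ 0 →
      (k : ℕ) ∈ ({0, 5, 6, 7, 8, 9, 10, 15} : Finset ℕ) := by decide
  exact table ⟨_, dist_lt⟩ (count ▸ count_ne)

theorem add_one_mem (hC : IsCRCode C) (hx : x ∈ C) : x + 1 ∈ C := by
  obtain ⟨c, hc, hxc⟩ := hC.exists_hammingDist_eq (i := 0) (k := 15)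
    ((distToCode_eq_zero ⟨x, hx⟩).mpr hx) (by decide)
  suffices x + 1 = c from this ▸ hc
  have ne_everywhere : ∀ t, x t ≠ c t := by
    simpa [hammingDist] using Finset.card_filter_eq_iff.mp hxc
  have eq_of_ne : ∀ u v : ZMod 2, u ≠ v → u + 1 = v := by decide
  exact funext fun t => eq_of_ne _ _ (ne_everywhere t)

end IsCRCode

theorem _root_.IsMinDist.distToCode_eq_hammingDist {m : ℕ} {C : Set (Fin m → ZMod 2)}
    {x c : Fin m → ZMod 2} {δ : ℕ} (hd : IsMinDist C δ) (hc : c ∈ C)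
    (h : 2 * hammingDist x c < δ) : distToCode C x = hammingDist x c := by
  by_contra hne
  have count := hd.codewordCount_eq_ite (x := x) h
  rw [if_neg hne, codewordCount_eq_zero_iff] at count
  exact count c hc rfl

namespace IsCRCode

variable {C : Set (Fin 15 → ZMod 2)} {a b : Fin 15}

theorem codewordCount_zero (hC : IsCRCode C) (h0 : 0 ∈ C) (k : Fin 16) :
    codewordCount C 0 k = outerMatrix 0 k :=
  hC.codewordCount_eq ((distToCode_eq_zero ⟨0, h0⟩).mpr h0) k

theorem codewordCount_single (hC : IsCRCode C) (h0 : 0 ∈ C) (a : Fin 15) (k : Fin 16) :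
    codewordCount C (Pi.single a 1) k = outerMatrix 1 k := by
  have weight : hammingDist (Pi.single a 1 : Fin 15 → ZMod 2) 0 = 1 := by
    rw [hammingDist_zero_right, hammingNorm_single]
  refine hC.codewordCount_eq ?_ k
  rw [hC.minDist.distToCode_eq_hammingDist h0 (by omega), weight, Fin.val_one]

theorem codewordCount_single_add_single (hC : IsCRCode C) (h0 : 0 ∈ C) (hab : a ≠ b)
    (k : Fin 16) : codewordCount C (Pi.single b 1 + Pi.single a 1) k = outerMatrix 2 k := by
  have weight : hammingDist (Pi.single b 1 + Pi.single a 1 : Fin 15 → ZMod 2) 0 = 2 := by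
    simpa [hab, hammingNorm_single] using hammingNorm_add_single (Pi.single b 1) a
  refine hC.codewordCount_eq ?_ k
  rw [hC.minDist.distToCode_eq_hammingDist h0 (by omega), weight, Fin.val_two]

theorem codewordCount_through (hC : IsCRCode C) (h0 : 0 ∈ C) (a : Fin 15) :
    codewordCount {c ∈ C | c a = 1} 0 3 = 0 ∧ codewordCount {c ∈ C | c a = 1} 0 5 = 14 ∧
      codewordCount {c ∈ C | c a = 1} 0 7 = 7 := by
  have all_three : codewordCount C 0 3 = 0 := hC.codewordCount_zero h0 3
  have all_five : codewordCount C 0 5 = 42 := hC.codewordCount_zero h0 5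
  have near_four : codewordCount C (Pi.single a 1) 4 = 14 := hC.codewordCount_single h0 a 4
  have near_six : codewordCount C (Pi.single a 1) 6 = 35 := hC.codewordCount_single h0 a 6
  have le_all := codewordCount_mono (Set.sep_subset C fun c => c a = 1) 0 3
  have count_four := codewordCount_add_single C (Pi.zero_apply a) 3
  have count_six := codewordCount_add_single C (Pi.zero_apply a) 5
  rw [zero_add] at count_four count_six
  norm_num only at count_four count_six
  omega

theorem codewordCount_through_pair (hC : IsCRCode C) (h0 : 0 ∈ C) (hab : a ≠ b) :
    codewordCount {c ∈ {c ∈ C | c a = 1} | c b = 1} 0 5 = 4 ∧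
      codewordCount {c ∈ {c ∈ C | c a = 1} | c b = 1} 0 7 = 3 := by
  obtain ⟨through_three, through_five, -⟩ := hC.codewordCount_through h0 a
  have near_two : codewordCount C (Pi.single b 1) 2 = 0 := hC.codewordCount_single h0 b 2
  have near_four : codewordCount C (Pi.single b 1) 4 = 14 := hC.codewordCount_single h0 b 4
  have pair_three : codewordCount C (Pi.single b 1 + Pi.single a 1) 3 = 4 :=
    hC.codewordCount_single_add_single h0 hab 3
  have pair_five : codewordCount C (Pi.single b 1 + Pi.single a 1) 5 = 23 :=
    hC.codewordCount_single_add_single h0 hab 5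
  have le_near := codewordCount_mono (Set.sep_subset C fun c => c a = 1) (Pi.single b 1) 2
  have le_through := codewordCount_mono (Set.sep_subset {c ∈ C | c a = 1} fun c => c b = 1) 0 3
  have b_zero_at_a : (Pi.single b 1 : Fin 15 → ZMod 2) a = 0 := Pi.single_eq_of_ne hab 1
  have count_pair_three := codewordCount_add_single C b_zero_at_a 2
  have count_pair_five := codewordCount_add_single C b_zero_at_a 4
  have count_four := codewordCount_add_single {c ∈ C | c a = 1} (Pi.zero_apply b) 3
  have count_six := codewordCount_add_single {c ∈ C | c a = 1} (Pi.zero_apply b) 5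
  rw [zero_add] at count_four count_six
  norm_num only at count_four count_six count_pair_three count_pair_five
  omega

end IsCRCode

section WeightForm

variable {ι : Type*} [Fintype ι] (x y z : ι → ZMod 2)

/-- The parity of `⌈wt x / 2⌉`. Rounding up makes it a quadratic form over `F_2`, and on words of
length 15 it is invariant under complementation. -/
def weightForm : ZMod 2 :=
  ((hammingNorm x + 1) / 2 : ℕ)

/-- The polar form of `weightForm`. -/
def weightPolar : ZMod 2 :=
  ∑ i, x i * y i + (∑ i, x i) * ∑ i, y i

theorem cast_hammingNorm : (hammingNorm x : ZMod 2) = ∑ i, x i := by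
  simp [hammingNorm_eq_sum_val]

theorem weightForm_add : weightForm (x + y) = weightForm x + weightForm y + weightPolar x y := by
  have half_add : ∀ s u v t : ℕ, s + 2 * t = u + v →
      ((((s + 1) / 2 : ℕ) : ZMod 2) =
        ((u + 1) / 2 : ℕ) + ((v + 1) / 2 : ℕ) + (t + u * v)) := by
    intro s u v t h
    suffices ((s + 1) / 2) % 2 = ((u + 1) / 2 + (v + 1) / 2 + (t + (u % 2) * (v % 2))) % 2 by
      have := (ZMod.natCast_eq_natCast_iff' _ _ 2).mpr this
      simpa [ZMod.natCast_mod] using this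
    rcases Nat.mod_two_eq_zero_or_one u with hu | hu <;>
      rcases Nat.mod_two_eq_zero_or_one v with hv | hv <;> rw [hu, hv] <;> omega
  have := half_add _ _ _ _ (hammingNorm_add_add_two_mul_inter x y)
  simpa [weightForm, weightPolar, ← cast_hammingNorm] using this

theorem weightPolar_add_left : weightPolar (x + y) z = weightPolar x z + weightPolar y z := by
  simp only [weightPolar, Pi.add_apply, add_mul, Finset.sum_add_distrib]
  ring

theorem weightPolar_comm : weightPolar x y = weightPolar y x := by
  simp only [weightPolar, mul_comm]

theorem weightPolar_add_right : weightPolar x (y + z) = weightPolar x y + weightPolar x z := by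
  simp only [weightPolar_comm x, weightPolar_add_left]

end WeightForm

section SymmetricDesign

open Matrix

/-- Ryser's theorem: the dual of a symmetric design is a design. -/
theorem sum_mul_eq_of_symmetric_design {ι β K : Type*} [Fintype ι] [Fintype β] [DecidableEq ι]
    [DecidableEq β] [Field K] (hcard : Fintype.card ι = Fintype.card β) {N : ι → β → K} {k l : K}
    (hk : k ≠ 0) (hkl : k ≠ l) (hrow : ∀ i, ∑ b, N i b = k) (hcol : ∀ b, ∑ i, N i b = k)
    (hinner : ∀ i j, ∑ b, N i b * N j b = if i = j then k else l) (b c : β) :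
    ∑ i, N i b * N i c = if b = c then k else l := by
  have hkl' : k - l ≠ 0 := sub_ne_zero.mpr hkl
  have gram : of N * (of N)ᵀ = (k - l) • (1 : Matrix ι ι K) + l • of fun _ _ => 1 := by
    ext i j
    by_cases hij : i = j <;> simp [mul_apply, hinner, hij]
  have row_sums : of N * (of fun _ _ => 1 : Matrix β ι K) = k • of fun _ _ => 1 := by
    ext i j
    simp [mul_apply, hrow]
  have col_sums : (of fun _ _ => 1 : Matrix β ι K) * of N = k • of fun _ _ => 1 := by
    ext i j
    simp [mul_apply, hcol]
  have right_inv : of N * ((k - l)⁻¹ • ((of N)ᵀ - (l / k) • of fun _ _ => 1)) = 1 := by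
    rw [Matrix.mul_smul, Matrix.mul_sub, Matrix.mul_smul, row_sums, gram, smul_smul,
      div_mul_cancel₀ l hk, add_sub_cancel_right, smul_smul, inv_mul_cancel₀ hkl', one_smul]
  have left_inv := (mul_eq_one_comm_of_card_eq _ _ _ hcard).mp right_inv
  rw [Matrix.smul_mul, Matrix.sub_mul, Matrix.smul_mul, col_sums, smul_smul, div_mul_cancel₀ l hk,
    inv_smul_eq_iff₀ hkl', sub_eq_iff_eq_add] at left_inv
  have entry := congrFun₂ left_inv b c
  by_cases hbc : b = c <;> simpa [mul_apply, hbc] using entry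

end SymmetricDesign

namespace IsCRCode

variable {C : Set (Fin 15 → ZMod 2)} {x y : Fin 15 → ZMod 2}

theorem sum_val_mul_val (hC : IsCRCode C) (h0 : 0 ∈ C) (a b : Fin 15) :
    ∑ c ∈ C.toFinite.toFinset with hammingDist 0 c = 7, (c a).val * (c b).val =
      if a = b then 7 else 3 := by
  have val_mul_val : ∀ u v : ZMod 2, u.val * v.val = if u = 1 ∧ v = 1 then 1 else 0 := by decide
  simp only [val_mul_val, ← Finset.card_filter, Finset.filter_filter]
  split_ifs with hab
  · simp only [hab, and_self, ← codewordCount_sep, (hC.codewordCount_through h0 b).2.2]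
  · have sep_sep : {c ∈ C | c a = 1 ∧ c b = 1} = {c ∈ {c ∈ C | c a = 1} | c b = 1} :=
      Set.ext fun _ => and_assoc.symm
    rw [← codewordCount_sep, sep_sep, (hC.codewordCount_through_pair h0 hab).2]

theorem hammingNorm_add_of_eq_seven (hC : IsCRCode C) (h0 : 0 ∈ C) (hx : x ∈ C) (hy : y ∈ C)
    (hx7 : hammingNorm x = 7) (hy7 : hammingNorm y = 7) (hne : x ≠ y) :
    hammingNorm (x + y) = 8 := by
  let B : Finset (Fin 15 → ZMod 2) := {c ∈ C.toFinite.toFinset | hammingDist 0 c = 7}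
  have mem_B {c} (hc : c ∈ C) (hc7 : hammingNorm c = 7) : c ∈ B := by simp [B, hc, hc7]
  have card_B : Fintype.card (Fin 15) = Fintype.card B := by
    rw [Fintype.card_coe, Fintype.card_fin]
    exact (hC.codewordCount_zero h0 7).symm
  have inner_rows (a b : Fin 15) : ∑ c : B, (c.1 a).val * (c.1 b).val = if a = b then 7 else 3 :=
    (Finset.sum_coe_sort B fun c => (c a).val * (c b).val).trans (hC.sum_val_mul_val h0 a b)
  have row_sums (a : Fin 15) : ∑ c : B, (c.1 a).val = 7 := by
    have val_mul_self : ∀ u : ZMod 2, u.val * u.val = u.val := by decide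
    simpa only [val_mul_self, if_true] using inner_rows a a
  have col_sums (c : B) : ∑ a, (c.1 a).val = 7 := by
    rw [← hammingNorm_eq_sum_val, ← hammingDist_zero_left]
    exact (Finset.mem_filter.mp c.2).2
  have inter : ∑ a, (x a).val * (y a).val = 3 := by
    have dual := sum_mul_eq_of_symmetric_design card_B (N := fun a c => ((c.1 a).val : ℚ))
      (k := 7) (l := 3) (by norm_num) (by norm_num) (fun a => mod_cast row_sums a)
      (fun c => mod_cast col_sums c) (fun a b => mod_cast inner_rows a b)
      ⟨x, mem_B hx hx7⟩ ⟨y, mem_B hy hy7⟩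
    rw [if_neg fun h => hne (congrArg Subtype.val h)] at dual
    exact_mod_cast dual
  have := hammingNorm_add_add_two_mul_inter x y
  omega

end IsCRCode

theorem weightForm_add_one (x : Fin 15 → ZMod 2) : weightForm (x + 1) = weightForm x := by
  have form_one : weightForm (1 : Fin 15 → ZMod 2) = 0 := by decide
  have polar_one : weightPolar x 1 = 0 := by
    have fifteen : (15 : ZMod 2) = 1 := by decide
    simp [weightPolar, fifteen, ZModModule.add_self]
  rw [weightForm_add, form_one, polar_one, add_zero, add_zero]

theorem hammingNorm_add_one (x : Fin 15 → ZMod 2) : hammingNorm (x + 1) + hammingNorm x = 15 := by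
  have inter := hammingNorm_add_add_two_mul_inter x 1
  have norm_one : hammingNorm (1 : Fin 15 → ZMod 2) = 15 := by decide
  simp only [Pi.one_apply, ZMod.val_one, mul_one, ← hammingNorm_eq_sum_val, norm_one] at inter
  omega

namespace IsCRCode

variable {C : Set (Fin 15 → ZMod 2)} {v x y z : Fin 15 → ZMod 2}

theorem hammingNorm_mem (hC : IsCRCode C) (h0 : 0 ∈ C) (hx : x ∈ C) :
    hammingNorm x ∈ ({0, 5, 6, 7, 8, 9, 10, 15} : Finset ℕ) := by
  rw [← hammingDist_zero_left]
  exact hC.hammingDist_mem h0 hx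

theorem exists_weightForm_add_eq (hC : IsCRCode C) (h0 : 0 ∈ C) (hx : x ∈ C)
    (hQ : weightForm x = 0) : ∃ x' ∈ C, (hammingNorm x' = 0 ∨ hammingNorm x' = 7) ∧
      ∀ z, weightForm (x + z) = weightForm (x' + z) := by
  have weight_add_one := hammingNorm_add_one x
  have zero_weights : ∀ w ∈ ({0, 5, 6, 7, 8, 9, 10, 15} : Finset ℕ),
      (((w + 1) / 2 : ℕ) : ZMod 2) = 0 → (w = 0 ∨ w = 7) ∨ w = 15 ∨ w = 8 := by decide
  rcases zero_weights _ (hC.hammingNorm_mem h0 hx) hQ with h | h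
  · exact ⟨x, hx, h, fun _ => rfl⟩
  · refine ⟨x + 1, hC.add_one_mem hx, by omega, fun z => ?_⟩
    rw [add_right_comm, weightForm_add_one]

theorem weightForm_add_eq_zero (hC : IsCRCode C) (h0 : 0 ∈ C) (hx : x ∈ C) (hy : y ∈ C)
    (hQx : weightForm x = 0) (hQy : weightForm y = 0) : weightForm (x + y) = 0 := by
  obtain ⟨x', hx', weight_x', hxx'⟩ := hC.exists_weightForm_add_eq h0 hx hQx
  obtain ⟨y', hy', weight_y', hyy'⟩ := hC.exists_weightForm_add_eq h0 hy hQy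
  rw [hxx', add_comm, hyy', add_comm]
  have form_of_weight {z : Fin 15 → ZMod 2} (h : hammingNorm z = 0 ∨ hammingNorm z = 7) :
      weightForm z = 0 := by
    rcases h with h | h <;> rw [weightForm, h] <;> rfl
  rcases weight_x' with hx0 | hx7
  · rw [hammingNorm_eq_zero.mp hx0, zero_add, form_of_weight weight_y']
  rcases weight_y' with hy0 | hy7
  · rw [hammingNorm_eq_zero.mp hy0, add_zero, form_of_weight (.inr hx7)]
  by_cases hne : x' = y'
  · rw [hne, ZModModule.add_self]
    exact form_of_weight (.inl hammingNorm_zero)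
  · rw [weightForm, hC.hammingNorm_add_of_eq_seven h0 hx' hy' hx7 hy7 hne]
    rfl

/-- The codewords whose `weightForm` vanishes; they form the linear kernel of the code. -/
def formKernel (C : Set (Fin 15 → ZMod 2)) : Set (Fin 15 → ZMod 2) :=
  {x ∈ C | weightForm x = 0}

theorem weightForm_add_of_mem_formKernel (hC : IsCRCode C) (h0 : 0 ∈ C) (hx : x ∈ formKernel C)
    (hy : y ∈ C) : weightForm (x + y) = weightForm y := by
  have eq_of_zero_iff : ∀ a b : ZMod 2, (a = 0 ↔ b = 0) → a = b := by decide
  refine eq_of_zero_iff _ _ ⟨fun h => ?_, hC.weightForm_add_eq_zero h0 hx.1 hy hx.2⟩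
  -- In the code translated by `x`, both `x` and `x + y` are zeros of the form, hence so is `y`.
  have hCx : IsCRCode (Equiv.addRight x '' C) := hC.image (isHammingAut_addRight x)
  have h0x : 0 ∈ Equiv.addRight x '' C := ⟨x, hx.1, ZModModule.add_self x⟩
  have := hCx.weightForm_add_eq_zero h0x ⟨0, h0, zero_add x⟩ ⟨y, hy, add_comm y x⟩ hx.2 h
  rwa [← add_assoc, ZModModule.add_self, zero_add] at this

theorem weightPolar_eq_zero (hC : IsCRCode C) (h0 : 0 ∈ C) (hx : x ∈ formKernel C) (hy : y ∈ C) :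
    weightPolar x y = 0 := by
  simpa [weightForm_add x y, hx.2] using hC.weightForm_add_of_mem_formKernel h0 hx hy

theorem mem_of_forall_weightForm_add_eq (hC : IsCRCode C) (hy : y ∈ C)
    (h : ∀ z ∈ C, weightForm (v + z) = weightForm (y + z)) : v ∈ C := by
  have card_zeros {u : Fin 15 → ZMod 2} {i : Fin 4} (hu : distToCode C u = i) :
      #{z ∈ C.toFinite.toFinset | weightForm (u + z) = 0} = ![32, 128, 128, 160] i := by
    simp only [weightForm, ← hammingDist_eq_hammingNorm_add]
    rw [hC.card_hammingDist hu fun k => (((k + 1) / 2 : ℕ) : ZMod 2) = 0]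
    fin_cases i <;> decide
  have eq_zero : ∀ i : Fin 4, ![32, 128, 128, 160] i = 32 → i = 0 := by decide
  have zeros_eq : {z ∈ C.toFinite.toFinset | weightForm (v + z) = 0} =
      {z ∈ C.toFinite.toFinset | weightForm (y + z) = 0} :=
    Finset.filter_congr fun z hz => by rw [h z (by simpa using hz)]
  have card_y := card_zeros (i := 0) ((distToCode_eq_zero ⟨y, hy⟩).mpr hy)
  have card_v := card_zeros (i := ⟨_, hC.distToCode_lt_four v⟩) rfl
  rw [zeros_eq, card_y] at card_v
  exact (distToCode_eq_zero ⟨y, hy⟩).mp (Fin.ext_iff.mp (eq_zero _ card_v.symm))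

theorem add_mem_of_mem_formKernel (hC : IsCRCode C) (h0 : 0 ∈ C) (hx : x ∈ formKernel C)
    (hy : y ∈ C) : x + y ∈ C := by
  refine hC.mem_of_forall_weightForm_add_eq hy fun z hz => ?_
  rw [add_assoc, weightForm_add, hx.2, weightPolar_add_right, hC.weightPolar_eq_zero h0 hx hy,
    hC.weightPolar_eq_zero h0 hx hz, add_zero, add_zero, zero_add]

theorem add_mem_formKernel (hC : IsCRCode C) (h0 : 0 ∈ C) (hx : x ∈ formKernel C)
    (hy : y ∈ formKernel C) : x + y ∈ formKernel C :=
  ⟨hC.add_mem_of_mem_formKernel h0 hx hy.1, hC.weightForm_add_eq_zero h0 hx.1 hy.1 hx.2 hy.2⟩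

end IsCRCode

namespace IsCRCode

variable {C : Set (Fin 15 → ZMod 2)} {x y : Fin 15 → ZMod 2} {a b i j : Fin 15}

/-- The words of even weight in `formKernel C`, as a vector space. -/
def evenKernel (hC : IsCRCode C) (h0 : 0 ∈ C) : Submodule (ZMod 2) (Fin 15 → ZMod 2) where
  carrier := {x | x ∈ formKernel C ∧ ∑ i, x i = 0}
  zero_mem' := ⟨⟨h0, by decide⟩, by simp⟩
  add_mem' := fun {x y} hx hy =>
    ⟨hC.add_mem_formKernel h0 hx.1 hy.1, by simp [Finset.sum_add_distrib, hx.2, hy.2]⟩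
  smul_mem' := fun a x hx => by
    have bit : ∀ a : ZMod 2, a = 0 ∨ a = 1 := by decide
    rcases bit a with rfl | rfl
    · exact zero_smul (ZMod 2) x ▸ ⟨⟨h0, by decide⟩, by simp⟩
    · rwa [one_smul]

theorem mem_evenKernel_iff (hC : IsCRCode C) (h0 : 0 ∈ C) :
    x ∈ hC.evenKernel h0 ↔ x ∈ C ∧ (hammingNorm x = 0 ∨ hammingNorm x = 8) := by
  change (x ∈ C ∧ _) ∧ _ ↔ _
  rw [and_assoc, ← cast_hammingNorm]
  refine and_congr_right fun hx => ?_
  have even_weights : ∀ w ∈ ({0, 5, 6, 7, 8, 9, 10, 15} : Finset ℕ),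
      ((((w + 1) / 2 : ℕ) : ZMod 2) = 0 ∧ (w : ZMod 2) = 0 ↔ w = 0 ∨ w = 8) := by decide
  exact even_weights _ (hC.hammingNorm_mem h0 hx)

theorem card_evenKernel (hC : IsCRCode C) (h0 : 0 ∈ C) : Nat.card (hC.evenKernel h0) = 16 := by
  have count := hC.card_hammingDist (i := 0) ((distToCode_eq_zero ⟨0, h0⟩).mpr h0)
    fun k => k = 0 ∨ k = 8
  rw [← SetLike.coe_sort_coe, Nat.card_coe_set_eq, Set.ncard_eq_toFinset_card _,
    ← show _ = 16 from count.trans (by decide)]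
  congr 1
  ext x
  simp [mem_evenKernel_iff]

theorem add_one_mem_evenKernel (hC : IsCRCode C) (h0 : 0 ∈ C) (hx : x ∈ C)
    (hx7 : hammingNorm x = 7) : x + 1 ∈ hC.evenKernel h0 :=
  (hC.mem_evenKernel_iff h0).mpr ⟨hC.add_one_mem hx, by have := hammingNorm_add_one x; omega⟩

theorem exists_mem_evenKernel_apply_ne_zero (hC : IsCRCode C) (h0 : 0 ∈ C) (i : Fin 15) :
    ∃ x ∈ hC.evenKernel h0, x i ≠ 0 := by
  by_contra! vanish
  have through_i {c} (hc : c ∈ C) (hc7 : hammingNorm c = 7) : c i = 1 :=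
    CharTwo.add_eq_zero.mp (vanish _ (hC.add_one_mem_evenKernel h0 hc hc7))
  have all_through : codewordCount {c ∈ C | c i = 1} 0 7 = codewordCount C 0 7 := by
    rw [codewordCount_sep]
    refine congrArg Finset.card (Finset.filter_congr fun c hc => and_iff_left_of_imp fun hc7 => ?_)
    exact through_i (by simpa using hc) (by simpa using hc7)
  rw [(hC.codewordCount_through h0 i).2.2] at all_through
  exact absurd (all_through.trans (hC.codewordCount_zero h0 7)) (by decide)

theorem exists_mem_evenKernel_apply_ne (hC : IsCRCode C) (h0 : 0 ∈ C) (hij : i ≠ j) :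
    ∃ x ∈ hC.evenKernel h0, x i ≠ x j := by
  by_contra! agree
  have through_j {c} (hc : c ∈ C) (hc7 : hammingNorm c = 7) (hi : c i = 1) : c j = 1 := by
    simpa [hi, eq_comm] using agree _ (hC.add_one_mem_evenKernel h0 hc hc7)
  have all_through : codewordCount {c ∈ {c ∈ C | c i = 1} | c j = 1} 0 7 =
      codewordCount {c ∈ C | c i = 1} 0 7 := by
    rw [codewordCount_sep]
    refine congrArg Finset.card (Finset.filter_congr fun c hc => and_iff_left_of_imp fun hc7 => ?_)
    simp only [Set.Finite.mem_toFinset] at hc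
    exact through_j hc.1 (by simpa using hc7) hc.2
  rw [(hC.codewordCount_through h0 i).2.2, (hC.codewordCount_through_pair h0 hij).2] at all_through
  exact absurd all_through (by decide)

theorem exists_mem_hammingNorm_eq_five (hC : IsCRCode C) (h0 : 0 ∈ C) (hab : a ≠ b) :
    ∃ y ∈ C, hammingNorm y = 5 ∧ ∃ (p : Fin 4 → Fin 15) (f : Fin 15), p 0 = a ∧ p 1 = b ∧
      ∀ t, y t = 1 ↔ t ∈ Set.range p ∨ t = f := by
  have count_ne : codewordCount {c ∈ {c ∈ C | c a = 1} | c b = 1} 0 5 ≠ 0 := by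
    rw [(hC.codewordCount_through_pair h0 hab).1]
    decide
  obtain ⟨y, ⟨⟨hy, hya⟩, hyb⟩, hy5⟩ : ∃ y ∈ {c ∈ {c ∈ C | c a = 1} | c b = 1},
      hammingNorm y = 5 := by
    simpa only [ne_eq, codewordCount_eq_zero_iff, not_forall, not_not, exists_prop,
      hammingDist_zero_left] using count_ne
  have ne_zero_iff : ∀ u : ZMod 2, u ≠ 0 ↔ u = 1 := by decide
  have rest : #(((Finset.univ.filter fun t => y t ≠ 0).erase a).erase b) = 3 := by
    rw [Finset.card_erase_of_mem (by simp [hab.symm, hyb]),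
      Finset.card_erase_of_mem (by simp [hya])]
    exact congrArg (· - 1 - 1) hy5
  obtain ⟨c, d, f, -, -, -, hcdf⟩ := Finset.card_eq_three.mp rest
  refine ⟨y, hy, hy5, ![a, b, c, d], f, rfl, rfl, fun t => ?_⟩
  have mem_rest := Finset.ext_iff.mp hcdf t
  simp only [Finset.mem_erase, Finset.mem_filter, Finset.mem_univ, true_and, ne_zero_iff,
    Finset.mem_insert, Finset.mem_singleton] at mem_rest
  simp only [Matrix.range_cons, Matrix.range_empty, Set.union_empty, Set.mem_union,
    Set.mem_singleton_iff]
  by_cases hta : t = a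
  · simp [hta, hya]
  by_cases htb : t = b
  · simp [htb, hyb]
  simpa [hta, htb, or_assoc] using mem_rest

theorem eq_zero_of_comp_eq_zero (hC : IsCRCode C) (h0 : 0 ∈ C) (hy : y ∈ C)
    (hy5 : hammingNorm y = 5) {p : Fin 4 → Fin 15} {f : Fin 15}
    (hp : ∀ t, y t = 1 ↔ t ∈ Set.range p ∨ t = f) (hx : x ∈ hC.evenKernel h0)
    (hxp : x ∘ p = 0) : x = 0 := by
  have off_f {t} (ht : t ≠ f) : x t = 0 ∨ y t = 0 := by
    have bit : ∀ u : ZMod 2, u = 0 ∨ u = 1 := by decide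
    rcases bit (y t) with h | h
    · exact .inr h
    · obtain ⟨j, rfl⟩ := ((hp t).mp h).resolve_right ht
      exact .inl (congrFun hxp j)
  have at_f : x f = 0 := by
    have orthogonal := hC.weightPolar_eq_zero h0 hx.1 hy
    rw [weightPolar, hx.2, zero_mul, add_zero, Finset.sum_eq_single f, (hp f).mpr (.inr rfl),
      mul_one] at orthogonal
    · exact orthogonal
    · exact fun t _ ht => by rcases off_f ht with h | h <;> simp [h]
    · simp
  have disjoint : ∑ t, (x t).val * (y t).val = 0 := Finset.sum_eq_zero fun t _ => by
    by_cases ht : t = f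
    · simp [ht, at_f]
    · rcases off_f ht with h | h <;> simp [h]
  have weight := hammingNorm_add_add_two_mul_inter x y
  have weight_sum := hC.hammingNorm_mem h0 (hC.add_mem_of_mem_formKernel h0 hx.1 hy)
  rcases ((hC.mem_evenKernel_iff h0).mp hx).2 with h | h
  · exact hammingNorm_eq_zero.mp h
  · rw [show hammingNorm (x + y) = 13 by omega] at weight_sum
    exact absurd weight_sum (by decide)

end IsCRCode

section Points

/-- The points of `F_2^4 ∖ {0}` labelling the 15 coordinates: coordinate `i` is labelled by the
binary digits of `i + 1`. -/
def point (i : Fin 15) : Fin 4 → ZMod 2 := fun j =>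
  if (i.val + 1) / 2 ^ j.val % 2 = 1 then 1 else 0

/-- The coordinates labelled by the standard basis of `F_2^4`. -/
def corner : Fin 4 → Fin 15 := ![0, 1, 3, 7]

/-- The word of the values of a linear form on `F_2^4 ∖ {0}`. -/
def linWord (l : Fin 4 → ZMod 2) : Fin 15 → ZMod 2 := fun i => ∑ j, l j * point i j

theorem point_injective : Function.Injective point := by decide

theorem point_corner : ∀ j, point (corner j) = Pi.single j 1 := by decide

theorem exists_point_eq : ∀ v : Fin 4 → ZMod 2, v ≠ 0 → ∃ i, point i = v := by decide

end Points

namespace IsCRCode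

variable {C : Set (Fin 15 → ZMod 2)} {a b : Fin 15}

theorem exists_basis_evenKernel (hC : IsCRCode C) (h0 : 0 ∈ C) {p : Fin 4 → Fin 15}
    (hp : ∀ x ∈ hC.evenKernel h0, x ∘ p = 0 → x = 0) :
    ∃ b : Module.Basis (Fin 4) (ZMod 2) (hC.evenKernel h0), ∀ x j, b.repr x j = x.1 (p j) := by
  let restrict := (LinearMap.funLeft (ZMod 2) (ZMod 2) p).comp (hC.evenKernel h0).subtype
  have injective : Function.Injective restrict :=
    (injective_iff_map_eq_zero restrict).mpr fun x hx => Subtype.ext (hp x x.2 hx)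
  have bijective : Function.Bijective restrict :=
    (Nat.bijective_iff_injective_and_card restrict).mpr ⟨injective, by simp [hC.card_evenKernel h0]⟩
  exact ⟨.ofEquivFun (.ofBijective restrict bijective), fun _ _ => rfl⟩

theorem exists_permuteCoords_linWord_mem (hC : IsCRCode C) (h0 : 0 ∈ C) {p : Fin 4 → Fin 15}
    (hp : ∀ x ∈ hC.evenKernel h0, x ∘ p = 0 → x = 0) :
    ∃ σ : Equiv.Perm (Fin 15), (∀ j, σ (p j) = corner j) ∧
      ∀ l, linWord l ∈ permuteCoords σ '' C := by
  obtain ⟨b, hb⟩ := hC.exists_basis_evenKernel h0 hp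
  let κ : Fin 15 → Fin 4 → ZMod 2 := fun i j => (b j).1 i
  have apply_eq {x} (hx : x ∈ hC.evenKernel h0) (i : Fin 15) : x i = ∑ j, x (p j) * κ i j := by
    have := congrArg (fun z => z.1 i) (b.sum_repr ⟨x, hx⟩)
    simpa [hb] using this.symm
  have κ_p (k : Fin 4) : κ (p k) = Pi.single k 1 := by
    ext j
    change (b j).1 (p k) = _
    rw [← hb, b.repr_self]
    simp [Finsupp.single_apply, Pi.single_apply, eq_comm]
  have κ_ne_zero (i : Fin 15) : κ i ≠ 0 := fun h => by
    obtain ⟨x, hx, hxi⟩ := hC.exists_mem_evenKernel_apply_ne_zero h0 i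
    exact hxi (by
      rw [apply_eq hx]
      simp only [h, Pi.zero_apply, mul_zero, Finset.sum_const_zero])
  have κ_injective : Function.Injective κ := fun i j h => by
    by_contra hij
    obtain ⟨x, hx, hxij⟩ := hC.exists_mem_evenKernel_apply_ne h0 hij
    exact hxij (by rw [apply_eq hx, apply_eq hx, h])
  choose s hs using fun i => exists_point_eq (κ i) (κ_ne_zero i)
  have s_injective : Function.Injective s := fun i j h => κ_injective (by rw [← hs, ← hs, h])
  let σ : Equiv.Perm (Fin 15) := .ofBijective s (Finite.injective_iff_bijective.mp s_injective)
  have linWord_eq (l : Fin 4 → ZMod 2) : linWord l = permuteCoords σ (∑ j, l j • (b j).1) := by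
    ext i
    obtain ⟨i, rfl⟩ := σ.surjective i
    simp only [permuteCoords_apply_apply, Finset.sum_apply, Pi.smul_apply, smul_eq_mul]
    exact congrArg (fun v => ∑ j, l j * v j) (hs i)
  refine ⟨σ, fun j => point_injective (by rw [point_corner, ← κ_p]; exact hs _), fun l => ?_⟩
  rw [linWord_eq]
  exact Set.mem_image_of_mem _
    (sum_mem fun j _ => Submodule.smul_mem (hC.evenKernel h0) _ (b j).2).1.1

theorem exists_image_linWord_mem (hC : IsCRCode C) (h0 : 0 ∈ C) (hab : a ≠ b) :
    ∃ σ : Equiv.Perm (Fin 15), σ a = 0 ∧ σ b = 1 ∧ (∀ l, linWord l ∈ permuteCoords σ '' C) ∧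
      ∃ y ∈ permuteCoords σ '' C, hammingNorm y = 5 ∧ ∀ j, y (corner j) = 1 := by
  obtain ⟨y, hy, hy5, p, f, rfl, rfl, hp⟩ := hC.exists_mem_hammingNorm_eq_five h0 hab
  obtain ⟨σ, σ_p, linWord_mem⟩ := hC.exists_permuteCoords_linWord_mem h0 fun x hx =>
    hC.eq_zero_of_comp_eq_zero h0 hy hy5 hp hx
  refine ⟨σ, σ_p 0, σ_p 1, linWord_mem, _, ⟨y, hy, rfl⟩,
    (hammingNorm_permuteCoords σ y).trans hy5, fun j => ?_⟩
  rw [← σ_p, permuteCoords_apply_apply]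
  exact (hp _).mpr (.inl ⟨j, rfl⟩)

end IsCRCode

section QuadraticWords

variable {c c' : ZMod 2} {l l' : Fin 4 → ZMod 2} {u u' g g' : Fin 3 → ZMod 2}

/-- The word of the values of a quadratic polynomial on `F_2^4 ∖ {0}`, with constant coefficient
`c` and linear coefficients `l`. The coefficient of `p 0 * p (k + 1)` is `u k`, and `g k` is the
coefficient of the product of the other two variables. -/
def quadraticWord (c : ZMod 2) (l : Fin 4 → ZMod 2) (u g : Fin 3 → ZMod 2) : Fin 15 → ZMod 2 :=
  fun i => c + linWord l i + point i 0 * (∑ k, u k * point i k.succ) +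
    (g 0 * (point i 2 * point i 3) + g 1 * (point i 1 * point i 3) +
      g 2 * (point i 1 * point i 2))

theorem quadraticWord_add : quadraticWord c l u g + quadraticWord c' l' u' g' =
    quadraticWord (c + c') (l + l') (u + u') (g + g') := by
  ext i
  simp only [quadraticWord, linWord, Pi.add_apply, add_mul, Finset.sum_add_distrib]
  ring

theorem linWord_zero : linWord 0 = 0 := by
  ext i
  simp [linWord]

theorem quadraticWord_linear : quadraticWord 0 l 0 0 = linWord l := by
  ext i
  simp [quadraticWord]

theorem quadraticWord_one : quadraticWord 1 0 0 0 = 1 := by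
  ext i
  simp [quadraticWord, linWord]

theorem linWord_single (j : Fin 4) (i : Fin 15) : linWord (Pi.single j 1) i = point i j := by
  simp [linWord, Pi.single_apply]

theorem exists_eq_quadraticWord {x : Fin 15 → ZMod 2} (hx : ∀ l, ∑ i, linWord l i * x i = 0) :
    ∃ c l u g, x = quadraticWord c l u g := by
  have check (j : Fin 4) : ∑ i, point i j * x i = 0 := by
    simpa only [linWord_single] using hx (Pi.single j 1)
  have check_zero : x 0 + x 2 + x 4 + x 6 + x 8 + x 10 + x 12 + x 14 = 0 := by
    simpa [point, Fin.sum_univ_succ, ← add_assoc] using check 0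
  have check_one : x 1 + x 2 + x 5 + x 6 + x 9 + x 10 + x 13 + x 14 = 0 := by
    simpa [point, Fin.sum_univ_succ, ← add_assoc] using check 1
  have check_two : x 3 + x 4 + x 5 + x 6 + x 11 + x 12 + x 13 + x 14 = 0 := by
    simpa [point, Fin.sum_univ_succ, ← add_assoc] using check 2
  have check_three : x 7 + x 8 + x 9 + x 10 + x 11 + x 12 + x 13 + x 14 = 0 := by
    simpa [point, Fin.sum_univ_succ, ← add_assoc] using check 3
  obtain ⟨s, hs⟩ : ∃ s, s = x 0 + x 1 + x 2 + x 3 + x 4 + x 5 + x 6 + x 7 + x 8 + x 9 + x 10 +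
    x 11 + x 12 + x 13 + x 14 := ⟨_, rfl⟩
  -- Interpolation at the points of weight at most 2, where `s` is the value at the origin.
  refine ⟨s, fun j => x (corner j) + s,
    ![x 0 + x 1 + x 2 + s, x 0 + x 3 + x 4 + s, x 0 + x 7 + x 8 + s],
    ![x 3 + x 7 + x 11 + s, x 1 + x 7 + x 9 + s, x 1 + x 3 + x 5 + s], ?_⟩
  ext i
  fin_cases i <;> simp [quadraticWord, linWord, corner, point, Fin.sum_univ_succ] <;> grind

theorem weightForm_linWord : ∀ l, weightForm (linWord l) = 0 := by decide

theorem sum_linWord : ∀ l, ∑ i, linWord l i = 0 := by decide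

theorem exists_hammingNorm_quadraticWord_lt : ∀ u g : Fin 3 → ZMod 2, u ⬝ᵥ g = 0 →
    ∃ c l, hammingNorm (quadraticWord c l u g) < 5 := by
  decide +kernel

theorem eq_zero_of_quadraticWord_eq_zero : ∀ c l u g, quadraticWord c l u g = 0 →
    u = 0 ∧ g = 0 := by
  decide +kernel

theorem eq_one_of_hammingNorm_quadraticWord_eq_five : ∀ c l u g,
    (∀ j, quadraticWord c l u g (corner j) = 1) → hammingNorm (quadraticWord c l u g) = 5 →
      u = 1 ∧ g = 1 := by
  decide +kernel

end QuadraticWords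

section Kerdock

/-- The two Kerdock sets of alternating forms on `F_2^4` containing `0` and the form with all
coefficients `1`, as graphs over the first row `u` of the form. The choices `s = 1` and `s = 2` are
exchanged by swapping two basis vectors. -/
def kerdock (s : Fin 3) (u : Fin 3 → ZMod 2) : Fin 3 → ZMod 2 :=
  fun k => u k + u (k + s) + u (k + 1) * u (k + 2)

theorem eq_kerdock {f : (Fin 3 → ZMod 2) → Fin 3 → ZMod 2} (h0 : f 0 = 0) (h1 : f 1 = 1)
    (hf : ∀ u v, u ≠ v → (u + v) ⬝ᵥ (f u + f v) = 1) : ∃ s, (s = 1 ∨ s = 2) ∧ f = kerdock s := by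
  have first : ∀ g : Fin 3 → ZMod 2, (![1, 0, 0] + 0) ⬝ᵥ (g + 0) = 1 →
      (![1, 0, 0] + 1) ⬝ᵥ (g + 1) = 1 →
      ∃ s, (s = 1 ∨ s = 2) ∧ g = kerdock s ![1, 0, 0] := by
    decide
  have second : ∀ s, s = 1 ∨ s = 2 → ∀ g : Fin 3 → ZMod 2, (![0, 1, 0] + 0) ⬝ᵥ (g + 0) = 1 →
      (![0, 1, 0] + 1) ⬝ᵥ (g + 1) = 1 →
      (![0, 1, 0] + ![1, 0, 0]) ⬝ᵥ (g + kerdock s ![1, 0, 0]) = 1 → g = kerdock s ![0, 1, 0] := by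
    decide
  have all : ∀ s, s = 1 ∨ s = 2 → ∀ u g : Fin 3 → ZMod 2,
      (∀ v ∈ ({0, 1, ![1, 0, 0], ![0, 1, 0]} : Finset _),
        u = v ∧ g = kerdock s v ∨ (u + v) ⬝ᵥ (g + kerdock s v) = 1) → g = kerdock s u := by
    decide +kernel
  have kerdock_zero_one : ∀ s, s = 1 ∨ s = 2 → kerdock s 0 = 0 ∧ kerdock s 1 = 1 := by decide
  have dot_zero {u} (hu : u ≠ 0) : (u + 0) ⬝ᵥ (f u + 0) = 1 := by simpa only [h0] using hf u 0 hu
  have dot_one {u} (hu : u ≠ 1) : (u + 1) ⬝ᵥ (f u + 1) = 1 := by simpa only [h1] using hf u 1 hu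
  obtain ⟨s, hs, at_first⟩ := first _ (dot_zero (by decide)) (dot_one (by decide))
  have at_second : f ![0, 1, 0] = kerdock s ![0, 1, 0] :=
    second s hs _ (dot_zero (by decide)) (dot_one (by decide)) (at_first ▸ hf _ _ (by decide))
  have at_frame : ∀ v ∈ ({0, 1, ![1, 0, 0], ![0, 1, 0]} : Finset _), f v = kerdock s v := by
    simp [h0, h1, kerdock_zero_one s hs, at_first, at_second]
  refine ⟨s, hs, funext fun u => all s hs u _ fun v hv => ?_⟩
  rw [← at_frame v hv]
  exact or_iff_not_imp_left.mpr fun h => hf u v fun huv => h ⟨huv, huv ▸ rfl⟩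

end Kerdock

/-- The union of the cosets of the affine words given by the quadratic words with coefficients
`u` and `f u`. -/
def quadraticCode (f : (Fin 3 → ZMod 2) → Fin 3 → ZMod 2) : Set (Fin 15 → ZMod 2) :=
  {x | ∃ c l u, x = quadraticWord c l u (f u)}

namespace IsCRCode

variable {C : Set (Fin 15 → ZMod 2)} {x y : Fin 15 → ZMod 2} {c c' : ZMod 2}
  {l l' : Fin 4 → ZMod 2} {u u' g g' : Fin 3 → ZMod 2}

theorem quadraticWord_mem_formKernel (hC : IsCRCode C) (hlin : ∀ l, linWord l ∈ C) (c : ZMod 2)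
    (l : Fin 4 → ZMod 2) : quadraticWord c l 0 0 ∈ formKernel C := by
  have bit : ∀ c : ZMod 2, c = 0 ∨ c = 1 := by decide
  rcases bit c with rfl | rfl
  · rw [quadraticWord_linear]
    exact ⟨hlin l, weightForm_linWord l⟩
  · have split : quadraticWord 1 l 0 0 = linWord l + 1 := by
      simp [← quadraticWord_linear, ← quadraticWord_one, quadraticWord_add]
    rw [split]
    exact ⟨hC.add_one_mem (hlin l), by rw [weightForm_add_one, weightForm_linWord]⟩

theorem quadraticWord_mem (hC : IsCRCode C) (hlin : ∀ l, linWord l ∈ C)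
    (h : quadraticWord c l u g ∈ C) : quadraticWord c' l' u g ∈ C := by
  have h0 : 0 ∈ C := linWord_zero ▸ hlin 0
  have add_mem := hC.add_mem_of_mem_formKernel h0
    (hC.quadraticWord_mem_formKernel hlin (c' - c) (l' - l)) h
  simpa [quadraticWord_add] using add_mem

theorem exists_eq_quadraticWord (hC : IsCRCode C) (hlin : ∀ l, linWord l ∈ C) (hx : x ∈ C) :
    ∃ c l u g, x = quadraticWord c l u g := by
  have h0 : 0 ∈ C := linWord_zero ▸ hlin 0
  refine BinaryCode.exists_eq_quadraticWord fun l => ?_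
  simpa [weightPolar, sum_linWord] using
    hC.weightPolar_eq_zero h0 ⟨hlin l, weightForm_linWord l⟩ hx

theorem dotProduct_eq_one (hC : IsCRCode C) (hlin : ∀ l, linWord l ∈ C)
    (h : quadraticWord c l u g ∈ C) (h' : quadraticWord c' l' u' g' ∈ C)
    (hne : ¬(u = u' ∧ g = g')) : (u + u') ⬝ᵥ (g + g') = 1 := by
  have eq_one : ∀ a : ZMod 2, a ≠ 0 → a = 1 := by decide
  refine eq_one _ fun hdot => hne ?_
  obtain ⟨c, l, weight⟩ := exists_hammingNorm_quadraticWord_lt _ _ hdot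
  have split : quadraticWord c l (u + u') (g + g') =
      quadraticWord 0 0 u g + quadraticWord c l u' g' := by
    rw [quadraticWord_add, zero_add, zero_add]
  have same : quadraticWord 0 0 u g = quadraticWord c l u' g' := by
    by_contra hne
    have := hC.minDist.1 _ (hC.quadraticWord_mem hlin h) _ (hC.quadraticWord_mem hlin h') hne
    rw [hammingDist_eq_hammingNorm_add, ← split] at this
    omega
  rw [same, ZModModule.add_self] at split
  simpa only [CharTwo.add_eq_zero] using eq_zero_of_quadraticWord_eq_zero _ _ _ _ split

theorem exists_eq_quadraticCode (hC : IsCRCode C) (hlin : ∀ l, linWord l ∈ C) :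
    ∃ f, C = quadraticCode f ∧ ∀ u v, u ≠ v → (u + v) ⬝ᵥ (f u + f v) = 1 := by
  choose c l u g hx using fun x : C => hC.exists_eq_quadraticWord hlin x.2
  have g_eq {x y : C} (huv : u x = u y) : g x = g y := by
    by_contra hg
    have := hC.dotProduct_eq_one hlin (hx x ▸ x.2) (hx y ▸ y.2) fun h => hg h.2
    simp [huv, ZModModule.add_self] at this
  have injective : Function.Injective fun x => (c x, l x, u x) := fun x y h => by
    simp only [Prod.mk.injEq] at h
    exact Subtype.ext (by rw [hx x, hx y, h.1, h.2.1, h.2.2, g_eq h.2.2])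
  have bijective : Function.Bijective fun x => (c x, l x, u x) := by
    refine (Nat.bijective_iff_injective_and_card _).mpr ⟨injective, ?_⟩
    rw [Nat.card_coe_set_eq, Set.ncard_eq_toFinset_card _, hC.card_eq]
    simp
  choose w hw using fun u => bijective.2 (0, 0, u)
  have u_w (v) : u (w v) = v := congrArg (fun t => t.2.2) (hw v)
  have mem (v) : quadraticWord (c (w v)) (l (w v)) v (g (w v)) ∈ C := by
    have := hx (w v) ▸ (w v).2
    rwa [u_w] at this
  refine ⟨fun v => g (w v), Set.Subset.antisymm (fun x hxC => ?_) ?_, fun v v' hv => ?_⟩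
  · refine ⟨c ⟨x, hxC⟩, l ⟨x, hxC⟩, u ⟨x, hxC⟩, ?_⟩
    exact (hx ⟨x, hxC⟩).trans (congrArg _ (g_eq (u_w _).symm))
  · rintro _ ⟨c, l, v, rfl⟩
    exact hC.quadraticWord_mem hlin (mem v)
  · exact hC.dotProduct_eq_one hlin (mem v) (mem v') fun h => hv h.1

theorem exists_eq_quadraticCode_kerdock (hC : IsCRCode C) (hlin : ∀ l, linWord l ∈ C) (hy : y ∈ C)
    (hy5 : hammingNorm y = 5) (hcorner : ∀ j, y (corner j) = 1) :
    ∃ s, (s = 1 ∨ s = 2) ∧ C = quadraticCode (kerdock s) := by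
  obtain ⟨f, rfl, hf⟩ := hC.exists_eq_quadraticCode hlin
  have f_zero : f 0 = 0 := by
    obtain ⟨c, l, u, h⟩ : linWord 0 ∈ quadraticCode f := hlin 0
    obtain ⟨hu, hfu⟩ := eq_zero_of_quadraticWord_eq_zero c l u (f u) (h.symm.trans linWord_zero)
    rwa [hu] at hfu
  have f_one : f 1 = 1 := by
    obtain ⟨c, l, u, rfl⟩ := hy
    obtain ⟨hu, hfu⟩ := eq_one_of_hammingNorm_quadraticWord_eq_five c l u (f u) hcorner hy5
    rwa [hu] at hfu
  obtain ⟨s, hs, rfl⟩ := eq_kerdock f_zero f_one hf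
  exact ⟨s, hs, rfl⟩

end IsCRCode

section NordstromRobinson

/-- The punctured Nordstrom–Robinson code. -/
def nordstromRobinson : Set (Fin 15 → ZMod 2) :=
  quadraticCode (kerdock 1)

/-- The coordinate permutation induced by swapping the last two basis vectors of `F_2^4`. -/
def swapLast : Equiv.Perm (Fin 15) :=
  Equiv.swap 3 7 * Equiv.swap 4 8 * Equiv.swap 5 9 * Equiv.swap 6 10

theorem point_swapLast : ∀ i, point (swapLast i) = point i ∘ Equiv.swap 2 3 := by decide

theorem permuteCoords_swapLast_quadraticWord (c : ZMod 2) (l : Fin 4 → ZMod 2)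
    (u g : Fin 3 → ZMod 2) : permuteCoords swapLast (quadraticWord c l u g) =
      quadraticWord c (l ∘ Equiv.swap 2 3) (u ∘ Equiv.swap 1 2) (g ∘ Equiv.swap 1 2) := by
  ext i
  obtain ⟨i, rfl⟩ := swapLast.surjective i
  rw [permuteCoords_apply_apply]
  simp [quadraticWord, linWord, point_swapLast, Fin.sum_univ_succ, Equiv.swap_apply_def]
  ring

theorem kerdock_two_comp_swap : ∀ u, kerdock 2 u ∘ Equiv.swap 1 2 =
    kerdock 1 (u ∘ Equiv.swap 1 2) := by decide

theorem permuteCoords_swapLast_image :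
    permuteCoords swapLast '' quadraticCode (kerdock 2) = nordstromRobinson := by
  ext x
  constructor
  · rintro ⟨_, ⟨c, l, u, rfl⟩, rfl⟩
    exact ⟨c, l ∘ Equiv.swap 2 3, u ∘ Equiv.swap 1 2, by
      rw [permuteCoords_swapLast_quadraticWord, kerdock_two_comp_swap]⟩
  · rintro ⟨c, l, u, rfl⟩
    refine ⟨_, ⟨c, l ∘ Equiv.swap 2 3, u ∘ Equiv.swap 1 2, rfl⟩, ?_⟩
    rw [permuteCoords_swapLast_quadraticWord, kerdock_two_comp_swap]
    simp [Function.comp_assoc, ← Equiv.coe_trans]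

theorem permuteCoords_mul_image (σ τ : Equiv.Perm (Fin 15)) (C : Set (Fin 15 → ZMod 2)) :
    permuteCoords (σ * τ) '' C = permuteCoords σ '' (permuteCoords τ '' C) := by
  rw [← Set.image_comp]
  rfl

theorem IsCRCode.exists_permuteCoords_image_eq_nordstromRobinson {C : Set (Fin 15 → ZMod 2)}
    {a b : Fin 15} (hC : IsCRCode C) (h0 : 0 ∈ C) (hab : a ≠ b) :
    ∃ σ, σ a = 0 ∧ σ b = 1 ∧ permuteCoords σ '' C = nordstromRobinson := by
  obtain ⟨σ, hσa, hσb, hlin, y, hy, hy5, hcorner⟩ := hC.exists_image_linWord_mem h0 hab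
  have hCσ := hC.image (isHammingAut_permuteCoords σ)
  obtain ⟨s, rfl | rfl, hs⟩ := hCσ.exists_eq_quadraticCode_kerdock hlin hy hy5 hcorner
  · exact ⟨σ, hσa, hσb, hs⟩
  · refine ⟨swapLast * σ, ?_, ?_, ?_⟩
    · rw [Equiv.Perm.mul_apply, hσa]
      decide
    · rw [Equiv.Perm.mul_apply, hσb]
      decide
    · rw [permuteCoords_mul_image, hs, permuteCoords_swapLast_image]

end NordstromRobinson

section NormalForm

theorem exists_ne_apply_eq_one {ι : Type*} [Fintype ι] [Nontrivial ι] (x : ι → ZMod 2) :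
    ∃ a b, a ≠ b ∧ (0 < hammingNorm x → x a = 1) ∧ (1 < hammingNorm x → x b = 1) := by
  classical
  by_cases hx : 0 < hammingNorm x
  · obtain ⟨a, ha⟩ := exists_apply_eq_one_of_hammingNorm_pos hx
    have step := hammingNorm_add_single_add_one ha
    by_cases hx' : 1 < hammingNorm x
    · obtain ⟨b, hb⟩ := exists_apply_eq_one_of_hammingNorm_pos (x := x + Pi.single a 1) (by omega)
      have hab : a ≠ b := by
        rintro rfl
        simp [ha, ZModModule.add_self] at hb
      exact ⟨a, b, hab, fun _ => ha, fun _ => by simpa [hab.symm] using hb⟩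
    · obtain ⟨b, hb⟩ := exists_ne a
      exact ⟨a, b, hb.symm, fun _ => ha, fun h => absurd h hx'⟩
  · obtain ⟨a, b, hab⟩ := exists_pair_ne ι
    exact ⟨a, b, hab, fun h => absurd h hx, fun h => absurd (one_pos.trans h) hx⟩

variable {C : Set (Fin 15 → ZMod 2)} {x y : Fin 15 → ZMod 2}

/-- The origin is a codeword nearest to `x` (if it is a codeword), and the support of `x` contains
the first `min 2 (distToCode C x)` coordinates. -/
structure IsNormalized (C : Set (Fin 15 → ZMod 2)) (x : Fin 15 → ZMod 2) : Prop where
  hammingNorm_eq : hammingNorm x = distToCode C x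
  apply_zero : 0 < distToCode C x → x 0 = 1
  apply_one : 1 < distToCode C x → x 1 = 1

theorem IsCRCode.exists_isNormalized (hC : IsCRCode C) (x : Fin 15 → ZMod 2) :
    ∃ f, IsHammingAut f ∧ f '' C = nordstromRobinson ∧ IsNormalized nordstromRobinson (f x) := by
  obtain ⟨c, hc, hcx⟩ := exists_hammingDist_eq_distToCode hC.minDist.nonempty x
  have h0 : 0 ∈ Equiv.addRight c '' C := ⟨c, hc, ZModModule.add_self c⟩
  obtain ⟨a, b, hab, ha, hb⟩ := exists_ne_apply_eq_one (x + c)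
  obtain ⟨σ, hσa, hσb, hσ⟩ :=
    (hC.image (isHammingAut_addRight c)).exists_permuteCoords_image_eq_nordstromRobinson h0 hab
  have hf := (isHammingAut_permuteCoords σ).mul (isHammingAut_addRight c)
  have hfC : (permuteCoords σ * Equiv.addRight c) '' C = nordstromRobinson := by
    rw [← hσ, ← Set.image_comp, Equiv.Perm.coe_mul]
  have dist_eq : distToCode nordstromRobinson ((permuteCoords σ * Equiv.addRight c) x) =
      hammingNorm (x + c) := by
    rw [← hfC, hf.distToCode_image, ← hcx, hammingDist_eq_hammingNorm_add]
  refine ⟨_, hf, hfC, ?_, fun h => ?_, fun h => ?_⟩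
  · exact (hammingNorm_permuteCoords σ (x + c)).trans dist_eq.symm
  · rw [← hσa]
    exact (permuteCoords_apply_apply σ (x + c) a).trans (ha (dist_eq ▸ h))
  · rw [← hσb]
    exact (permuteCoords_apply_apply σ (x + c) b).trans (hb (dist_eq ▸ h))

theorem IsNormalized.hammingNorm_add_single (hx : IsNormalized C x) (h : 0 < distToCode C x) :
    hammingNorm (x + Pi.single 0 1) + 1 = distToCode C x :=
  (hammingNorm_add_single_add_one (hx.apply_zero h)).trans hx.hammingNorm_eq

theorem IsNormalized.hammingNorm_add_single_add_single (hx : IsNormalized C x)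
    (h : 1 < distToCode C x) :
    hammingNorm (x + Pi.single 0 1 + Pi.single 1 1) + 2 = distToCode C x := by
  have apply_one : (x + Pi.single 0 1 : Fin 15 → ZMod 2) 1 = 1 := by simpa using hx.apply_one h
  rw [← hx.hammingNorm_add_single (by omega), ← hammingNorm_add_single_add_one apply_one]

theorem IsCRCode.single_unique (hC : IsCRCode C) (hx : distToCode C x = 2) {s t : Fin 15}
    (hs : distToCode C (x + Pi.single s 1) = 3) (ht : distToCode C (x + Pi.single t 1) = 3) :
    s = t :=
  Finset.card_le_one.mp (hC.cellDegree_three_eq_one hx).le s (by simpa using hs) t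
    (by simpa using ht)

theorem IsNormalized.exists_eq_of_distToCode_eq_three (hx : IsNormalized C x)
    (h : distToCode C x = 3) : ∃ t, x = Pi.single 0 1 + Pi.single 1 1 + Pi.single t 1 := by
  have norm_eq := (hx.hammingNorm_add_single_add_single (by omega)).trans h
  obtain ⟨t, ht⟩ := exists_eq_single_of_hammingNorm_eq_one (Nat.add_right_cancel norm_eq)
  refine ⟨t, ?_⟩
  rw [← ht, add_assoc x, add_left_comm, ZModModule.add_self, add_zero]

theorem IsNormalized.eq (hC : IsCRCode C) (h0 : 0 ∈ C) (hx : IsNormalized C x)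
    (hy : IsNormalized C y) (hxy : distToCode C x = distToCode C y) : x = y := by
  have lt_four := hC.distToCode_lt_four x
  have eq_of_add {z} (hxz : hammingNorm (x + z) = 0) (hyz : hammingNorm (y + z) = 0) : x = y :=
    add_right_cancel ((hammingNorm_eq_zero.mp hxz).trans (hammingNorm_eq_zero.mp hyz).symm)
  obtain h | h | h | h : distToCode C x = 0 ∨ distToCode C x = 1 ∨ distToCode C x = 2 ∨
    distToCode C x = 3 := by omega
  · have norm_x := hx.hammingNorm_eq
    have norm_y := hy.hammingNorm_eq
    exact eq_of_add (z := 0) (by rw [add_zero]; omega) (by rw [add_zero]; omega)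
  · have norm_x := hx.hammingNorm_add_single (by omega)
    have norm_y := hy.hammingNorm_add_single (by omega)
    exact eq_of_add (z := Pi.single 0 1) (by omega) (by omega)
  · have norm_x := hx.hammingNorm_add_single_add_single (by omega)
    have norm_y := hy.hammingNorm_add_single_add_single (by omega)
    rw [add_assoc] at norm_x norm_y
    exact eq_of_add (z := Pi.single 0 1 + Pi.single 1 1) (by omega) (by omega)
  · obtain ⟨s, rfl⟩ := hx.exists_eq_of_distToCode_eq_three h
    obtain ⟨t, rfl⟩ := hy.exists_eq_of_distToCode_eq_three (hxy ▸ h)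
    have weight : hammingDist (Pi.single 0 1 + Pi.single 1 1 : Fin 15 → ZMod 2) 0 = 2 := by decide
    have dist : distToCode C (Pi.single 0 1 + Pi.single 1 1) = 2 :=
      (hC.minDist.distToCode_eq_hammingDist h0 (by omega)).trans weight
    rw [hC.single_unique dist h (hxy ▸ h)]

theorem zero_mem_nordstromRobinson : 0 ∈ nordstromRobinson :=
  ⟨0, 0, 0, by decide⟩

end NormalForm

end BinaryCode

/-- Every binary completely regular code of length 15 with minimum distance 5 is
completely transitive. -/
theorem stmt_3 (C : Set (Fin 15 → ZMod 2)) (hC : C.Nonempty)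
    (hreg : IsCompletelyRegular C) (hd : IsMinDist C 5) :
    IsCompletelyTransitive C := by
  have hCR : BinaryCode.IsCRCode C := ⟨hreg, hd⟩
  refine BinaryCode.isCompletelyTransitive_of_forall_exists fun x y hxy => ?_
  obtain ⟨f, hf, hfC, hfx⟩ := hCR.exists_isNormalized x
  obtain ⟨g, hg, hgC, hgy⟩ := hCR.exists_isNormalized y
  have dist_eq : distToCode BinaryCode.nordstromRobinson (f x) =
      distToCode BinaryCode.nordstromRobinson (g y) := by
    rw [← hfC, hf.distToCode_image, hxy, ← hg.distToCode_image, hgC, hfC]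
  have fx_eq_gy : f x = g y :=
    hfx.eq (hfC ▸ hCR.image hf) BinaryCode.zero_mem_nordstromRobinson hgy dist_eq
  refine ⟨g⁻¹ * f, hg.inv.mul hf, ?_, ?_⟩
  · rw [Equiv.Perm.coe_mul, Set.image_comp, hfC, ← hgC, ← Set.image_comp, ← Equiv.Perm.coe_mul,
      inv_mul_cancel, Equiv.Perm.coe_one, Set.image_id]
  · rw [Equiv.Perm.mul_apply, fx_eq_gy, Equiv.Perm.inv_def, Equiv.symm_apply_apply]
end

section
/- Every binary completely regular code of length 16 with minimum distance 6 has exactly 256 codewords. -/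
open Set

/-!
Write `C_j` for the vertices at distance `j` from `C`, and `B(j, k)` for the number of codewords
at distance `k` from a vertex of `C_j`; put `λ = B(3, 3)`. The codewords at distance `3` from a
vertex of `C_3`, seen from that vertex, have pairwise disjoint supports, so that vertex has
`3λ ≤ 16` neighbours in `C_2`, and a vertex halfway between codewords at distance `6` gives `λ ≥ 2`.
Counting the pairs of a neighbour of a fixed vertex of `C_2` and a codeword at distance `3` from
that neighbour gives `4 B(2, 4) + 14 = 14 λ`, so `λ` is odd: it is `3` or `5`.

If `λ = 3`, the same count around vertices of `C_3` and `C_4`, read modulo `5`, shows that a vertex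
of `C_4` has `3` codewords at distance `4` and `4` neighbours in `C_3`. Each such codeword has its
support inside the set of these `4` directions, so the three codewords coincide, a contradiction.
If `λ = 5`, the intersection array is `{16, 15, 14, 1; 1, 2, 15, 16}`, and comparing the sizes of
consecutive layers gives `256 |C| = 2 ^ 16`.
-/

open scoped Finset

section Flip

variable {m : ℕ}

/-- The neighbour of `x` in the Hamming graph along the `i`-th coordinate direction. -/
def flipCoord (x : Fin m → ZMod 2) (i : Fin m) : Fin m → ZMod 2 :=
  x + Pi.single i 1

/-- The coordinates in which `x` and `c` differ: the support of the word `x - c`. -/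
def diffSupport (x c : Fin m → ZMod 2) : Finset (Fin m) :=
  {i | x i ≠ c i}

@[simp]
theorem mem_diffSupport {x c : Fin m → ZMod 2} {i : Fin m} :
    i ∈ diffSupport x c ↔ x i ≠ c i := by
  simp [diffSupport]

theorem card_diffSupport (x c : Fin m → ZMod 2) : #(diffSupport x c) = hammingDist x c :=
  rfl

theorem flipCoord_flipCoord (x : Fin m → ZMod 2) (i : Fin m) :
    flipCoord (flipCoord x i) i = x := by
  rw [flipCoord, flipCoord, add_assoc, ZModModule.add_self, add_zero]

theorem flipCoord_right_comm (x : Fin m → ZMod 2) (i j : Fin m) :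
    flipCoord (flipCoord x i) j = flipCoord (flipCoord x j) i :=
  add_right_comm _ _ _

theorem zmod_two_add_one_ne_iff : ∀ a b : ZMod 2, a + 1 ≠ b ↔ a = b := by
  decide

theorem hammingDist_flipCoord_of_eq {x c : Fin m → ZMod 2} {i : Fin m} (h : x i = c i) :
    hammingDist (flipCoord x i) c = hammingDist x c + 1 := by
  have support_eq : diffSupport (flipCoord x i) c = insert i (diffSupport x c) := by
    ext j
    rw [Finset.mem_insert, mem_diffSupport, mem_diffSupport]
    obtain rfl | hj := eq_or_ne j i
    · simpa [flipCoord] using (zmod_two_add_one_ne_iff _ _).2 h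
    · simp [flipCoord, hj]
  rw [← card_diffSupport, support_eq, Finset.card_insert_of_notMem (by simp [h]), card_diffSupport]

theorem hammingDist_flipCoord_of_ne {x c : Fin m → ZMod 2} {i : Fin m} (h : x i ≠ c i) :
    hammingDist (flipCoord x i) c + 1 = hammingDist x c := by
  have hi : flipCoord x i i = c i := by
    simpa [flipCoord] using not_not.1 (mt (zmod_two_add_one_ne_iff (x i) (c i)).1 h)
  rw [← hammingDist_flipCoord_of_eq hi, flipCoord_flipCoord]

theorem card_filter_eq_sub_hammingDist (x c : Fin m → ZMod 2) :
    #{i | x i = c i} = m - hammingDist x c := by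
  have := Finset.card_filter_add_card_filter_not (s := Finset.univ) fun i => x i = c i
  rw [Finset.card_univ, Fintype.card_fin] at this
  exact Nat.eq_sub_of_add_eq this

theorem card_filter_hammingDist_flipCoord (x c : Fin m → ZMod 2) (k : ℕ) :
    #{i | hammingDist (flipCoord x i) c = k + 1} =
      (k + 2) * (if hammingDist x c = k + 2 then 1 else 0) +
        (m - k) * (if hammingDist x c = k then 1 else 0) := by
  have flip_iff (i : Fin m) : hammingDist (flipCoord x i) c = k + 1 ↔
      x i ≠ c i ∧ hammingDist x c = k + 2 ∨ x i = c i ∧ hammingDist x c = k := by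
    by_cases h : x i = c i
    · simp [h, hammingDist_flipCoord_of_eq h]
    · simp [h, ← hammingDist_flipCoord_of_ne h]
  simp only [flip_iff]
  by_cases h₂ : hammingDist x c = k + 2
  · simp [h₂, ← hammingDist.eq_def]
  by_cases h₀ : hammingDist x c = k
  · simp [h₀, card_filter_eq_sub_hammingDist]
  · simp [h₀, h₂]

theorem eq_of_diffSupport_eq {x c c' : Fin m → ZMod 2}
    (h : diffSupport x c = diffSupport x c') : c = c' := by
  funext i
  have two_values : ∀ a b b' : ZMod 2, (a ≠ b ↔ a ≠ b') → b = b' := by decide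
  exact two_values (x i) _ _ (by simpa using Finset.ext_iff.1 h i)

theorem exists_hammingDist_eq_and_eq {c c' : Fin m → ZMod 2} {a b : ℕ}
    (h : hammingDist c c' = a + b) : ∃ x, hammingDist x c = a ∧ hammingDist x c' = b := by
  obtain ⟨S, hS, hScard⟩ := Finset.exists_subset_card_eq
    (by rw [card_diffSupport]; lia : a ≤ #(diffSupport c c'))
  refine ⟨S.piecewise c' c, ?_, ?_⟩
  · have support_eq : diffSupport (S.piecewise c' c) c = S := by
      ext i
      by_cases hi : i ∈ S
      · simpa [hi] using (mem_diffSupport.1 (hS hi)).symm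
      · simp [hi]
    rw [← card_diffSupport, support_eq, hScard]
  · have support_eq : diffSupport (S.piecewise c' c) c' = diffSupport c c' \ S := by
      ext i
      by_cases hi : i ∈ S <;> simp [hi]
    rw [← card_diffSupport, support_eq, Finset.card_sdiff_of_subset hS, card_diffSupport, hScard]
    lia

end Flip

section Distance

variable {m : ℕ} {C : Set (Fin m → ZMod 2)} {x c : Fin m → ZMod 2} {d k : ℕ}

theorem distToCode_le (x : Fin m → ZMod 2) (hc : c ∈ C) : distToCode C x ≤ hammingDist x c :=
  Nat.sInf_le ⟨c, hc, rfl⟩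

theorem exists_hammingDist_eq_distToCode (hC : C.Nonempty) (x : Fin m → ZMod 2) :
    ∃ c ∈ C, hammingDist x c = distToCode C x :=
  have ⟨c, hc⟩ := hC
  Nat.sInf_mem (s := {d | ∃ c ∈ C, hammingDist x c = d}) ⟨_, c, hc, rfl⟩

theorem distToCode_eq_zero_iff (hC : C.Nonempty) : distToCode C x = 0 ↔ x ∈ C := by
  constructor
  · intro h
    obtain ⟨c, hc, hxc⟩ := exists_hammingDist_eq_distToCode hC x
    rwa [hammingDist_eq_zero.1 (hxc.trans h)]
  · intro h
    simpa using distToCode_le x h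

theorem distToCode_flipCoord_le (C : Set (Fin m → ZMod 2)) (x : Fin m → ZMod 2) (i : Fin m) :
    distToCode C (flipCoord x i) ≤ distToCode C x + 1 := by
  obtain rfl | hC := C.eq_empty_or_nonempty
  · simp [distToCode]
  obtain ⟨c, hc, hxc⟩ := exists_hammingDist_eq_distToCode hC x
  have hle := distToCode_le (flipCoord x i) hc
  by_cases hi : x i = c i
  · have := hammingDist_flipCoord_of_eq hi
    lia
  · have := hammingDist_flipCoord_of_ne hi
    lia

theorem distToCode_le_flipCoord (C : Set (Fin m → ZMod 2)) (x : Fin m → ZMod 2) (i : Fin m) :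
    distToCode C x ≤ distToCode C (flipCoord x i) + 1 := by
  simpa only [flipCoord_flipCoord] using distToCode_flipCoord_le C (flipCoord x i) i

/-- The coordinate directions from `x` into the `j`-th cell of the distance partition. On a
completely regular code the cardinality of this set is an intersection number. -/
noncomputable def dirsTo (C : Set (Fin m → ZMod 2)) (x : Fin m → ZMod 2) (j : ℕ) :
    Finset (Fin m) :=
  {i | distToCode C (flipCoord x i) = j}

@[simp]
theorem mem_dirsTo {i : Fin m} {j : ℕ} :
    i ∈ dirsTo C x j ↔ distToCode C (flipCoord x i) = j := by
  simp [dirsTo]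

theorem diffSupport_subset_dirsTo (hx : distToCode C x = d + 1) (hc : c ∈ C)
    (hxc : hammingDist x c = d + 1) : diffSupport x c ⊆ dirsTo C x d := by
  intro i hi
  have hflip := hammingDist_flipCoord_of_ne (mem_diffSupport.1 hi)
  have hle := distToCode_le (flipCoord x i) hc
  have hge := distToCode_le_flipCoord C x i
  rw [mem_dirsTo]
  lia

theorem exists_distToCode_flipCoord_eq (hx : distToCode C x = d + 1) :
    ∃ i, distToCode C (flipCoord x i) = d := by
  obtain ⟨_, c₀, hc₀, -⟩ := Nat.nonempty_of_sInf_eq_succ hx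
  obtain ⟨c, hc, hxc⟩ := exists_hammingDist_eq_distToCode ⟨c₀, hc₀⟩ x
  rw [hx] at hxc
  obtain ⟨i, hi⟩ := Finset.card_pos.1 (hxc.symm ▸ d.succ_pos : 0 < hammingDist x c)
  exact ⟨i, mem_dirsTo.1 (diffSupport_subset_dirsTo hx hc hxc hi)⟩

theorem exists_distToCode_eq_of_le (h : d ≤ distToCode C x) : ∃ y, distToCode C y = d := by
  induction h using Nat.decreasingInduction with
  | self => exact ⟨x, rfl⟩
  | of_succ n _ ih =>
    obtain ⟨y, hy⟩ := ih
    obtain ⟨i, hi⟩ := exists_distToCode_flipCoord_eq hy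
    exact ⟨_, hi⟩

theorem sum_comp_distToCode_flipCoord (hx : distToCode C x = d + 1) (f : ℕ → ℕ) :
    ∑ i, f (distToCode C (flipCoord x i)) =
      #(dirsTo C x d) * f d + #(dirsTo C x (d + 1)) * f (d + 1) +
        #(dirsTo C x (d + 2)) * f (d + 2) := by
  simp only [dirsTo, Finset.card_filter, Finset.sum_mul, ← Finset.sum_add_distrib]
  refine Finset.sum_congr rfl fun i _ => ?_
  have hle := distToCode_flipCoord_le C x i
  have hge := distToCode_le_flipCoord C x i
  obtain h | h | h : distToCode C (flipCoord x i) = d ∨ distToCode C (flipCoord x i) = d + 1 ∨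
      distToCode C (flipCoord x i) = d + 2 := by lia
  all_goals simp [h]

theorem card_dirsTo_add_add (hx : distToCode C x = d + 1) :
    #(dirsTo C x d) + #(dirsTo C x (d + 1)) + #(dirsTo C x (d + 2)) = m := by
  simpa using (sum_comp_distToCode_flipCoord hx fun _ => 1).symm

/-- The cell `C_j` of the distance partition of `C`. -/
noncomputable def layer (C : Set (Fin m → ZMod 2)) (j : ℕ) : Finset (Fin m → ZMod 2) :=
  {x | distToCode C x = j}

@[simp]
theorem mem_layer {j : ℕ} : x ∈ layer C j ↔ distToCode C x = j := by
  simp [layer]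

theorem card_layer_zero (hC : C.Nonempty) : #(layer C 0) = C.ncard := by
  rw [← Set.ncard_coe_finset]
  congr 1
  ext x
  simp [distToCode_eq_zero_iff hC]

theorem sum_card_dirsTo_comm (C : Set (Fin m → ZMod 2)) (a b : ℕ) :
    ∑ x ∈ layer C a, #(dirsTo C x b) = ∑ y ∈ layer C b, #(dirsTo C y a) := by
  simp only [← Finset.card_sigma]
  apply Finset.card_nbij' (fun p => ⟨flipCoord p.1 p.2, p.2⟩) (fun p => ⟨flipCoord p.1 p.2, p.2⟩)
  all_goals simp +contextual [MapsTo, LeftInvOn, RightInvOn, flipCoord_flipCoord]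

theorem card_layer_mul_eq_card_layer_mul {a b p q : ℕ}
    (hp : ∀ x, distToCode C x = a → #(dirsTo C x b) = p)
    (hq : ∀ y, distToCode C y = b → #(dirsTo C y a) = q) :
    #(layer C a) * p = #(layer C b) * q := by
  rw [← Finset.sum_const_nat fun x hx => hp x (mem_layer.1 hx),
    ← Finset.sum_const_nat fun y hy => hq y (mem_layer.1 hy), sum_card_dirsTo_comm]

theorem sum_card_layer (h : ∀ x, distToCode C x < k) :
    ∑ j ∈ Finset.range k, #(layer C j) = 2 ^ m := by
  simp only [layer]
  rw [← Finset.card_eq_sum_card_fiberwise (by simpa [MapsTo] using h)]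
  simp

theorem distToCode_flipCoord_eq_of_unique_up
    (h : ∀ y, distToCode C y = d + 1 → #(dirsTo C y (d + 1)) = 0 ∧ #(dirsTo C y (d + 2)) = 1)
    (hx : distToCode C x = d + 2) (i : Fin m) : distToCode C (flipCoord x i) = d + 1 := by
  obtain ⟨j, hj⟩ := exists_distToCode_flipCoord_eq hx
  obtain rfl | hij := eq_or_ne i j
  · exact hj
  obtain ⟨no_level, unique_up⟩ := h _ hj
  -- The `i`-th neighbour of `flipCoord x j` can only lie in layer `d`, and it is also a neighbour
  -- of `flipCoord x i`.
  have not_level : distToCode C (flipCoord (flipCoord x j) i) ≠ d + 1 := fun hi =>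
    Finset.eq_empty_iff_forall_notMem.1 (Finset.card_eq_zero.1 no_level) i (mem_dirsTo.2 hi)
  have not_up : distToCode C (flipCoord (flipCoord x j) i) ≠ d + 2 := fun hi =>
    hij <| Finset.card_le_one.1 unique_up.le i (mem_dirsTo.2 hi) j <| by
      rwa [mem_dirsTo, flipCoord_flipCoord]
  have hstep := distToCode_flipCoord_le C (flipCoord x j) i
  have hback := distToCode_le_flipCoord C (flipCoord x i) j
  have hup := distToCode_le_flipCoord C x i
  have hdown := distToCode_le_flipCoord C (flipCoord x j) i
  rw [flipCoord_right_comm] at hback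
  lia

theorem distToCode_le_of_forall_flipCoord
    (h : ∀ x, distToCode C x = d + 1 → ∀ i, distToCode C (flipCoord x i) = d)
    (x : Fin m → ZMod 2) : distToCode C x ≤ d + 1 := by
  by_contra! hlt
  obtain ⟨y, hy⟩ := exists_distToCode_eq_of_le (Nat.succ_le_of_lt hlt)
  obtain ⟨i, hi⟩ := exists_distToCode_flipCoord_eq hy
  have := h _ hi i
  rw [flipCoord_flipCoord] at this
  lia

end Distance

section OuterDistribution

variable {m : ℕ} {C : Set (Fin m → ZMod 2)} {x : Fin m → ZMod 2} {d j k : ℕ}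

/-- The outer distribution of `C`: the number of codewords at distance `k` from `x`. -/
noncomputable def outerDist (C : Set (Fin m → ZMod 2)) (x : Fin m → ZMod 2) (k : ℕ) : ℕ :=
  {c ∈ C | hammingDist x c = k}.ncard

theorem outerDist_eq_zero_of_lt (h : k < distToCode C x) : outerDist C x k = 0 := by
  rw [outerDist, Set.ncard_eq_zero, Set.sep_eq_empty_iff_mem_false]
  rintro c hc rfl
  exact h.not_ge (distToCode_le x hc)

open Classical in
theorem outerDist_eq_sum (C : Set (Fin m → ZMod 2)) (x : Fin m → ZMod 2) (k : ℕ) :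
    outerDist C x k = ∑ c ∈ C.toFinset, if hammingDist x c = k then 1 else 0 := by
  rw [outerDist, ← Finset.card_filter, ← Set.ncard_coe_finset]
  congr 1
  ext c
  simp

theorem sum_outerDist_flipCoord (C : Set (Fin m → ZMod 2)) (x : Fin m → ZMod 2) (k : ℕ) :
    ∑ i, outerDist C (flipCoord x i) (k + 1) =
      (k + 2) * outerDist C x (k + 2) + (m - k) * outerDist C x k := by
  simp only [outerDist_eq_sum, Finset.mul_sum, ← Finset.sum_add_distrib]
  rw [Finset.sum_comm]
  refine Finset.sum_congr rfl fun c _ => ?_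
  rw [← card_filter_hammingDist_flipCoord, Finset.card_filter]

theorem outerDist_le_one_of_card_dirsTo_le (hx : distToCode C x = d + 1)
    (hcard : #(dirsTo C x d) ≤ d + 1) : outerDist C x (d + 1) ≤ 1 := by
  have support_eq {c : Fin m → ZMod 2} (hc : c ∈ C) (hxc : hammingDist x c = d + 1) :
      diffSupport x c = dirsTo C x d :=
    Finset.eq_of_subset_of_card_le (diffSupport_subset_dirsTo hx hc hxc) (hcard.trans_eq hxc.symm)
  rw [outerDist, Set.ncard_le_one]
  rintro c ⟨hc, hxc⟩ c' ⟨hc', hxc'⟩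
  exact eq_of_diffSupport_eq ((support_eq hc hxc).trans (support_eq hc' hxc').symm)

/-- The reduced outer distribution matrix of a completely regular code: row `j` is the common outer
distribution of the vertices at distance `j` from `C`, and zero beyond the covering radius. -/
noncomputable def reducedOuterDist (C : Set (Fin m → ZMod 2)) : ℕ → ℕ → ℕ :=
  Function.extend (distToCode C) (outerDist C) 0

namespace IsCompletelyRegular

theorem outerDist_eq (hreg : IsCompletelyRegular C) (hx : distToCode C x = j) (k : ℕ) :
    outerDist C x k = reducedOuterDist C j k := by
  have hfactors : (outerDist C).FactorsThrough (distToCode C) :=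
    fun y z h => funext (hreg y z h)
  rw [reducedOuterDist, ← hx, hfactors.extend_apply]

theorem reducedOuterDist_eq_zero (hreg : IsCompletelyRegular C)
    (h : ∀ x, distToCode C x = j → outerDist C x k = 0) : reducedOuterDist C j k = 0 := by
  by_cases hj : ∃ x, distToCode C x = j
  · obtain ⟨x, hx⟩ := hj
    rw [← hreg.outerDist_eq hx, h x hx]
  · rw [reducedOuterDist, Function.extend_apply' _ _ _ hj]
    rfl

theorem reducedOuterDist_eq_zero_of_lt (hreg : IsCompletelyRegular C) (h : k < j) :
    reducedOuterDist C j k = 0 :=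
  hreg.reducedOuterDist_eq_zero fun _ hx => outerDist_eq_zero_of_lt (hx ▸ h)

theorem reducedOuterDist_recurrence (hreg : IsCompletelyRegular C)
    (hx : distToCode C x = d + 1) (k : ℕ) :
    (k + 2) * reducedOuterDist C (d + 1) (k + 2) + (m - k) * reducedOuterDist C (d + 1) k =
      #(dirsTo C x d) * reducedOuterDist C d (k + 1) +
        #(dirsTo C x (d + 1)) * reducedOuterDist C (d + 1) (k + 1) +
          #(dirsTo C x (d + 2)) * reducedOuterDist C (d + 2) (k + 1) := by
  rw [← sum_comp_distToCode_flipCoord hx fun j => reducedOuterDist C j (k + 1),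
    ← hreg.outerDist_eq hx, ← hreg.outerDist_eq hx, ← sum_outerDist_flipCoord]
  exact Finset.sum_congr rfl fun i _ => hreg.outerDist_eq rfl _

theorem card_dirsTo_mul (hreg : IsCompletelyRegular C) (hx : distToCode C x = d + 2) :
    #(dirsTo C x (d + 1)) * reducedOuterDist C (d + 1) (d + 1) =
      (d + 2) * reducedOuterDist C (d + 2) (d + 2) := by
  have h := hreg.reducedOuterDist_recurrence hx d
  simpa [hreg.reducedOuterDist_eq_zero_of_lt] using h.symm

end IsCompletelyRegular

end OuterDistribution

namespace IsMinDist

section General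

variable {m δ : ℕ} {C : Set (Fin m → ZMod 2)} {x c c' : Fin m → ZMod 2} {d j k : ℕ}

theorem nonempty_s4 (hd : IsMinDist C δ) : C.Nonempty :=
  have ⟨c, hc, _⟩ := hd.2
  ⟨c, hc⟩

theorem eq_of_hammingDist_add_lt_s4 (hd : IsMinDist C δ) (hc : c ∈ C) (hc' : c' ∈ C)
    (h : hammingDist x c + hammingDist x c' < δ) : c = c' := by
  by_contra hne
  exact absurd (hd.1 c hc c' hc' hne)
    ((hammingDist_triangle_left c c' x).trans_lt h).not_ge

theorem distToCode_eq_hammingDist_s4 (hd : IsMinDist C δ) (hc : c ∈ C)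
    (h : 2 * hammingDist x c ≤ δ) : distToCode C x = hammingDist x c := by
  refine (distToCode_le x hc).antisymm (not_lt.1 fun hlt => ?_)
  obtain ⟨c', hc', hxc'⟩ := exists_hammingDist_eq_distToCode hd.nonempty_s4 x
  obtain rfl := hd.eq_of_hammingDist_add_lt_s4 hc hc' (x := x) (by lia)
  exact hlt.ne hxc'.symm

theorem outerDist_self (hd : IsMinDist C δ) (hx : distToCode C x = j) (hj : 2 * j < δ) :
    outerDist C x j = 1 := by
  obtain ⟨c, hc, hxc⟩ := exists_hammingDist_eq_distToCode hd.nonempty_s4 x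
  rw [outerDist, Set.ncard_eq_one]
  refine ⟨c, Set.eq_singleton_iff_unique_mem.2 ⟨⟨hc, hxc.trans hx⟩, ?_⟩⟩
  rintro c' ⟨hc', hxc'⟩
  exact hd.eq_of_hammingDist_add_lt_s4 hc' hc (x := x) (by lia)

theorem outerDist_eq_zero (hd : IsMinDist C δ) (hx : distToCode C x = j) (hjk : k ≠ j)
    (h : j + k < δ) : outerDist C x k = 0 := by
  obtain ⟨c, hc, hxc⟩ := exists_hammingDist_eq_distToCode hd.nonempty_s4 x
  rw [outerDist, Set.ncard_eq_zero, Set.sep_eq_empty_iff_mem_false]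
  intro c' hc' hxc'
  obtain rfl := hd.eq_of_hammingDist_add_lt_s4 hc hc' (x := x) (by lia)
  lia

theorem card_dirsTo_pred (hd : IsMinDist C δ) (hx : distToCode C x = d + 1)
    (h : 2 * (d + 1) < δ) : #(dirsTo C x d) = d + 1 := by
  obtain ⟨c, hc, hxc⟩ := exists_hammingDist_eq_distToCode hd.nonempty_s4 x
  rw [hx] at hxc
  rw [← hxc, ← card_diffSupport]
  refine congrArg Finset.card ((diffSupport_subset_dirsTo hx hc hxc).antisymm' fun i hi => ?_)
  rw [mem_diffSupport]
  intro hi_eq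
  have hflip := hammingDist_flipCoord_of_eq hi_eq
  obtain ⟨c', hc', hxc'⟩ := exists_hammingDist_eq_distToCode hd.nonempty_s4 (flipCoord x i)
  rw [mem_dirsTo.1 hi] at hxc'
  obtain rfl := hd.eq_of_hammingDist_add_lt_s4 hc hc' (x := flipCoord x i) (by lia)
  lia

theorem card_dirsTo_succ (hd : IsMinDist C δ) (hx : distToCode C x = d)
    (h : 2 * (d + 1) ≤ δ) : #(dirsTo C x (d + 1)) = m - d := by
  obtain ⟨c, hc, hxc⟩ := exists_hammingDist_eq_distToCode hd.nonempty_s4 x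
  rw [← hx, ← hxc, ← card_filter_eq_sub_hammingDist]
  congr 1
  ext i
  rw [mem_dirsTo, Finset.mem_filter_univ]
  by_cases hi : x i = c i
  · have hflip := hammingDist_flipCoord_of_eq hi
    simp [hi, hd.distToCode_eq_hammingDist_s4 hc (x := flipCoord x i) (by lia), hflip]
  · have hflip := hammingDist_flipCoord_of_ne hi
    have hle := distToCode_le (flipCoord x i) hc
    simp only [hi, iff_false]
    lia

theorem card_layer (hd : IsMinDist C δ) (h : 2 * j < δ) :
    #(layer C j) = C.ncard * m.choose j := by
  induction j with
  | zero => simp [card_layer_zero hd.nonempty_s4]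
  | succ j ih =>
    have hcount := card_layer_mul_eq_card_layer_mul
      (fun x hx => hd.card_dirsTo_succ hx (d := j) (by lia))
      (fun y hy => hd.card_dirsTo_pred hy h)
    apply Nat.eq_of_mul_eq_mul_right j.succ_pos
    rw [← hcount, ih (by lia), mul_assoc, mul_assoc, Nat.choose_succ_right_eq]

theorem exists_two_le_outerDist (hd : IsMinDist C (2 * d)) :
    ∃ x, distToCode C x = d ∧ 2 ≤ outerDist C x d := by
  obtain ⟨c, hc, c', hc', hne, hcc'⟩ := hd.2
  obtain ⟨x, hxc, hxc'⟩ := exists_hammingDist_eq_and_eq (hcc'.trans (two_mul d))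
  refine ⟨x, (hd.distToCode_eq_hammingDist_s4 hc (by lia)).trans hxc, ?_⟩
  rw [← Set.ncard_pair hne, outerDist]
  refine Set.ncard_le_ncard ?_ (Set.toFinite _)
  rintro _ (rfl | rfl)
  exacts [⟨hc, hxc⟩, ⟨hc', hxc'⟩]

theorem reducedOuterDist_eq_zero (hd : IsMinDist C δ) (hreg : IsCompletelyRegular C)
    (hjk : k ≠ j) (h : j + k < δ) : reducedOuterDist C j k = 0 :=
  hreg.reducedOuterDist_eq_zero fun _ hx => hd.outerDist_eq_zero hx hjk h

theorem card_dirsTo_pred_eq_mul (hd : IsMinDist C δ) (hreg : IsCompletelyRegular C)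
    (hx : distToCode C x = d + 2) (h : 2 * (d + 1) < δ) :
    #(dirsTo C x (d + 1)) = (d + 2) * reducedOuterDist C (d + 2) (d + 2) := by
  obtain ⟨i, hi⟩ := exists_distToCode_flipCoord_eq hx
  rw [← hreg.card_dirsTo_mul hx, ← hreg.outerDist_eq hi, hd.outerDist_self hi h, mul_one]

theorem mul_reducedOuterDist_succ (hd : IsMinDist C δ) (hreg : IsCompletelyRegular C)
    (hx : distToCode C x = d + 2) (h : 2 * d + 3 < δ) :
    (d + 3) * reducedOuterDist C (d + 2) (d + 3) =
      #(dirsTo C x (d + 2)) * reducedOuterDist C (d + 2) (d + 2) := by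
  have hpacking : reducedOuterDist C (d + 1) (d + 2) = 0 :=
    hd.reducedOuterDist_eq_zero hreg (by lia) (by lia)
  simpa [hpacking, hreg.reducedOuterDist_eq_zero_of_lt] using
    hreg.reducedOuterDist_recurrence hx (d + 1)

theorem mul_reducedOuterDist_add_sub (hd : IsMinDist C (2 * d + 4)) (hreg : IsCompletelyRegular C)
    (hx : distToCode C x = d + 1) :
    (d + 3) * reducedOuterDist C (d + 1) (d + 3) + (m - (d + 1)) =
      (m - (d + 1)) * reducedOuterDist C (d + 2) (d + 2) := by
  have hself : reducedOuterDist C (d + 1) (d + 1) = 1 := by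
    rw [← hreg.outerDist_eq hx, hd.outerDist_self hx (by lia)]
  have hdown : reducedOuterDist C d (d + 2) = 0 :=
    hd.reducedOuterDist_eq_zero hreg (by lia) (by lia)
  have hlevel : reducedOuterDist C (d + 1) (d + 2) = 0 :=
    hd.reducedOuterDist_eq_zero hreg (by lia) (by lia)
  simpa [hself, hdown, hlevel, hd.card_dirsTo_succ hx (by lia)] using
    hreg.reducedOuterDist_recurrence hx (d + 1)

end General

section LengthSixteen

variable {C : Set (Fin 16 → ZMod 2)} {x : Fin 16 → ZMod 2}
  (hd : IsMinDist C 6) (hreg : IsCompletelyRegular C)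
include hd hreg

theorem reducedOuterDist_three_three : reducedOuterDist C 3 3 = 3 ∨ reducedOuterDist C 3 3 = 5 := by
  obtain ⟨x, hx, htwo⟩ := hd.exists_two_le_outerDist (d := 3)
  rw [hreg.outerDist_eq hx] at htwo
  obtain ⟨i, hi⟩ := exists_distToCode_flipCoord_eq hx
  have hparity : 4 * reducedOuterDist C 2 4 + 14 = 14 * reducedOuterDist C 3 3 :=
    hd.mul_reducedOuterDist_add_sub hreg hi
  have hdisjoint : #(dirsTo C x 2) = 3 * reducedOuterDist C 3 3 :=
    hd.card_dirsTo_pred_eq_mul hreg hx (by norm_num)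
  have htotal := card_dirsTo_add_add hx
  lia

theorem card_dirsTo_of_reducedOuterDist_eq_three (h33 : reducedOuterDist C 3 3 = 3)
    (hx : distToCode C x = 3) :
    #(dirsTo C x 3) = 0 ∧ #(dirsTo C x 4) = 7 ∨ #(dirsTo C x 3) = 4 ∧ #(dirsTo C x 4) = 3 := by
  have hdown : #(dirsTo C x 2) = 3 * reducedOuterDist C 3 3 :=
    hd.card_dirsTo_pred_eq_mul hreg hx (by norm_num)
  have hlevel : 4 * reducedOuterDist C 3 4 = #(dirsTo C x 3) * reducedOuterDist C 3 3 :=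
    hd.mul_reducedOuterDist_succ hreg hx (by norm_num)
  have htotal := card_dirsTo_add_add hx
  rw [h33] at hdown hlevel
  lia

theorem reducedOuterDist_four_four_of_eq_three (h33 : reducedOuterDist C 3 3 = 3)
    (hx : distToCode C x = 4) : reducedOuterDist C 4 4 = 3 := by
  obtain ⟨i, hi⟩ := exists_distToCode_flipCoord_eq hx
  obtain ⟨j, hj⟩ := exists_distToCode_flipCoord_eq hi
  have h24 : reducedOuterDist C 2 4 = 7 := by
    have : 4 * reducedOuterDist C 2 4 + 14 = 14 * reducedOuterDist C 3 3 :=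
      hd.mul_reducedOuterDist_add_sub hreg hj
    lia
  have h32 : #(dirsTo C (flipCoord x i) 2) = 3 * reducedOuterDist C 3 3 :=
    hd.card_dirsTo_pred_eq_mul hreg hi (by norm_num)
  have h34 : 4 * reducedOuterDist C 3 4 =
      #(dirsTo C (flipCoord x i) 3) * reducedOuterDist C 3 3 :=
    hd.mul_reducedOuterDist_succ hreg hi (by norm_num)
  have hrec : 5 * reducedOuterDist C 3 5 + 13 * reducedOuterDist C 3 3 =
      #(dirsTo C (flipCoord x i) 2) * reducedOuterDist C 2 4 +
        #(dirsTo C (flipCoord x i) 3) * reducedOuterDist C 3 4 +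
          #(dirsTo C (flipCoord x i) 4) * reducedOuterDist C 4 4 :=
    hreg.reducedOuterDist_recurrence hi 3
  rw [h32, h24, h33] at hrec
  have hmod : reducedOuterDist C 4 4 % 5 = 3 := by
    obtain ⟨hlevel, hup⟩ | ⟨hlevel, hup⟩ := hd.card_dirsTo_of_reducedOuterDist_eq_three hreg h33 hi
    · rw [hlevel, hup] at hrec
      lia
    · have : reducedOuterDist C 3 4 = 3 := by lia
      rw [hlevel, hup, this] at hrec
      lia
  have hdown := hreg.card_dirsTo_mul hx
  rw [h33] at hdown
  have htotal := card_dirsTo_add_add hx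
  lia

theorem reducedOuterDist_three_three_ne_three : reducedOuterDist C 3 3 ≠ 3 := by
  intro h33
  obtain ⟨y, hy, -⟩ := hd.exists_two_le_outerDist (d := 3)
  have hup : 0 < #(dirsTo C y 4) := by
    have := hd.card_dirsTo_of_reducedOuterDist_eq_three hreg h33 hy
    lia
  obtain ⟨i, hi⟩ := Finset.card_pos.1 hup
  rw [mem_dirsTo] at hi
  have h44 := hd.reducedOuterDist_four_four_of_eq_three hreg h33 hi
  have hdown := hreg.card_dirsTo_mul hi
  rw [h33, h44] at hdown
  have hle := outerDist_le_one_of_card_dirsTo_le hi (by lia)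
  rw [hreg.outerDist_eq hi, h44] at hle
  lia

theorem card_dirsTo_of_distToCode_eq_three (hx : distToCode C x = 3) :
    #(dirsTo C x 2) = 15 ∧ #(dirsTo C x 3) = 0 ∧ #(dirsTo C x 4) = 1 := by
  have h33 : reducedOuterDist C 3 3 = 5 :=
    (hd.reducedOuterDist_three_three hreg).resolve_left
      (hd.reducedOuterDist_three_three_ne_three hreg)
  have hdown : #(dirsTo C x 2) = 3 * reducedOuterDist C 3 3 :=
    hd.card_dirsTo_pred_eq_mul hreg hx (by norm_num)
  have hlevel : 4 * reducedOuterDist C 3 4 = #(dirsTo C x 3) * reducedOuterDist C 3 3 :=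
    hd.mul_reducedOuterDist_succ hreg hx (by norm_num)
  have htotal := card_dirsTo_add_add hx
  rw [h33] at hdown hlevel
  lia

end LengthSixteen

end IsMinDist

/-- Every binary completely regular code of length 16 with minimum distance 6 has
exactly 256 codewords. -/
theorem stmt_4 (C : Set (Fin 16 → ZMod 2)) (hC : C.Nonempty)
    (hreg : IsCompletelyRegular C) (hd : IsMinDist C 6) :
    C.ncard = 256 := by
  have dirs_three (x : Fin 16 → ZMod 2) (hx : distToCode C x = 3) :=
    hd.card_dirsTo_of_distToCode_eq_three hreg hx
  have neighbours_four (x : Fin 16 → ZMod 2) (hx : distToCode C x = 4) :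
      ∀ i, distToCode C (flipCoord x i) = 3 :=
    distToCode_flipCoord_eq_of_unique_up (fun y hy => (dirs_three y hy).2) hx
  have covering_radius (x : Fin 16 → ZMod 2) : distToCode C x < 5 :=
    Nat.lt_succ_of_le (distToCode_le_of_forall_flipCoord neighbours_four x)
  have count_two_three : #(layer C 2) * 14 = #(layer C 3) * 15 :=
    card_layer_mul_eq_card_layer_mul (fun x hx => hd.card_dirsTo_succ hx le_rfl)
      (fun y hy => (dirs_three y hy).1)
  have count_three_four : #(layer C 3) * 1 = #(layer C 4) * 16 :=
    card_layer_mul_eq_card_layer_mul (fun x hx => (dirs_three x hx).2.2)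
      (fun y hy => by simp [dirsTo, neighbours_four y hy])
  have total := sum_card_layer covering_radius
  have card_layer_two : #(layer C 2) = C.ncard * 120 := hd.card_layer (by norm_num)
  simp only [Finset.sum_range_succ, Finset.sum_range_zero, hd.card_layer (j := 0) (by norm_num),
    hd.card_layer (j := 1) (by norm_num), Nat.choose_zero_right, Nat.choose_one_right] at total
  lia
end

section
/- Every binary completely regular code of length 15 with minimum distance 5 has exactly 256 codewords. -/
open Set

/-!
Move a codeword to `0`. Complete regularity makes the codewords of weights `5` and `6` two-designs,
and every triple of coordinates at distance `2` or `3` from the code lies in a number of codewords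
of weight `6`, and likewise of weight `7`, that depends only on that distance. Counting leaves `21`
or `42` codewords of weight `5`. If there were `21`, the number of codewords of weight `7` through a
triple at distance `3` would be `9` modulo `15` by divisibility, but at most `8` by packing.

Hence there are `42`, and a word at distance `3` from the code has exactly `5` codewords at
distance `3`. Their differences from it partition the `15` coordinates, so no word is further than
`3` from the code. Counting the space by distance to the code gives
`2 ^ 15 = |C| * (1 + 15 + 105 + 7)`.
-/

open scoped Finset symmDiff FinsetFamily

namespace BinaryCode

section Packing

variable {α : Type*} [DecidableEq α]

theorem card_symmDiff_add (s t : Finset α) : #(s ∆ t) + 2 * #(s ∩ t) = #s + #t := by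
  have hunion : #(s ∆ t) = #(s \ t) + #(t \ s) :=
    Finset.card_union_of_disjoint disjoint_sdiff_sdiff
  have hs := Finset.card_sdiff_add_card_inter s t
  have ht := Finset.card_sdiff_add_card_inter t s
  rw [Finset.inter_comm t s] at ht
  lia

theorem card_symmDiff_inter_compl_add [Fintype α] (s t : Finset α) :
    #((s ∆ t) ∩ sᶜ) + #(s ∩ t) = #t := by
  rw [← Finset.card_sdiff_add_card_inter t s, Finset.inter_comm t s]
  congr 2
  ext i
  simp only [Finset.mem_inter, Finset.mem_symmDiff, Finset.mem_compl, Finset.mem_sdiff]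
  tauto

theorem subset_iff_card_le_card_inter {s t : Finset α} : s ⊆ t ↔ #s ≤ #(s ∩ t) := by
  rw [← Finset.inter_eq_left]
  exact ⟨fun h => h.symm ▸ le_rfl, Finset.eq_of_subset_of_card_le Finset.inter_subset_left⟩

theorem card_symmDiff_symmDiff_left (s c d : Finset α) : #((s ∆ c) ∆ (s ∆ d)) = #(c ∆ d) := by
  rw [symmDiff_symmDiff_symmDiff_comm, symmDiff_self, bot_symmDiff]

theorem sum_choose_card_le {ι : Type*} {I : Finset ι} {A : ι → Finset α} {u : Finset α} {t : ℕ}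
    (hsub : ∀ i ∈ I, A i ⊆ u) (hinter : ∀ i ∈ I, ∀ j ∈ I, i ≠ j → #(A i ∩ A j) < t) :
    ∑ i ∈ I, (#(A i)).choose t ≤ (#u).choose t := by
  have hdisj : (I : Set ι).PairwiseDisjoint fun i => (A i).powersetCard t := by
    intro i hi j hj hij
    refine Finset.disjoint_left.mpr fun p hpi hpj => ?_
    obtain ⟨hpi, hpt⟩ := Finset.mem_powersetCard.mp hpi
    have hp := Finset.card_le_card
      (Finset.subset_inter hpi (Finset.mem_powersetCard.mp hpj).1)
    exact absurd (hinter i hi j hj hij) (by lia)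
  simp only [← Finset.card_powersetCard]
  rw [← Finset.card_biUnion hdisj]
  exact Finset.card_le_card
    (Finset.biUnion_subset.mpr fun i hi => Finset.powersetCard_mono (hsub i hi))

end Packing

section Incidence

variable {α : Type*} [DecidableEq α] {ℬ : Finset (Finset α)} {s : Finset α} {j k : ℕ}

/-- The degree of `s` in the block system `ℬ`: the number of blocks containing `s`. -/
def degree (ℬ : Finset (Finset α)) (s : Finset α) : ℕ := #{c ∈ ℬ | s ⊆ c}

/-- The number of blocks of `ℬ` that meet `s` in exactly `k` points. -/
def meetCount (ℬ : Finset (Finset α)) (s : Finset α) (k : ℕ) : ℕ := #{c ∈ ℬ | #(s ∩ c) = k}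

theorem degree_empty (ℬ : Finset (Finset α)) : degree ℬ ∅ = #ℬ := by
  simp [degree]

theorem sum_degree_powersetCard (ℬ : Finset (Finset α)) (u : Finset α) (j : ℕ) :
    ∑ s ∈ u.powersetCard j, degree ℬ s = ∑ c ∈ ℬ, (#(u ∩ c)).choose j := by
  change ∑ s ∈ u.powersetCard j, #(ℬ.bipartiteAbove (· ⊆ ·) s) = _
  rw [Finset.sum_card_bipartiteAbove_eq_sum_card_bipartiteBelow]
  refine Finset.sum_congr rfl fun c _ => ?_
  rw [← Finset.card_powersetCard]
  congr 1
  ext s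
  simp only [Finset.mem_bipartiteBelow, Finset.mem_powersetCard, Finset.subset_inter_iff]
  tauto

theorem sum_degree_powersetCard_univ [Fintype α] (hℬ : (ℬ : Set (Finset α)).Sized k) (j : ℕ) :
    ∑ s ∈ Finset.univ.powersetCard j, degree ℬ s = #ℬ * k.choose j := by
  rw [sum_degree_powersetCard]
  refine Finset.sum_const_nat fun c hc => ?_
  rw [Finset.univ_inter, hℬ hc]

theorem choose_mul_eq_of_degree_eq [Fintype α] (hℬ : (ℬ : Set (Finset α)).Sized k) {r : ℕ}
    (hdeg : ∀ s, #s = j → degree ℬ s = r) :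
    (Fintype.card α).choose j * r = #ℬ * k.choose j := by
  rw [← sum_degree_powersetCard_univ hℬ, ← Finset.card_univ, ← Finset.card_powersetCard]
  exact (Finset.sum_const_nat fun s hs => hdeg s (Finset.mem_powersetCard.mp hs).2).symm

theorem sum_degree_powersetCard_eq_meetCount_add (hs : #s = j + 1) :
    ∑ p ∈ s.powersetCard j, degree ℬ p = meetCount ℬ s j + (j + 1) * degree ℬ s := by
  have hchoose (c : Finset α) : (#(s ∩ c)).choose j =
      (if #(s ∩ c) = j then 1 else 0) + (j + 1) * if s ⊆ c then 1 else 0 := by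
    have hle : #(s ∩ c) ≤ j + 1 := hs ▸ Finset.card_le_card Finset.inter_subset_left
    simp only [subset_iff_card_le_card_inter, hs]
    obtain hlt | heq | heq : #(s ∩ c) < j ∨ #(s ∩ c) = j ∨ #(s ∩ c) = j + 1 := by lia
    · simp [Nat.choose_eq_zero_of_lt hlt, hlt.ne, show ¬ j + 1 ≤ #(s ∩ c) by lia]
    · simp [heq]
    · simp [heq]
  rw [sum_degree_powersetCard, Finset.sum_congr rfl fun c _ => hchoose c, Finset.sum_add_distrib,
    ← Finset.mul_sum, ← Finset.card_filter, ← Finset.card_filter]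
  rfl

end Incidence

section Code

variable {α : Type*} [DecidableEq α] {𝒞 : Finset (Finset α)} {s : Finset α} {δ j k m : ℕ}

/-- A set family, read as a binary code through the supports of its words, all of whose distances
are at least `δ`. -/
def HasMinDist (𝒞 : Finset (Finset α)) (δ : ℕ) : Prop :=
  ∀ c ∈ 𝒞, ∀ d ∈ 𝒞, c ≠ d → δ ≤ #(c ∆ d)

/-- The number of codewords at distance `k` from `s`. -/
def distCount (𝒞 : Finset (Finset α)) (s : Finset α) (k : ℕ) : ℕ := #{c ∈ 𝒞 | #(s ∆ c) = k}

/-- The cell of the distance partition of `𝒞` formed by the words at distance `t` from `𝒞`. -/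
def layer [Fintype α] (𝒞 : Finset (Finset α)) (t : ℕ) : Finset (Finset α) :=
  {s | (∃ c ∈ 𝒞, #(s ∆ c) = t) ∧ ∀ c ∈ 𝒞, t ≤ #(s ∆ c)}

/-- The code is completely regular with outer distribution matrix `B`: a word at distance `t` from
the code has exactly `B t k` codewords at distance `k`. -/
def HasOuterDistribution [Fintype α] (𝒞 : Finset (Finset α)) (B : ℕ → ℕ → ℕ) : Prop :=
  ∀ t, ∀ s ∈ layer 𝒞 t, ∀ k, distCount 𝒞 s k = B t k

theorem mem_layer [Fintype α] {t : ℕ} :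
    s ∈ layer 𝒞 t ↔ (∃ c ∈ 𝒞, #(s ∆ c) = t) ∧ ∀ c ∈ 𝒞, t ≤ #(s ∆ c) := by
  simp [layer]

theorem distCount_empty (𝒞 : Finset (Finset α)) (k : ℕ) : distCount 𝒞 ∅ k = #(𝒞 # k) := by
  simp only [distCount, ← Finset.bot_eq_empty, bot_symmDiff]
  rfl

theorem HasMinDist.sum_choose_card_inter_le (h : HasMinDist 𝒞 δ) {r t : ℕ}
    (hr : 2 * r < δ + 2 * t) (s u : Finset α) :
    ∑ c ∈ 𝒞 with #(s ∆ c) = r, (#((s ∆ c) ∩ u)).choose t ≤ (#u).choose t := by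
  refine sum_choose_card_le (fun _ _ => Finset.inter_subset_right) fun c hc d hd hcd => ?_
  rw [Finset.mem_filter] at hc hd
  have hdist := h c hc.1 d hd.1 hcd
  have hadd := card_symmDiff_add (s ∆ c) (s ∆ d)
  have hle : #((s ∆ c) ∩ u ∩ ((s ∆ d) ∩ u)) ≤ #((s ∆ c) ∩ (s ∆ d)) :=
    Finset.card_le_card
      (Finset.inter_subset_inter Finset.inter_subset_left Finset.inter_subset_left)
  rw [card_symmDiff_symmDiff_left] at hadd
  lia

theorem HasMinDist.distCount_mul_choose_le [Fintype α] (h : HasMinDist 𝒞 δ) {r t : ℕ}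
    (hr : 2 * r < δ + 2 * t) (s : Finset α) :
    distCount 𝒞 s r * r.choose t ≤ (Fintype.card α).choose t := by
  rw [← Finset.card_univ]
  refine le_of_eq_of_le ?_ (h.sum_choose_card_inter_le hr s Finset.univ)
  refine (Finset.sum_const_nat fun c hc => ?_).symm
  rw [Finset.inter_univ, (Finset.mem_filter.mp hc).2]

theorem HasMinDist.distCount_le_one (h : HasMinDist 𝒞 δ) {r : ℕ} (hr : 2 * r < δ)
    (s : Finset α) : distCount 𝒞 s r ≤ 1 := by
  simpa [distCount] using h.sum_choose_card_inter_le (t := 0) hr s ∅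

theorem HasMinDist.card_eq_zero_or_le_card (h : HasMinDist 𝒞 δ) (h0 : ∅ ∈ 𝒞) {c : Finset α}
    (hc : c ∈ 𝒞) : #c = 0 ∨ δ ≤ #c := by
  refine or_iff_not_imp_left.mpr fun hne => ?_
  simpa [← Finset.bot_eq_empty] using h c hc ∅ h0 (Finset.card_eq_zero.not.mp hne)

theorem HasMinDist.distCount_eq_degree (h : HasMinDist 𝒞 δ) (h0 : ∅ ∈ 𝒞) (hk : m + #s = k)
    (hkδ : k ≤ δ + 1) (hsm : #s ≠ m) : distCount 𝒞 s m = degree (𝒞 # k) s := by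
  unfold distCount degree Finset.slice
  rw [Finset.filter_filter]
  refine congrArg _ (Finset.filter_congr fun c hc => ?_)
  have hcard := h.card_eq_zero_or_le_card h0 hc
  have hadd := card_symmDiff_add s c
  have hles : #(s ∩ c) ≤ #s := Finset.card_le_card Finset.inter_subset_left
  have hlec : #(s ∩ c) ≤ #c := Finset.card_le_card Finset.inter_subset_right
  rw [subset_iff_card_le_card_inter]
  lia

theorem HasMinDist.distCount_card_self (h : HasMinDist 𝒞 δ) (h0 : ∅ ∈ 𝒞) (hs : s.Nonempty)
    (hsδ : 2 * #s ≤ δ + 1) :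
    distCount 𝒞 s #s = 1 + degree (𝒞 # (2 * #s)) s := by
  have hempty : #{c ∈ 𝒞 | c = ∅} = 1 := by
    rw [Finset.filter_eq', if_pos h0, Finset.card_singleton]
  unfold distCount degree Finset.slice
  rw [← hempty, Finset.filter_filter, ← Finset.card_union_of_disjoint, ← Finset.filter_or]
  · refine congrArg _ (Finset.filter_congr fun c hc => ?_)
    have hcard := h.card_eq_zero_or_le_card h0 hc
    have hadd := card_symmDiff_add s c
    have hles : #(s ∩ c) ≤ #s := Finset.card_le_card Finset.inter_subset_left
    have hlec : #(s ∩ c) ≤ #c := Finset.card_le_card Finset.inter_subset_right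
    rw [subset_iff_card_le_card_inter, ← Finset.card_eq_zero]
    lia
  · rw [Finset.disjoint_filter]
    rintro c - rfl ⟨-, hsub⟩
    exact hs.ne_empty (Finset.subset_empty.mp hsub)

theorem HasMinDist.distCount_eq_degree_add_meetCount (h : HasMinDist 𝒞 δ) (h0 : ∅ ∈ 𝒞)
    (hs : #s = j + 1) (hmj : m + j = δ) (hne : m ≠ j) :
    distCount 𝒞 s (m + 1) = degree (𝒞 # (δ + 2)) s + meetCount (𝒞 # δ) s j := by
  unfold distCount degree meetCount Finset.slice
  rw [Finset.filter_filter, Finset.filter_filter, ← Finset.card_union_of_disjoint,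
    ← Finset.filter_or]
  · refine congrArg _ (Finset.filter_congr fun c hc => ?_)
    have hcard := h.card_eq_zero_or_le_card h0 hc
    have hadd := card_symmDiff_add s c
    have hles : #(s ∩ c) ≤ #s := Finset.card_le_card Finset.inter_subset_left
    have hlec : #(s ∩ c) ≤ #c := Finset.card_le_card Finset.inter_subset_right
    rw [subset_iff_card_le_card_inter]
    lia
  · rw [Finset.disjoint_filter]
    lia

theorem HasMinDist.distCount_add_mul_degree (h : HasMinDist 𝒞 δ) (h0 : ∅ ∈ 𝒞)
    (hs : #s = j + 1) (hmj : m + j = δ) (hne : m ≠ j) :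
    distCount 𝒞 s (m + 1) + (j + 1) * degree (𝒞 # δ) s =
      degree (𝒞 # (δ + 2)) s + ∑ p ∈ s.powersetCard j, degree (𝒞 # δ) p := by
  rw [h.distCount_eq_degree_add_meetCount h0 hs hmj hne,
    sum_degree_powersetCard_eq_meetCount_add hs, add_assoc]

-- The blocks counted on the left lie at distance `m + 1` from `s`, and their traces off `s` have
-- `m + 1` or `m` points.
theorem HasMinDist.degree_mul_choose_add_meetCount_mul_choose_le [Fintype α] {t : ℕ}
    (h : HasMinDist 𝒞 δ) (hs : #s = j + 1) (hmj : m + j = δ) (ht : 2 * (m + 1) < δ + 2 * t) :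
    degree (𝒞 # (δ + 2)) s * (m + 1).choose t + meetCount (𝒞 # δ) s j * m.choose t ≤
      (#sᶜ).choose t := by
  refine le_trans ?_ (h.sum_choose_card_inter_le ht s sᶜ)
  unfold degree meetCount Finset.slice
  rw [Finset.filter_filter, Finset.filter_filter,
    ← Finset.sum_const_nat (f := fun c => (#((s ∆ c) ∩ sᶜ)).choose t) (m := (m + 1).choose t),
    ← Finset.sum_const_nat (f := fun c => (#((s ∆ c) ∩ sᶜ)).choose t) (m := m.choose t),
    ← Finset.sum_union]
  · refine Finset.sum_le_sum_of_subset fun c hc => ?_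
    simp only [Finset.mem_union, Finset.mem_filter, subset_iff_card_le_card_inter] at hc ⊢
    have hadd := card_symmDiff_add s c
    have hle : #(s ∩ c) ≤ #s := Finset.card_le_card Finset.inter_subset_left
    lia
  · rw [Finset.disjoint_filter]
    lia
  · intro c hc
    have := card_symmDiff_inter_compl_add s c
    rw [Finset.mem_filter] at hc
    congr 1
    lia
  · intro c hc
    have := card_symmDiff_inter_compl_add s c
    have hle : #(s ∩ c) ≤ #s := Finset.card_le_card Finset.inter_subset_left
    rw [Finset.mem_filter, subset_iff_card_le_card_inter] at hc
    congr 1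
    lia

end Code

section Translate

variable {α : Type*} [DecidableEq α] {𝒞 : Finset (Finset α)} {c s : Finset α} {δ k t : ℕ}

/-- The translate of a code by the word `c`, used to move a codeword `c` to the zero word. -/
def translate (𝒞 : Finset (Finset α)) (c : Finset α) : Finset (Finset α) := 𝒞.image (· ∆ c)

theorem empty_mem_translate (hc : c ∈ 𝒞) : ∅ ∈ translate 𝒞 c :=
  Finset.mem_image.mpr ⟨c, hc, symmDiff_self c⟩

theorem symmDiff_symmDiff_translate (s c d : Finset α) : s ∆ (d ∆ c) = (s ∆ c) ∆ d := by
  rw [symmDiff_comm d, symmDiff_assoc]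

theorem HasMinDist.translate (h : HasMinDist 𝒞 δ) (c : Finset α) :
    HasMinDist (translate 𝒞 c) δ := by
  simp only [HasMinDist, BinaryCode.translate, Finset.forall_mem_image]
  intro a ha b hb hab
  rw [symmDiff_comm a, symmDiff_comm b, card_symmDiff_symmDiff_left]
  exact h a ha b hb fun heq => hab (heq ▸ rfl)

theorem distCount_translate (𝒞 : Finset (Finset α)) (c s : Finset α) (k : ℕ) :
    distCount (translate 𝒞 c) s k = distCount 𝒞 (s ∆ c) k := by
  unfold distCount translate
  rw [Finset.filter_image, Finset.card_image_of_injective _ (symmDiff_left_injective c)]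
  simp only [symmDiff_symmDiff_translate]

variable [Fintype α]

theorem mem_layer_translate : s ∈ layer (translate 𝒞 c) t ↔ s ∆ c ∈ layer 𝒞 t := by
  simp only [mem_layer, translate, Finset.exists_mem_image, Finset.forall_mem_image,
    symmDiff_symmDiff_translate]

theorem HasOuterDistribution.translate {B : ℕ → ℕ → ℕ} (hB : HasOuterDistribution 𝒞 B)
    (c : Finset α) : HasOuterDistribution (translate 𝒞 c) B := fun t s hs k =>
  (distCount_translate 𝒞 c s k).trans (hB t _ (mem_layer_translate.mp hs) k)

theorem card_layer_translate_slice (𝒞 : Finset (Finset α)) (c : Finset α) (t : ℕ) :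
    #((layer (translate 𝒞 c) t) # t) = #{s ∈ layer 𝒞 t | #(s ∆ c) = t} := by
  refine Finset.card_nbij' (· ∆ c) (· ∆ c) ?_ ?_ ?_ ?_ <;> intro s <;>
    simp [Finset.mem_slice, mem_layer_translate]

theorem card_layer_mul {m v : ℕ} (hm : ∀ s ∈ layer 𝒞 t, distCount 𝒞 s t = m)
    (hv : ∀ c ∈ 𝒞, #((layer (translate 𝒞 c) t) # t) = v) : #(layer 𝒞 t) * m = #𝒞 * v :=
  Finset.card_mul_eq_card_mul (fun s c => #(s ∆ c) = t) hm fun c hc =>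
    (card_layer_translate_slice 𝒞 c t).symm.trans (hv c hc)

end Translate

section Layers

variable {α : Type*} [DecidableEq α] [Fintype α] {𝒞 : Finset (Finset α)} {s : Finset α}
  {δ e ρ t : ℕ}

theorem slice_eq_filter_powersetCard_univ (𝒜 : Finset (Finset α)) (k : ℕ) :
    𝒜 # k = {s ∈ (Finset.univ : Finset α).powersetCard k | s ∈ 𝒜} := by
  ext s
  simp [Finset.mem_slice, and_comm]

theorem pairwise_disjoint_layer (𝒞 : Finset (Finset α)) :
    Pairwise (Function.onFun Disjoint (layer 𝒞)) := by
  refine fun t t' hne => Finset.disjoint_left.mpr fun s hs hs' => hne ?_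
  obtain ⟨⟨c, hc, rfl⟩, hmin⟩ := mem_layer.mp hs
  obtain ⟨⟨c', hc', rfl⟩, hmin'⟩ := mem_layer.mp hs'
  exact le_antisymm (hmin c' hc') (hmin' c hc)

theorem sum_card_layer (hcov : ∀ s, ∃ c ∈ 𝒞, #(s ∆ c) ≤ ρ) :
    ∑ t ∈ Finset.range (ρ + 1), #(layer 𝒞 t) = 2 ^ Fintype.card α := by
  rw [← Finset.card_biUnion fun t _ t' _ hne => pairwise_disjoint_layer 𝒞 hne,
    ← Fintype.card_finset, ← Finset.card_univ]
  congr 1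
  refine Finset.eq_univ_iff_forall.mpr fun s => Finset.mem_biUnion.mpr ?_
  obtain ⟨c, hc, hcρ⟩ := hcov s
  obtain ⟨d, hd, hmin⟩ := Finset.exists_min_image 𝒞 (fun d => #(s ∆ d)) ⟨c, hc⟩
  exact ⟨#(s ∆ d), Finset.mem_range_succ_iff.mpr ((hmin c hc).trans hcρ),
    mem_layer.mpr ⟨⟨d, hd, rfl⟩, hmin⟩⟩

theorem HasMinDist.mem_layer_card (h : HasMinDist 𝒞 δ) (h0 : ∅ ∈ 𝒞) (hs : 2 * #s ≤ δ) :
    s ∈ layer 𝒞 #s := by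
  refine mem_layer.mpr ⟨⟨∅, h0, congrArg _ (symmDiff_bot s)⟩, fun c hc => ?_⟩
  have hcard := h.card_eq_zero_or_le_card h0 hc
  have hadd := card_symmDiff_add s c
  have hles : #(s ∩ c) ≤ #s := Finset.card_le_card Finset.inter_subset_left
  have hlec : #(s ∩ c) ≤ #c := Finset.card_le_card Finset.inter_subset_right
  lia

theorem HasMinDist.card_layer (h : HasMinDist 𝒞 δ) (ht : 2 * t < δ) :
    #(layer 𝒞 t) = #𝒞 * (Fintype.card α).choose t := by
  rw [← mul_one #(layer 𝒞 t)]
  refine card_layer_mul (fun s hs => ?_) fun c hc => ?_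
  · obtain ⟨⟨c, hc, hct⟩, -⟩ := mem_layer.mp hs
    exact le_antisymm (h.distCount_le_one ht s)
      (Finset.card_pos.mpr ⟨c, Finset.mem_filter.mpr ⟨hc, hct⟩⟩)
  · rw [slice_eq_filter_powersetCard_univ, Finset.filter_true_of_mem,
      Finset.card_powersetCard, Finset.card_univ]
    intro s hs
    obtain ⟨-, rfl⟩ := Finset.mem_powersetCard.mp hs
    exact (h.translate c).mem_layer_card (empty_mem_translate hc) ht.le

theorem HasMinDist.mem_layer_or_mem_layer_succ (h : HasMinDist 𝒞 (2 * e + 1)) (h0 : ∅ ∈ 𝒞)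
    (hs : #s = e + 1) : s ∈ layer 𝒞 e ∧ degree (𝒞 # (2 * e + 1)) s = 1 ∨
      s ∈ layer 𝒞 (e + 1) ∧ degree (𝒞 # (2 * e + 1)) s = 0 := by
  have hle (c) (hc : c ∈ 𝒞) : e ≤ #(s ∆ c) := by
    have hcard := h.card_eq_zero_or_le_card h0 hc
    have hadd := card_symmDiff_add s c
    have hles : #(s ∩ c) ≤ #s := Finset.card_le_card Finset.inter_subset_left
    have hlec : #(s ∩ c) ≤ #c := Finset.card_le_card Finset.inter_subset_right
    lia
  rw [← h.distCount_eq_degree (m := e) h0 (by lia) (by lia) (by lia)]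
  have hone := h.distCount_le_one (r := e) (by lia) s
  obtain hzero | hpos := Nat.eq_zero_or_pos (distCount 𝒞 s e)
  · refine .inr ⟨mem_layer.mpr ⟨⟨∅, h0, (congrArg _ (symmDiff_bot s)).trans hs⟩, fun c hc => ?_⟩,
      hzero⟩
    exact (hle c hc).lt_of_ne' (Finset.filter_eq_empty_iff.mp (Finset.card_eq_zero.mp hzero) hc)
  · obtain ⟨c, hc⟩ := Finset.card_pos.mp hpos
    exact .inl ⟨mem_layer.mpr ⟨⟨c, Finset.mem_filter.mp hc⟩, hle⟩, le_antisymm hone hpos⟩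

theorem HasMinDist.sum_powersetCard_succ (h : HasMinDist 𝒞 (2 * e + 1)) (h0 : ∅ ∈ 𝒞)
    (f : Finset α → ℕ) : ∑ s ∈ Finset.univ.powersetCard (e + 1), f s =
      ∑ s ∈ (layer 𝒞 e) # (e + 1), f s + ∑ s ∈ (layer 𝒞 (e + 1)) # (e + 1), f s := by
  rw [← Finset.sum_union ((pairwise_disjoint_layer 𝒞 (by lia)).mono
    Finset.slice_subset Finset.slice_subset)]
  refine Finset.sum_congr (Finset.ext fun s => ?_) fun _ _ => rfl
  have := h.mem_layer_or_mem_layer_succ (s := s) h0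
  simp only [Finset.mem_powersetCard, Finset.mem_union, Finset.mem_slice]
  grind [Finset.subset_univ]

theorem HasMinDist.card_mul_choose_eq_add (h : HasMinDist 𝒞 (2 * e + 1)) (h0 : ∅ ∈ 𝒞)
    {ℬ : Finset (Finset α)} {k p q : ℕ} (hℬ : (ℬ : Set (Finset α)).Sized k)
    (hp : ∀ s ∈ layer 𝒞 e, #s = e + 1 → degree ℬ s = p)
    (hq : ∀ s ∈ layer 𝒞 (e + 1), #s = e + 1 → degree ℬ s = q) :
    #ℬ * k.choose (e + 1) =
      #((layer 𝒞 e) # (e + 1)) * p + #((layer 𝒞 (e + 1)) # (e + 1)) * q := by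
  rw [← sum_degree_powersetCard_univ hℬ, h.sum_powersetCard_succ h0]
  congr 1 <;> refine Finset.sum_const_nat fun s hs => ?_ <;> rw [Finset.mem_slice] at hs
  · exact hp s hs.1 hs.2
  · exact hq s hs.1 hs.2

theorem HasMinDist.degree_eq_one (h : HasMinDist 𝒞 (2 * e + 1)) (h0 : ∅ ∈ 𝒞)
    (hs : #s = e + 1) (hlayer : s ∈ layer 𝒞 e) : degree (𝒞 # (2 * e + 1)) s = 1 :=
  (h.mem_layer_or_mem_layer_succ h0 hs).elim And.right fun hsucc =>
    (Finset.disjoint_left.mp (pairwise_disjoint_layer 𝒞 (by lia)) hlayer hsucc.1).elim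

theorem HasMinDist.degree_eq_zero (h : HasMinDist 𝒞 (2 * e + 1)) (h0 : ∅ ∈ 𝒞)
    (hs : #s = e + 1) (hlayer : s ∈ layer 𝒞 (e + 1)) : degree (𝒞 # (2 * e + 1)) s = 0 :=
  (h.mem_layer_or_mem_layer_succ h0 hs).symm.elim And.right fun hself =>
    (Finset.disjoint_left.mp (pairwise_disjoint_layer 𝒞 (by lia)) hself.1 hlayer).elim

theorem HasMinDist.card_layer_slice_succ (h : HasMinDist 𝒞 (2 * e + 1)) (h0 : ∅ ∈ 𝒞) :
    #((layer 𝒞 e) # (e + 1)) = #(𝒞 # (2 * e + 1)) * (2 * e + 1).choose (e + 1) := by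
  simpa using (h.card_mul_choose_eq_add h0 Finset.sized_slice
    (fun s hs hcard => h.degree_eq_one h0 hcard hs)
    fun s hs hcard => h.degree_eq_zero h0 hcard hs).symm

theorem HasMinDist.card_layer_slice_succ_add (h : HasMinDist 𝒞 (2 * e + 1)) (h0 : ∅ ∈ 𝒞) :
    #((layer 𝒞 e) # (e + 1)) + #((layer 𝒞 (e + 1)) # (e + 1)) =
      (Fintype.card α).choose (e + 1) := by
  simpa using (h.sum_powersetCard_succ h0 fun _ => 1).symm

-- If the words of `𝒞` at distance `e + 1` from `s` have differences from `s` that partition the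
-- point set, then flipping any coordinate of `s` moves it towards one of them.
theorem HasMinDist.exists_card_symmDiff_le_of_distCount (h : HasMinDist 𝒞 (2 * e + 1))
    (hpart : ∀ s ∈ layer 𝒞 (e + 1), distCount 𝒞 s (e + 1) * (e + 1) = Fintype.card α)
    (hs : ∃ c ∈ 𝒞, #(s ∆ c) ≤ e + 1) (i : α) : ∃ c ∈ 𝒞, #((s ∆ {i}) ∆ c) ≤ e + 1 := by
  obtain ⟨c, hc, hsc⟩ := hs
  by_contra! hfar
  have hstep (d : Finset α) : #((s ∆ {i}) ∆ d) + 2 * #((s ∆ d) ∩ {i}) = #(s ∆ d) + 1 := by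
    rw [symmDiff_right_comm, card_symmDiff_add, Finset.card_singleton]
  have hnear (d) (hd : d ∈ 𝒞) : e + 1 ≤ #(s ∆ d) := by
    have := hfar d hd
    have := hstep d
    lia
  have hlayer : s ∈ layer 𝒞 (e + 1) := mem_layer.mpr ⟨⟨c, hc, le_antisymm hsc (hnear c hc)⟩, hnear⟩
  have havoid (d) (hd : d ∈ 𝒞) (hsd : #(s ∆ d) = e + 1) : (s ∆ d) ∩ {i}ᶜ = s ∆ d := by
    have := hfar d hd
    have := hstep d
    rw [Finset.inter_eq_left, Finset.subset_compl_iff_disjoint_right,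
      Finset.disjoint_iff_inter_eq_empty, ← Finset.card_eq_zero]
    lia
  have hpack := h.sum_choose_card_inter_le (r := e + 1) (t := 1) (by lia) s {i}ᶜ
  rw [Finset.sum_const_nat (m := e + 1) fun d hd => by
    rw [Finset.mem_filter] at hd
    rw [havoid d hd.1 hd.2, hd.2, Nat.choose_one_right]] at hpack
  have hcompl := Finset.card_compl_lt_iff_nonempty {i} |>.mpr (Finset.singleton_nonempty i)
  rw [Nat.choose_one_right] at hpack
  exact absurd (hpart s hlayer) (hpack.trans_lt hcompl).ne

theorem HasMinDist.exists_card_symmDiff_le (h : HasMinDist 𝒞 (2 * e + 1)) (hne : 𝒞.Nonempty)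
    (hpart : ∀ s ∈ layer 𝒞 (e + 1), distCount 𝒞 s (e + 1) * (e + 1) = Fintype.card α)
    (s : Finset α) : ∃ c ∈ 𝒞, #(s ∆ c) ≤ e + 1 := by
  obtain ⟨c, hc⟩ := hne
  suffices hflip : ∀ u : Finset α, ∃ d ∈ 𝒞, #((c ∆ u) ∆ d) ≤ e + 1 by
    simpa using hflip (c ∆ s)
  intro u
  induction u using Finset.induction_on with
  | empty => exact ⟨c, hc, by simp⟩
  | insert i u hi ih =>
    have hinsert : insert i u = u ∆ {i} := by
      rw [(Finset.disjoint_singleton_right.mpr hi).symmDiff_eq_sup, Finset.insert_eq,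
        Finset.union_comm, Finset.sup_eq_union]
    rw [hinsert, ← symmDiff_assoc]
    exact h.exists_card_symmDiff_le_of_distCount hpart ih i

end Layers

section OuterDistribution

variable {α : Type*} [DecidableEq α] [Fintype α] {𝒞 : Finset (Finset α)} {B : ℕ → ℕ → ℕ}
  {s : Finset α} {δ e j k m t : ℕ}

theorem HasOuterDistribution.card_slice (hB : HasOuterDistribution 𝒞 B) (h0 : ∅ ∈ 𝒞) (k : ℕ) :
    #(𝒞 # k) = B 0 k :=
  (distCount_empty 𝒞 k).symm.trans <|
    hB 0 ∅ (mem_layer.mpr ⟨⟨∅, h0, by simp⟩, fun _ _ => zero_le⟩) k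

theorem HasMinDist.degree_eq (h : HasMinDist 𝒞 δ) (hB : HasOuterDistribution 𝒞 B) (h0 : ∅ ∈ 𝒞)
    (hj : 2 * j ≤ δ) (hk : m + j = k) (hkδ : k ≤ δ + 1) (hne : j ≠ m) (hs : #s = j) :
    degree (𝒞 # k) s = B j m := by
  subst hs
  rw [← h.distCount_eq_degree h0 hk hkδ hne, hB _ s (h.mem_layer_card h0 hj)]

theorem HasMinDist.choose_mul_eq (h : HasMinDist 𝒞 δ) (hB : HasOuterDistribution 𝒞 B)
    (h0 : ∅ ∈ 𝒞) (hj : 2 * j ≤ δ) (hk : m + j = k) (hkδ : k ≤ δ + 1) (hne : j ≠ m) :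
    (Fintype.card α).choose j * B j m = B 0 k * k.choose j := by
  rw [← hB.card_slice h0]
  exact choose_mul_eq_of_degree_eq Finset.sized_slice fun _ =>
    h.degree_eq hB h0 hj hk hkδ hne

theorem HasMinDist.card_dvd_mul (h : HasMinDist 𝒞 δ) (hB : HasOuterDistribution 𝒞 B)
    (h0 : ∅ ∈ 𝒞) (hδ : 3 ≤ δ) : Fintype.card α ∣ B 0 (δ + 2) * (δ + 2) := by
  have hdeg (s : Finset α) (hs : #s = 1) :
      degree (𝒞 # (δ + 2)) s = B 1 (δ + 1) + B 1 (δ - 1) - B 0 δ := by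
    have hpoint := h.degree_eq hB h0 (m := δ - 1) (by lia) (by lia) δ.le_succ (by lia) hs
    have hsum := h.distCount_add_mul_degree h0 (m := δ) hs rfl (by lia)
    have hmem : s ∈ layer 𝒞 1 := hs ▸ h.mem_layer_card h0 (by lia)
    rw [hB 1 s hmem, hpoint, Finset.powersetCard_zero, Finset.sum_singleton,
      degree_empty, hB.card_slice h0] at hsum
    lia
  have hcount := choose_mul_eq_of_degree_eq Finset.sized_slice hdeg
  rw [Nat.choose_one_right, Nat.choose_one_right, hB.card_slice h0] at hcount
  exact Dvd.intro _ hcount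

theorem HasMinDist.one_add_degree_eq (h : HasMinDist 𝒞 (2 * e + 1))
    (hB : HasOuterDistribution 𝒞 B) (h0 : ∅ ∈ 𝒞) (hlayer : s ∈ layer 𝒞 t) (hs : #s = e + 1) :
    1 + degree (𝒞 # (2 * (e + 1))) s = B t (e + 1) := by
  rw [← hB t s hlayer, ← hs, h.distCount_card_self h0 (Finset.card_pos.mp (by lia)) (by lia)]

theorem HasMinDist.choose_add_mul_choose_eq (h : HasMinDist 𝒞 (2 * e + 1))
    (hB : HasOuterDistribution 𝒞 B) (h0 : ∅ ∈ 𝒞) :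
    (Fintype.card α).choose (e + 1) + B 0 (2 * (e + 1)) * (2 * (e + 1)).choose (e + 1) =
      #((layer 𝒞 e) # (e + 1)) * B e (e + 1) +
        #((layer 𝒞 (e + 1)) # (e + 1)) * B (e + 1) (e + 1) := by
  have hlayer (t : ℕ) : ∑ s ∈ (layer 𝒞 t) # (e + 1), (1 + degree (𝒞 # (2 * (e + 1))) s) =
      #((layer 𝒞 t) # (e + 1)) * B t (e + 1) :=
    Finset.sum_const_nat fun s hs =>
      h.one_add_degree_eq hB h0 (Finset.mem_slice.mp hs).1 (Finset.mem_slice.mp hs).2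
  rw [← hlayer, ← hlayer, ← h.sum_powersetCard_succ h0, Finset.sum_add_distrib,
    sum_degree_powersetCard_univ Finset.sized_slice, hB.card_slice h0]
  simp

theorem HasMinDist.sum_degree_powersetCard_eq (h : HasMinDist 𝒞 (2 * e + 1))
    (hB : HasOuterDistribution 𝒞 B) (h0 : ∅ ∈ 𝒞) (hs : #s = e + 1) :
    ∑ p ∈ s.powersetCard e, degree (𝒞 # (2 * e + 1)) p = (e + 1) * B e (e + 1) := by
  rw [Finset.sum_const_nat fun p hp => h.degree_eq hB h0 (m := e + 1) (by lia) (by lia) (by lia)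
    (by lia) (Finset.mem_powersetCard.mp hp).2, Finset.card_powersetCard, hs,
    Nat.choose_succ_self_right]

theorem HasMinDist.add_mul_degree_eq (h : HasMinDist 𝒞 (2 * e + 1))
    (hB : HasOuterDistribution 𝒞 B) (h0 : ∅ ∈ 𝒞) (hlayer : s ∈ layer 𝒞 t) (hs : #s = e + 1) :
    B t (e + 2) + (e + 1) * degree (𝒞 # (2 * e + 1)) s =
      degree (𝒞 # (2 * e + 3)) s + (e + 1) * B e (e + 1) := by
  rw [← hB t s hlayer, ← h.sum_degree_powersetCard_eq hB h0 hs]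
  exact h.distCount_add_mul_degree h0 hs (by lia) (by lia)

end OuterDistribution

section LengthFifteen

variable {α : Type*} [DecidableEq α] [Fintype α] {𝒞 : Finset (Finset α)} {B : ℕ → ℕ → ℕ}
  {s : Finset α} {t : ℕ}

theorem HasMinDist.outerDistribution_three_le (h : HasMinDist 𝒞 5)
    (hB : HasOuterDistribution 𝒞 B) (hn : Fintype.card α = 15) (ht : (layer 𝒞 t).Nonempty) :
    B t 3 ≤ 5 := by
  obtain ⟨s, hs⟩ := ht
  have hpack := h.distCount_mul_choose_le (r := 3) (t := 1) (by lia) s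
  rw [hB t s hs, hn, Nat.choose_one_right, Nat.choose_one_right] at hpack
  lia

theorem HasMinDist.mul_outerDistribution_two_three (h : HasMinDist 𝒞 5)
    (hB : HasOuterDistribution 𝒞 B) (h0 : ∅ ∈ 𝒞) (hn : Fintype.card α = 15) :
    21 * B 2 3 = 2 * B 0 5 := by
  have hcount := h.choose_mul_eq hB h0 (j := 2) (m := 3) (by lia) rfl (by lia) (by lia)
  norm_num [hn, Nat.choose] at hcount
  lia

theorem HasMinDist.mul_outerDistribution_two_four (h : HasMinDist 𝒞 5)
    (hB : HasOuterDistribution 𝒞 B) (h0 : ∅ ∈ 𝒞) (hn : Fintype.card α = 15) :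
    7 * B 2 4 = B 0 6 := by
  have hcount := h.choose_mul_eq hB h0 (j := 2) (m := 4) (by lia) rfl (by lia) (by lia)
  norm_num [hn, Nat.choose] at hcount
  lia

theorem HasMinDist.card_layer_two_slice_three (h : HasMinDist 𝒞 5)
    (hB : HasOuterDistribution 𝒞 B) (h0 : ∅ ∈ 𝒞) : #((layer 𝒞 2) # 3) = 10 * B 0 5 := by
  rw [← hB.card_slice h0, mul_comm]
  exact h.card_layer_slice_succ (e := 2) h0

theorem HasMinDist.add_card_layer_three_slice_three (h : HasMinDist 𝒞 5)
    (hB : HasOuterDistribution 𝒞 B) (h0 : ∅ ∈ 𝒞) (hn : Fintype.card α = 15) :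
    10 * B 0 5 + #((layer 𝒞 3) # 3) = 455 := by
  rw [← h.card_layer_two_slice_three hB h0]
  simpa [hn, Nat.choose] using h.card_layer_slice_succ_add (e := 2) h0

theorem HasMinDist.add_mul_outerDistribution_zero_six (h : HasMinDist 𝒞 5)
    (hB : HasOuterDistribution 𝒞 B) (h0 : ∅ ∈ 𝒞) (hn : Fintype.card α = 15) :
    455 + 20 * B 0 6 = 10 * B 0 5 * B 2 3 + #((layer 𝒞 3) # 3) * B 3 3 := by
  have hcount := h.choose_add_mul_choose_eq (e := 2) hB h0
  norm_num [hn, Nat.choose, h.card_layer_two_slice_three hB h0] at hcount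
  lia

theorem HasMinDist.outerDistribution_zero_five_eq_or (h : HasMinDist 𝒞 5)
    (hB : HasOuterDistribution 𝒞 B) (h0 : ∅ ∈ 𝒞) (hn : Fintype.card α = 15) (h5 : B 0 5 ≠ 0) :
    B 0 5 = 21 ∨ B 0 5 = 42 := by
  obtain ⟨s, -, hs⟩ := Finset.exists_subset_card_eq (s := (Finset.univ : Finset α)) (n := 2)
    (by rw [Finset.card_univ]; lia)
  have hle : B 2 3 ≤ 5 :=
    h.outerDistribution_three_le hB hn ⟨s, hs ▸ h.mem_layer_card h0 (by lia)⟩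
  have hpair := h.mul_outerDistribution_two_three hB h0 hn
  lia

theorem HasMinDist.degree_slice_seven_of_mem_layer_two (h : HasMinDist 𝒞 5)
    (hB : HasOuterDistribution 𝒞 B) (h0 : ∅ ∈ 𝒞) (hlayer : s ∈ layer 𝒞 2) (hs : #s = 3) :
    degree (𝒞 # 7) s + 3 * B 2 3 = B 2 4 + 3 := by
  have hseven := h.add_mul_degree_eq (e := 2) hB h0 hlayer hs
  rw [h.degree_eq_one h0 hs hlayer] at hseven
  exact hseven.symm

theorem HasMinDist.degree_slice_seven_of_mem_layer_three (h : HasMinDist 𝒞 5)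
    (hB : HasOuterDistribution 𝒞 B) (h0 : ∅ ∈ 𝒞) (hlayer : s ∈ layer 𝒞 3) (hs : #s = 3) :
    degree (𝒞 # 7) s + 3 * B 2 3 = B 3 4 := by
  have hseven := h.add_mul_degree_eq (e := 2) hB h0 hlayer hs
  rw [h.degree_eq_zero h0 hs hlayer] at hseven
  exact hseven.symm

theorem HasMinDist.two_mul_degree_slice_seven_le (h : HasMinDist 𝒞 5)
    (hB : HasOuterDistribution 𝒞 B) (h0 : ∅ ∈ 𝒞) (hn : Fintype.card α = 15)
    (hlayer : s ∈ layer 𝒞 3) (hs : #s = 3) : 2 * degree (𝒞 # 7) s + 3 * B 2 3 ≤ 22 := by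
  have hpack : degree (𝒞 # 7) s * 6 + meetCount (𝒞 # 5) s 2 * 3 ≤ 66 := by
    simpa [Finset.card_compl, hn, hs, Nat.choose] using
      h.degree_mul_choose_add_meetCount_mul_choose_le (j := 2) (m := 3) (t := 2) hs rfl (by lia)
  have hmeet : 3 * B 2 3 = meetCount (𝒞 # 5) s 2 + 3 * degree (𝒞 # 5) s :=
    (h.sum_degree_powersetCard_eq (e := 2) hB h0 hs).symm.trans
      (sum_degree_powersetCard_eq_meetCount_add hs)
  have hzero : degree (𝒞 # 5) s = 0 := h.degree_eq_zero (e := 2) h0 hs hlayer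
  lia

theorem HasMinDist.outerDistribution_two_four_eq_five (h : HasMinDist 𝒞 5)
    (hB : HasOuterDistribution 𝒞 B) (h0 : ∅ ∈ 𝒞) (hn : Fintype.card α = 15)
    (h21 : B 0 5 = 21) : B 2 4 = 5 := by
  have hpair5 := h.mul_outerDistribution_two_three hB h0 hn
  have hpair6 := h.mul_outerDistribution_two_four hB h0 hn
  have hcount := h.add_mul_outerDistribution_zero_six hB h0 hn
  have hunc : #((layer 𝒞 3) # 3) = 245 := by
    have := h.add_card_layer_three_slice_three hB h0 hn
    lia
  have hle : B 3 3 ≤ 5 := h.outerDistribution_three_le hB hn <|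
    (Finset.card_ne_zero.mp (hunc.trans_ne (by lia))).mono Finset.slice_subset
  rw [h21, hunc, show B 2 3 = 2 by lia] at hcount
  lia

theorem HasMinDist.outerDistribution_zero_five_ne (h : HasMinDist 𝒞 5)
    (hB : HasOuterDistribution 𝒞 B) (h0 : ∅ ∈ 𝒞) (hn : Fintype.card α = 15) : B 0 5 ≠ 21 := by
  intro h21
  have hpair5 : B 2 3 = 2 := by
    have := h.mul_outerDistribution_two_three hB h0 hn
    lia
  have hpair6 := h.outerDistribution_two_four_eq_five hB h0 hn h21
  have hunc : #((layer 𝒞 3) # 3) = 245 := by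
    have := h.add_card_layer_three_slice_three hB h0 hn
    lia
  obtain ⟨s, hs⟩ := Finset.card_ne_zero.mp (hunc.trans_ne (by lia))
  rw [Finset.mem_slice] at hs
  have hle := h.two_mul_degree_slice_seven_le hB h0 hn hs.1 hs.2
  have hs34 := h.degree_slice_seven_of_mem_layer_three hB h0 hs.1 hs.2
  have hcount : B 0 7 * 35 = 210 * 2 + 245 * degree (𝒞 # 7) s := by
    rw [show 210 = 10 * B 0 5 by lia, ← hunc, ← h.card_layer_two_slice_three hB h0,
      ← hB.card_slice h0]
    refine h.card_mul_choose_eq_add (e := 2) h0 Finset.sized_slice (fun u hu hcard => ?_)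
      fun u hu hcard => ?_
    · have := h.degree_slice_seven_of_mem_layer_two hB h0 hu hcard
      lia
    · have := h.degree_slice_seven_of_mem_layer_three hB h0 hu hcard
      lia
  have hdvd : 15 ∣ B 0 7 * 7 := hn ▸ h.card_dvd_mul hB h0 (by lia)
  lia

theorem HasMinDist.outerDistribution_zero_five_eq (h : HasMinDist 𝒞 5)
    (hB : HasOuterDistribution 𝒞 B) (h0 : ∅ ∈ 𝒞) (hn : Fintype.card α = 15) (h5 : B 0 5 ≠ 0) :
    B 0 5 = 42 :=
  (h.outerDistribution_zero_five_eq_or hB h0 hn h5).resolve_left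
    (h.outerDistribution_zero_five_ne hB h0 hn)

theorem HasMinDist.card_layer_three_slice_three_eq (h : HasMinDist 𝒞 5)
    (hB : HasOuterDistribution 𝒞 B) (h0 : ∅ ∈ 𝒞) (hn : Fintype.card α = 15) (h5 : B 0 5 ≠ 0) :
    #((layer 𝒞 3) # 3) = 35 := by
  have hunc := h.add_card_layer_three_slice_three hB h0 hn
  rw [h.outerDistribution_zero_five_eq hB h0 hn h5] at hunc
  lia

theorem HasMinDist.outerDistribution_three_three_eq (h : HasMinDist 𝒞 5)
    (hB : HasOuterDistribution 𝒞 B) (h0 : ∅ ∈ 𝒞) (hn : Fintype.card α = 15) (h5 : B 0 5 ≠ 0) :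
    B 3 3 = 5 := by
  have h42 := h.outerDistribution_zero_five_eq hB h0 hn h5
  have hunc := h.card_layer_three_slice_three_eq hB h0 hn h5
  have hle : B 3 3 ≤ 5 := h.outerDistribution_three_le hB hn <|
    (Finset.card_ne_zero.mp (hunc.trans_ne (by lia))).mono Finset.slice_subset
  have hpair5 : B 2 3 = 4 := by
    have := h.mul_outerDistribution_two_three hB h0 hn
    lia
  have hpair6 := h.mul_outerDistribution_two_four hB h0 hn
  have hpoint6 := h.choose_mul_eq hB h0 (j := 1) (m := 5) (by lia) rfl (by lia) (by lia)
  have hsix := h.add_mul_outerDistribution_zero_six hB h0 hn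
  rw [h42, hunc, hpair5] at hsix
  rw [hn, Nat.choose_one_right, Nat.choose_one_right] at hpoint6
  lia

theorem HasMinDist.card_eq_256 (h : HasMinDist 𝒞 5) (hB : HasOuterDistribution 𝒞 B)
    (hn : Fintype.card α = 15) (hex : ∃ c ∈ 𝒞, ∃ d ∈ 𝒞, #(c ∆ d) = 5) : #𝒞 = 256 := by
  obtain ⟨c, hc, d, hd, hcd⟩ := hex
  have h5 : B 0 5 ≠ 0 := by
    rw [← hB 0 c (mem_layer.mpr ⟨⟨c, hc, by simp⟩, fun _ _ => zero_le⟩)]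
    exact Finset.card_ne_zero_of_mem (Finset.mem_filter.mpr ⟨hd, hcd⟩)
  have h33 : B 3 3 = 5 := (h.translate c).outerDistribution_three_three_eq (hB.translate c)
    (empty_mem_translate hc) hn h5
  have hfive : ∀ s ∈ layer 𝒞 3, distCount 𝒞 s 3 = 5 := fun s hs => (hB 3 s hs 3).trans h33
  have hthree : #(layer 𝒞 3) * 5 = #𝒞 * 35 := card_layer_mul hfive fun b hb =>
    (h.translate b).card_layer_three_slice_three_eq (hB.translate b) (empty_mem_translate hb) hn h5
  have hcov := h.exists_card_symmDiff_le (e := 2) ⟨c, hc⟩ fun s hs => by rw [hfive s hs, hn]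
  have hsum := sum_card_layer hcov
  norm_num [Finset.sum_range_succ, h.card_layer (t := 0), h.card_layer (t := 1),
    h.card_layer (t := 2), hn, Nat.choose] at hsum
  lia

end LengthFifteen

section Encoding

variable {m δ t : ℕ} {C : Set (Fin m → ZMod 2)} {x : Fin m → ZMod 2}

/-- Identifies binary words with subsets of the coordinate set, so that Hamming distance becomes
the size of the symmetric difference. -/
def support : (Fin m → ZMod 2) ≃ Finset (Fin m) where
  toFun x := {i | x i = 1}
  invFun s i := if i ∈ s then 1 else 0
  left_inv x := funext fun i => by
    simp only [Finset.mem_filter_univ]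
    generalize x i = a
    decide +revert
  right_inv s := by simp

theorem card_symmDiff_support (x y : Fin m → ZMod 2) :
    #(support x ∆ support y) = hammingDist x y := by
  refine congrArg _ (Finset.ext fun i => ?_)
  simp only [support, Equiv.coe_fn_mk, Finset.mem_symmDiff, Finset.mem_filter_univ]
  generalize x i = a, y i = b
  decide +revert

/-- The binary code `C` as the set family of the supports of its codewords. -/
noncomputable def supportFamily (C : Set (Fin m → ZMod 2)) : Finset (Finset (Fin m)) :=
  C.toFinite.toFinset.image support

theorem card_supportFamily (C : Set (Fin m → ZMod 2)) : #(supportFamily C) = C.ncard := by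
  rw [supportFamily, Finset.card_image_of_injective _ support.injective,
    Set.ncard_eq_toFinset_card]

theorem forall_mem_supportFamily {p : Finset (Fin m) → Prop} :
    (∀ c ∈ supportFamily C, p c) ↔ ∀ x ∈ C, p (support x) := by
  simp only [supportFamily, Finset.forall_mem_image, Set.Finite.mem_toFinset]

theorem exists_mem_supportFamily {p : Finset (Fin m) → Prop} :
    (∃ c ∈ supportFamily C, p c) ↔ ∃ x ∈ C, p (support x) := by
  simp only [supportFamily, Finset.exists_mem_image, Set.Finite.mem_toFinset]

theorem distCount_support (C : Set (Fin m → ZMod 2)) (x : Fin m → ZMod 2) (k : ℕ) :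
    distCount (supportFamily C) (support x) k = {c ∈ C | hammingDist x c = k}.ncard := by
  rw [distCount, supportFamily, Finset.filter_image,
    Finset.card_image_of_injective _ support.injective, ← Set.ncard_coe_finset]
  congr 1
  ext c
  simp [card_symmDiff_support]

theorem distToCode_eq_of_mem_layer (hx : support x ∈ layer (supportFamily C) t) :
    distToCode C x = t := by
  simp only [mem_layer, exists_mem_supportFamily, forall_mem_supportFamily,
    card_symmDiff_support] at hx
  obtain ⟨⟨c, hc, hxc⟩, hle⟩ := hx
  refine le_antisymm (Nat.sInf_le ⟨c, hc, hxc⟩) (le_csInf ⟨t, c, hc, hxc⟩ ?_)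
  rintro _ ⟨d, hd, rfl⟩
  exact hle d hd

theorem exists_hasOuterDistribution (hC : IsCompletelyRegular C) :
    ∃ B, HasOuterDistribution (supportFamily C) B := by
  suffices hrow : ∀ t, ∃ b : ℕ → ℕ, ∀ s ∈ layer (supportFamily C) t, ∀ k,
      distCount (supportFamily C) s k = b k from Classical.skolem.mp hrow
  intro t
  obtain hempty | ⟨s, hs⟩ := (layer (supportFamily C) t).eq_empty_or_nonempty
  · exact ⟨0, by simp [hempty]⟩
  refine ⟨distCount (supportFamily C) s, fun u hu k => ?_⟩
  obtain ⟨x, rfl⟩ := support.surjective s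
  obtain ⟨y, rfl⟩ := support.surjective u
  rw [distCount_support, distCount_support]
  exact hC y x ((distToCode_eq_of_mem_layer hu).trans (distToCode_eq_of_mem_layer hs).symm) k

theorem hasMinDist_supportFamily (hC : IsMinDist C δ) : HasMinDist (supportFamily C) δ := by
  simp only [HasMinDist, forall_mem_supportFamily, card_symmDiff_support]
  exact fun x hx y hy hne => hC.1 x hx y hy (ne_of_apply_ne support hne)

theorem exists_card_symmDiff_eq (hC : IsMinDist C δ) :
    ∃ c ∈ supportFamily C, ∃ d ∈ supportFamily C, #(c ∆ d) = δ := by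
  simp only [exists_mem_supportFamily, card_symmDiff_support]
  obtain ⟨x, hx, y, hy, -, hxy⟩ := hC.2
  exact ⟨x, hx, y, hy, hxy⟩

end Encoding

end BinaryCode

/-- Every binary completely regular code of length 15 with minimum distance 5 has
exactly 256 codewords. -/
theorem stmt_5 (C : Set (Fin 15 → ZMod 2)) (hC : C.Nonempty)
    (hreg : IsCompletelyRegular C) (hd : IsMinDist C 5) :
    C.ncard = 256 := by
  obtain ⟨B, hB⟩ := BinaryCode.exists_hasOuterDistribution hreg
  rw [← BinaryCode.card_supportFamily]
  exact (BinaryCode.hasMinDist_supportFamily hd).card_eq_256 hB (Fintype.card_fin 15)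
    (BinaryCode.exists_card_symmDiff_eq hd)
end

section
/- Let C be a binary completely regular code of length m containing the zero vector, with minimum distance δ, and set t = ⌊δ/2⌋. Then for every k with δ ≤ k ≤ m such that C(k) ≠ ∅, the set C(k) of weight-k codewords forms a t-design: there exists a constant λ (depending only on k) such that every vector ν ∈ F_2^m of weight t is covered by exactly λ codewords of C(k), where ν is covered by β means supp(ν) ⊆ supp(β). -/
open Set

/-!
For `γ` in `𝔽₂^m` let `W_γ(X) = ∑_{c ∈ C} X^{d(γ, c)}`. Flipping a zero coordinate `i` of `γ`
multiplies the term of `c` by `X⁻¹` if `c_i = 1` and by `X` otherwise, so the difference between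
`X` and this factor is `X - X⁻¹` times the indicator of `c_i = 1`. Multiplying these differences
over the coordinates in a set `T`, expanding, and clearing denominators gives
`(X² - 1)^{|T|} ∑_{c covers T} X^{wt c} = ∑_{S ⊆ T} (-1)^{|S|} X^{2|T| - |S|} W_{1_S}(X)`.
If `|T| ≤ δ / 2`, every `1_S` with `S ⊆ T` is at distance `|S|` from `C`, so by complete regularity
the right-hand side depends only on `|T|`, and the power of `X² - 1` can be cancelled in `ℤ[X]`.
-/

open Polynomial
open scoped Finset

theorem prod_sub_ite_eq_ite_forall {ι R : Type*} [CommRing R] (T : Finset ι) (p : ι → Prop)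
    [DecidablePred p] (a b : R) :
    ∏ i ∈ T, (a - if p i then b else a) = if ∀ i ∈ T, p i then (a - b) ^ #T else 0 := by
  split_ifs with hT
  · exact Finset.prod_eq_pow_card fun i hi ↦ by rw [if_pos (hT i hi)]
  · push Not at hT
    obtain ⟨i, hi, hpi⟩ := hT
    exact Finset.prod_eq_zero hi (by rw [if_neg hpi, sub_self])

section DistanceEnumerator

variable {ι : Type*} [Fintype ι] {α : Type*} [Fintype α] [DecidableEq α]

open Classical in
/-- The distance enumerator `∑_{c ∈ C} X^{d(γ, c)}` of a code `C` as seen from `γ`; for `γ = 0` it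
is the weight enumerator of `C`. -/
noncomputable def distanceEnumerator (C : Set (ι → α)) (γ : ι → α) : ℤ[X] :=
  ∑ c with c ∈ C, X ^ hammingDist γ c

theorem coeff_distanceEnumerator (C : Set (ι → α)) (γ : ι → α) (d : ℕ) :
    (distanceEnumerator C γ).coeff d = {c ∈ C | hammingDist γ c = d}.ncard := by
  classical
  simp only [distanceEnumerator, finsetSum_coeff, coeff_X_pow, Finset.sum_boole,
    Finset.filter_filter, Set.ncard_eq_toFinset_card', Set.toFinset_ofPred, eq_comm]

end DistanceEnumerator

section BinaryCode

variable {ι : Type*} [Fintype ι] [DecidableEq ι]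

/-- The vector over `ZMod 2` with support `S`. -/
abbrev indicatorVector (S : Finset ι) : ι → ZMod 2 := S.piecewise 1 0

theorem hammingNorm_indicatorVector (S : Finset ι) : hammingNorm (indicatorVector S) = #S := by
  simp [hammingNorm, indicatorVector, Finset.piecewise]

theorem hammingDist_indicatorVector_add_card (S : Finset ι) (c : ι → ZMod 2) :
    hammingDist (indicatorVector S) c + #S = hammingNorm c + 2 * #{i ∈ S | c i = 0} := by
  have coordinatewise (i : ι) :
      (if indicatorVector S i ≠ c i then 1 else 0) + (if i ∈ S then 1 else 0) =
        (if c i ≠ 0 then 1 else 0) + 2 * (if i ∈ S ∧ c i = 0 then 1 else 0) := by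
    generalize c i = x
    by_cases hi : i ∈ S <;>
      simp only [indicatorVector, Finset.piecewise, hi, Pi.one_apply, Pi.zero_apply] <;>
      decide +revert
  have summed := Finset.sum_congr rfl fun i (_ : i ∈ Finset.univ) ↦ coordinatewise i
  simpa only [hammingDist, hammingNorm, Finset.sum_add_distrib, ← Finset.mul_sum, Finset.sum_boole,
    Nat.cast_id, ← Finset.filter_filter, Finset.filter_univ_mem] using summed

theorem sum_powerset_pow_hammingDist {R : Type*} [CommRing R] (x : R) (T : Finset ι)
    (c : ι → ZMod 2) :
    ∑ S ∈ T.powerset, (-1) ^ #S * x ^ (2 * #(T \ S) + #S) * x ^ hammingDist (indicatorVector S) c =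
      if ∀ i ∈ T, c i ≠ 0 then (x ^ 2 - 1) ^ #T * x ^ hammingNorm c else 0 := by
  calc
    _ = (∏ i ∈ T, (x ^ 2 - if c i ≠ 0 then 1 else x ^ 2)) * x ^ hammingNorm c := by
      rw [Finset.prod_sub, Finset.sum_mul]
      refine Finset.sum_congr rfl fun S _ ↦ ?_
      have exponent := hammingDist_indicatorVector_add_card S c
      rw [Finset.prod_const, Finset.prod_ite, Finset.prod_const_one, Finset.prod_const]
      simp only [not_ne_iff, mul_assoc, one_mul, ← pow_mul, ← pow_add]
      congr 2
      omega
    _ = _ := by simp only [prod_sub_ite_eq_ite_forall, ite_mul, zero_mul]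

theorem pow_mul_distanceEnumerator_covering (C : Set (ι → ZMod 2)) (T : Finset ι) :
    (X ^ 2 - 1) ^ #T * distanceEnumerator {c ∈ C | ∀ i ∈ T, c i ≠ 0} 0 =
      ∑ S ∈ T.powerset,
        (-1) ^ #S * X ^ (2 * #(T \ S) + #S) * distanceEnumerator C (indicatorVector S) := by
  classical
  simp only [distanceEnumerator, Finset.mul_sum]
  rw [Finset.sum_comm]
  simp only [sum_powerset_pow_hammingDist, hammingDist_zero_left, Set.mem_ofPred_eq,
    ← Finset.filter_filter, Finset.sum_filter]

theorem distanceEnumerator_covering_congr {C : Set (ι → ZMod 2)} {T T' : Finset ι} {W : ℕ → ℤ[X]}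
    (hW : ∀ S : Finset ι, #S ≤ #T → distanceEnumerator C (indicatorVector S) = W #S)
    (hT : #T = #T') :
    distanceEnumerator {c ∈ C | ∀ i ∈ T, c i ≠ 0} 0 =
      distanceEnumerator {c ∈ C | ∀ i ∈ T', c i ≠ 0} 0 := by
  have expansion (U : Finset ι) (hU : #U = #T) :
      (X ^ 2 - 1) ^ #T * distanceEnumerator {c ∈ C | ∀ i ∈ U, c i ≠ 0} 0 =
        ∑ j ∈ Finset.range (#T + 1),
          (#T).choose j • ((-1) ^ j * X ^ (2 * (#T - j) + j) * W j) := by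
    rw [← hU, pow_mul_distanceEnumerator_covering, ← Finset.sum_powerset_apply_card]
    refine Finset.sum_congr rfl fun S hS ↦ ?_
    have hSU := Finset.mem_powerset.1 hS
    rw [Finset.card_sdiff_of_subset hSU, hW S (hU ▸ Finset.card_le_card hSU)]
  have X_sq_sub_one_ne_zero : (X ^ 2 - 1 : ℤ[X]) ≠ 0 := X_pow_sub_C_ne_zero two_pos 1
  exact mul_left_cancel₀ (pow_ne_zero _ X_sq_sub_one_ne_zero)
    ((expansion T rfl).trans (expansion T' hT.symm).symm)

end BinaryCode

section CompletelyRegular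

variable {m : ℕ} {C : Set (Fin m → ZMod 2)}

theorem distToCode_eq_hammingNorm (h0 : 0 ∈ C) {γ : Fin m → ZMod 2}
    (hγ : ∀ c ∈ C, c ≠ 0 → 2 * hammingNorm γ ≤ hammingNorm c) :
    distToCode C γ = hammingNorm γ := by
  refine IsLeast.csInf_eq ⟨⟨0, h0, hammingDist_zero_right γ⟩, ?_⟩
  rintro _ ⟨c, hc, rfl⟩
  obtain rfl | hc0 := eq_or_ne c 0
  · exact (hammingDist_zero_right γ).ge
  · have triangle := hammingDist_triangle 0 γ c
    simp only [hammingDist_zero_left] at triangle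
    linarith [hγ c hc hc0]

theorem IsMinDist.le_hammingNorm {δ : ℕ} (hd : IsMinDist C δ) (h0 : 0 ∈ C) {c : Fin m → ZMod 2}
    (hc : c ∈ C) (hc0 : c ≠ 0) : δ ≤ hammingNorm c :=
  hammingDist_zero_right c ▸ hd.1 c hc 0 h0 hc0

theorem IsCompletelyRegular.exists_distanceEnumerator_eq (hreg : IsCompletelyRegular C) :
    ∃ W : ℕ → ℤ[X], ∀ γ, distanceEnumerator C γ = W (distToCode C γ) := by
  have factors : (distanceEnumerator C).FactorsThrough (distToCode C) := fun γ γ' h ↦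
    Polynomial.ext fun d ↦ by
      rw [coeff_distanceEnumerator, coeff_distanceEnumerator, hreg γ γ' h d]
  obtain ⟨W, hW⟩ := (Function.factorsThrough_iff _).1 factors
  exact ⟨W, congrFun hW⟩

theorem IsCompletelyRegular.ncard_covering_congr (hreg : IsCompletelyRegular C) (h0 : 0 ∈ C)
    {T T' : Finset (Fin m)} (hmin : ∀ c ∈ C, c ≠ 0 → 2 * #T ≤ hammingNorm c) (hT : #T = #T')
    (k : ℕ) :
    {c ∈ C | hammingNorm c = k ∧ ∀ i ∈ T, c i ≠ 0}.ncard =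
      {c ∈ C | hammingNorm c = k ∧ ∀ i ∈ T', c i ≠ 0}.ncard := by
  obtain ⟨W, hW⟩ := hreg.exists_distanceEnumerator_eq
  have enumerator_of_card_le (S : Finset (Fin m)) (hS : #S ≤ #T) :
      distanceEnumerator C (indicatorVector S) = W #S := by
    rw [hW, distToCode_eq_hammingNorm h0, hammingNorm_indicatorVector]
    intro c hc hc0
    rw [hammingNorm_indicatorVector]
    linarith [hmin c hc hc0]
  have coeff_eq := congrArg (coeff · k) (distanceEnumerator_covering_congr enumerator_of_card_le hT)
  simpa only [coeff_distanceEnumerator, hammingDist_zero_left, Set.mem_ofPred_eq, and_assoc,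
    and_comm (b := hammingNorm _ = k), and_left_comm (b := _ ∈ C), Nat.cast_inj] using coeff_eq

end CompletelyRegular

/-- For a binary completely regular code containing the zero vector with minimum
distance `δ`, the weight-`k` codewords form a `⌊δ/2⌋`-design for each nonempty weight
class with `δ ≤ k ≤ m`. -/
theorem stmt_8 {m δ : ℕ} (C : Set (Fin m → ZMod 2))
    (h0 : (0 : Fin m → ZMod 2) ∈ C)
    (hreg : IsCompletelyRegular C) (hd : IsMinDist C δ) :
    ∀ k : ℕ, δ ≤ k → k ≤ m → {c ∈ C | hammingNorm c = k}.Nonempty →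
      ∃ lam : ℕ, ∀ ν : Fin m → ZMod 2, hammingNorm ν = δ / 2 →
        {β ∈ C | hammingNorm β = k ∧ ∀ i : Fin m, ν i ≠ 0 → β i ≠ 0}.ncard = lam := by
  intro k hδk hkm _
  obtain ⟨T, -, hT⟩ : ∃ T ⊆ (Finset.univ : Finset (Fin m)), #T = δ / 2 :=
    Finset.exists_subset_card_eq (by rw [Finset.card_fin]; omega)
  refine ⟨{c ∈ C | hammingNorm c = k ∧ ∀ i ∈ T, c i ≠ 0}.ncard, fun ν hν ↦ ?_⟩
  have card_eq : #T = #{i | ν i ≠ 0} := hT.trans hν.symm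
  have hmin (c) (hc : c ∈ C) (hc0 : c ≠ 0) : 2 * #T ≤ hammingNorm c :=
    hT ▸ (Nat.mul_div_le δ 2).trans (hd.le_hammingNorm h0 hc hc0)
  simpa only [Finset.mem_filter_univ] using (hreg.ncard_covering_congr h0 hmin card_eq k).symm
end
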